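/- arXiv:1903.03747 — 6 statements merged into one kernel-verified Lean document; each statement's English description precedes it below -/
import Mathlib

section
/- For any admissible index (k_1, k_2, ..., k_r) of positive integers with k_r ≥ 2, the multiple T-value T(k_1, ..., k_r) equals the iterated integral I(1, 0,...,0, 1, 0,...,0, ..., 1, 0,...,0), where after the i-th entry 1 there are k_i − 1 entries 0, i.e. T(k_1,...,k_r) = ∫_{0<t_1<⋯<t_k<1} Ω_{ε_1}(t_1) ⋯ Ω_{ε_k}(t_k) with k = k_1 + ⋯ + k_r and (ε_1,...,ε_k) the 0-1 word just described. -/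
open MeasureTheory

/-- The multiple T-value `T(k₁, …, k_r)`:
`2^r` times the sum over `0 < m₁ < ⋯ < m_r` with `m_i ≡ i (mod 2)`
of `1 / (m₁^{k₁} ⋯ m_r^{k_r})`. -/
noncomputable def MTV (k : List ℕ) : ℝ :=
  2 ^ k.length *
    ∑' f : {f : Fin k.length → ℕ // StrictMono f ∧ ∀ i, f i % 2 = ((i : ℕ) + 1) % 2},
      ∏ i : Fin k.length, (1 : ℝ) / (f.1 i : ℝ) ^ k.get i

/-- The integrand forms: `Ω₁(t) = 2/(1−t²)` and `Ω₀(t) = 1/t` (times `dt`). -/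
noncomputable def omegaForm (e : ℕ) (t : ℝ) : ℝ := if e = 1 then 2 / (1 - t ^ 2) else 1 / t

/-- The iterated integral `I(ε₁, …, ε_k) = ∫_{0<t₁<⋯<t_k<1} Ω_{ε₁}(t₁) ⋯ Ω_{ε_k}(t_k)`. -/
noncomputable def itInt (eps : List ℕ) : ℝ :=
  ∫ t in {t : Fin eps.length → ℝ | StrictMono t ∧ ∀ i, t i ∈ Set.Ioo (0 : ℝ) 1},
    ∏ i : Fin eps.length, omegaForm (eps.get i) (t i)

/-! Both sides are computed in `ℝ≥0∞` by splitting off the largest variable, so that no convergence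
question arises. As a function of its upper limit `x`, the iterated integral is a power series.
Integrating a power series against `2 dt / (1 - t²) = 2 ∑ t^(2i) dt` replaces its `m`-th
coefficient by `2 / m` times the sum of the coefficients of index `j < m` with `m - j` odd;
integrating against `dt / t` divides the `m`-th coefficient by `m`. Starting from the constant
series `1`, a block `1, 0, …, 0` of length `kᵢ` thus contributes the summation over `mᵢ₋₁ < mᵢ`
with weight `2 / mᵢ ^ kᵢ`, and the alternation of parities from `m₀ = 0` is the condition `mᵢ ≡ i
(mod 2)`. The value at `x = 1` is `T(k₁, …, k_r)`. -/

open Set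
open scoped ENNReal

section ProductMeasure

variable {α : Type*} [MeasurableSpace α]

lemma lintegral_pi_eq_lintegral_lintegral_snoc (μ : Measure α) [SigmaFinite μ] {n : ℕ}
    {g : (Fin (n + 1) → α) → ℝ≥0∞} (hg : Measurable g) :
    ∫⁻ f, g f ∂Measure.pi (fun _ ↦ μ) =
      ∫⁻ a, ∫⁻ f, g (Fin.snoc f a) ∂Measure.pi (fun _ : Fin n ↦ μ) ∂μ := by
  have hmp := (measurePreserving_piFinSuccAbove (fun _ : Fin (n + 1) ↦ μ) (Fin.last n)).symm
  rw [← hmp.lintegral_comp hg, lintegral_prod (fun z ↦ g (_ : Fin (n + 1) → α))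
    (hg.comp hmp.measurable).aemeasurable]
  simp only [MeasurableEquiv.piFinSuccAbove_symm_apply, Fin.insertNthEquiv_last]
  rfl

lemma measurable_prod_getElem {w : List (α → ℝ≥0∞)} {n : ℕ} (hn : w.length = n)
    (hw : ∀ u ∈ w, Measurable u) : Measurable fun f : Fin n → α ↦ ∏ i : Fin n, w[i] (f i) :=
  Finset.measurable_prod _ fun i _ ↦ (hw _ (List.getElem_mem _)).comp (measurable_pi_apply i)

end ProductMeasure

section OrderedIntegral

variable {α : Type*} [LinearOrder α]

/-- The strictly increasing `n`-tuples with all entries in `S`: the common shape of the domain of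
integration of `itInt` and of the index set of `MTV`. -/
def strictMonoTuples (n : ℕ) (S : Set α) : Set (Fin n → α) :=
  {f | StrictMono f ∧ ∀ i, f i ∈ S}

lemma snoc_mem_strictMonoTuples {n : ℕ} {S : Set α} {f : Fin n → α} {a : α} :
    (Fin.snoc f a : Fin (n + 1) → α) ∈ strictMonoTuples (n + 1) S ↔
      a ∈ S ∧ f ∈ strictMonoTuples n (S ∩ Iio a) := by
  constructor
  · rintro ⟨hmono, hmem⟩
    refine ⟨by simpa using hmem (Fin.last n), fun i j hij ↦ ?_, fun i ↦ ⟨?_, ?_⟩⟩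
    · simpa using hmono (Fin.castSucc_lt_castSucc_iff.2 hij)
    · simpa using hmem i.castSucc
    · simpa using hmono (Fin.castSucc_lt_last i)
  · rintro ⟨ha, hmono, hmem⟩
    refine ⟨fun i j hij ↦ ?_, Fin.lastCases (by simpa) fun i ↦ by simpa using (hmem i).1⟩
    obtain ⟨i, rfl⟩ := Fin.exists_castSucc_eq.2 (Fin.ne_last_of_lt hij)
    cases j using Fin.lastCases with
    | last => simpa using (hmem i).2
    | cast j => simpa using hmono (Fin.castSucc_lt_castSucc_iff.1 hij)

variable [MeasurableSpace α]

lemma measurableSet_strictMonoTuples [TopologicalSpace α] [OrderClosedTopology α]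
    [SecondCountableTopology α] [OpensMeasurableSpace α] (n : ℕ) {S : Set α}
    (hS : MeasurableSet S) : MeasurableSet (strictMonoTuples n S) := by
  simp only [strictMonoTuples, StrictMono, ofPred_and, ofPred_forall]
  refine .inter (.iInter fun i ↦ .iInter fun j ↦ .iInter fun _ ↦ ?_) (.iInter fun i ↦ ?_)
  · exact measurableSet_lt (measurable_pi_apply i) (measurable_pi_apply j)
  · exact measurable_pi_apply i hS

/-- The iterated integral `∫_{t₁ < ⋯ < tₙ, tᵢ ∈ S} w₁(t₁) ⋯ wₙ(tₙ) dμ(t₁) ⋯ dμ(tₙ)` of a list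
of weights `w₁, …, wₙ`. Lebesgue measure gives iterated integrals, counting measure gives nested
sums. -/
noncomputable def orderedLIntegral (μ : Measure α) (w : List (α → ℝ≥0∞)) (S : Set α) : ℝ≥0∞ :=
  ∫⁻ f in strictMonoTuples w.length S, ∏ i : Fin w.length, w[i] (f i) ∂Measure.pi fun _ ↦ μ

lemma orderedLIntegral_eq_of_length_eq (μ : Measure α) {w : List (α → ℝ≥0∞)} {n : ℕ}
    (hn : w.length = n) (S : Set α) :
    orderedLIntegral μ w S =
      ∫⁻ f in strictMonoTuples n S, ∏ i : Fin n, w[i] (f i) ∂Measure.pi fun _ ↦ μ := by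
  subst hn
  rfl

@[simp]
lemma orderedLIntegral_nil (μ : Measure α) (S : Set α) : orderedLIntegral μ [] S = 1 := by
  have : strictMonoTuples 0 S = univ := by
    ext f
    simp [strictMonoTuples, Subsingleton.strictMono]
  simp [orderedLIntegral, this]

lemma orderedLIntegral_concat [TopologicalSpace α] [OrderClosedTopology α]
    [SecondCountableTopology α] [OpensMeasurableSpace α] (μ : Measure α) [SigmaFinite μ]
    {w : List (α → ℝ≥0∞)} {v : α → ℝ≥0∞} (hw : ∀ u ∈ w, Measurable u) (hv : Measurable v)
    {S : Set α} (hS : MeasurableSet S) :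
    orderedLIntegral μ (w ++ [v]) S =
      ∫⁻ a in S, v a * orderedLIntegral μ w (S ∩ Iio a) ∂μ := by
  have hconcat : (w ++ [v]).length = w.length + 1 := by simp
  have hmeas : ∀ u ∈ w ++ [v], Measurable u := by
    simpa only [List.forall_mem_append, List.forall_mem_singleton] using ⟨hw, hv⟩
  rw [orderedLIntegral_eq_of_length_eq μ hconcat,
    ← lintegral_indicator (measurableSet_strictMonoTuples _ hS),
    lintegral_pi_eq_lintegral_lintegral_snoc μ
      ((measurable_prod_getElem hconcat hmeas).indicator (measurableSet_strictMonoTuples _ hS)),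
    ← lintegral_indicator hS]
  refine lintegral_congr fun a ↦ ?_
  by_cases ha : a ∈ S
  · rw [indicator_of_mem ha, orderedLIntegral,
      ← lintegral_const_mul _ (measurable_prod_getElem rfl hw),
      ← lintegral_indicator (measurableSet_strictMonoTuples _ (hS.inter measurableSet_Iio))]
    refine lintegral_congr fun f ↦ ?_
    by_cases hf : f ∈ strictMonoTuples w.length (S ∩ Iio a)
    · rw [indicator_of_mem (snoc_mem_strictMonoTuples.2 ⟨ha, hf⟩), indicator_of_mem hf,
        Fin.prod_univ_castSucc]
      simp [mul_comm]
    · rw [indicator_of_notMem fun h ↦ hf (snoc_mem_strictMonoTuples.1 h).2,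
        indicator_of_notMem hf]
  · simp [snoc_mem_strictMonoTuples, ha]

end OrderedIntegral

section PowerSeries

lemma lintegral_Ioo_ofReal_pow (m : ℕ) {x : ℝ} (hx : 0 ≤ x) :
    ∫⁻ t in Ioo 0 x, ENNReal.ofReal t ^ m =
      ((m + 1 : ℕ) : ℝ≥0∞)⁻¹ * ENNReal.ofReal x ^ (m + 1) := by
  have hnonneg : ∀ᵐ t ∂volume.restrict (Ioc 0 x), 0 ≤ t ^ m :=
    ae_restrict_of_forall_mem measurableSet_Ioc fun t ht ↦ pow_nonneg ht.1.le m
  have hint : IntegrableOn (fun t : ℝ ↦ t ^ m) (Ioc 0 x) :=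
    (intervalIntegrable_iff_integrableOn_Ioc_of_le hx).1 (intervalIntegral.intervalIntegrable_pow m)
  calc ∫⁻ t in Ioo 0 x, ENNReal.ofReal t ^ m
      = ∫⁻ t in Ioc 0 x, ENNReal.ofReal (t ^ m) := by
        rw [restrict_Ioo_eq_restrict_Ioc]
        exact setLIntegral_congr_fun measurableSet_Ioc fun t ht ↦
          (ENNReal.ofReal_pow ht.1.le m).symm
    _ = ENNReal.ofReal (x ^ (m + 1) / (m + 1 : ℕ)) := by
        rw [← ofReal_integral_eq_lintegral_ofReal hint hnonneg,
          ← intervalIntegral.integral_of_le hx, integral_pow]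
        simp
    _ = _ := by
        rw [ENNReal.ofReal_div_of_pos (by positivity), ENNReal.ofReal_pow hx,
          ENNReal.ofReal_natCast, ENNReal.div_eq_inv_mul]

lemma lintegral_Ioo_tsum_mul_ofReal_pow (c : ℕ → ℝ≥0∞) {x : ℝ} (hx : 0 ≤ x) :
    ∫⁻ t in Ioo 0 x, ∑' m, c m * ENNReal.ofReal t ^ m =
      ∑' m, c m * ((m + 1 : ℕ) : ℝ≥0∞)⁻¹ * ENNReal.ofReal x ^ (m + 1) := by
  rw [lintegral_tsum fun m ↦ by fun_prop]
  refine tsum_congr fun m ↦ ?_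
  rw [lintegral_const_mul _ (by fun_prop), lintegral_Ioo_ofReal_pow m hx, mul_assoc]

lemma tsum_eq_tsum_succ_of_zero {c : ℕ → ℝ≥0∞} (h0 : c 0 = 0) : ∑' m, c m = ∑' m, c (m + 1) := by
  rw [tsum_eq_zero_add' ENNReal.summable, h0, zero_add]

lemma ennreal_tsum_mul_tsum_eq_tsum_sum_antidiagonal (f g : ℕ → ℝ≥0∞) :
    (∑' i, f i) * ∑' j, g j = ∑' n, ∑ p ∈ Finset.HasAntidiagonal.antidiagonal n, f p.1 * g p.2 := by
  simp_rw [← ENNReal.tsum_mul_right, ← ENNReal.tsum_mul_left]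
  rw [← ENNReal.tsum_prod (f := fun i j ↦ f i * g j),
    ← Finset.HasAntidiagonal.sigmaAntidiagonalEquivProd.tsum_eq, ENNReal.tsum_sigma']
  simp only [Finset.HasAntidiagonal.sigmaAntidiagonalEquivProd_apply]
  exact tsum_congr fun n ↦ Finset.tsum_subtype _ fun p : ℕ × ℕ ↦ f p.1 * g p.2

end PowerSeries

section IteratedIntegral

lemma omegaForm_nonneg (e : ℕ) {t : ℝ} (ht : t ∈ Ioo (0 : ℝ) 1) : 0 ≤ omegaForm e t := by
  have : 0 ≤ 1 - t ^ 2 := by nlinarith [ht.1, ht.2]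
  have := ht.1
  unfold omegaForm
  split_ifs <;> positivity

@[fun_prop]
lemma measurable_omegaForm (e : ℕ) : Measurable (omegaForm e) := by
  unfold omegaForm
  split_ifs <;> fun_prop

/-- The density of `Ω_e` as an extended nonnegative function; meaningful on `(0, 1)` only. -/
noncomputable def omegaDensity (e : ℕ) (t : ℝ) : ℝ≥0∞ := ENNReal.ofReal (omegaForm e t)

@[fun_prop]
lemma measurable_omegaDensity (e : ℕ) : Measurable (omegaDensity e) :=
  (measurable_omegaForm e).ennreal_ofReal

lemma omegaDensity_zero_mul_tsum {c : ℕ → ℝ≥0∞} (h0 : c 0 = 0) {t : ℝ} (ht : 0 < t) :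
    omegaDensity 0 t * ∑' m, c m * ENNReal.ofReal t ^ m =
      ∑' m, c (m + 1) * ENNReal.ofReal t ^ m := by
  have hinv : omegaDensity 0 t * ENNReal.ofReal t = 1 := by
    rw [omegaDensity, ← ENNReal.ofReal_mul' ht.le]
    simp [omegaForm, ht.ne']
  rw [tsum_eq_tsum_succ_of_zero (by simp [h0]), ← ENNReal.tsum_mul_left]
  refine tsum_congr fun m ↦ ?_
  calc omegaDensity 0 t * (c (m + 1) * ENNReal.ofReal t ^ (m + 1))
      = c (m + 1) * ENNReal.ofReal t ^ m * (omegaDensity 0 t * ENNReal.ofReal t) := by ring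
    _ = c (m + 1) * ENNReal.ofReal t ^ m := by rw [hinv, mul_one]

lemma omegaDensity_one_eq_tsum {t : ℝ} (ht : t ∈ Ioo (0 : ℝ) 1) :
    omegaDensity 1 t = ∑' i : ℕ, if Even i then 2 * ENNReal.ofReal t ^ i else 0 := by
  have hsq : t ^ 2 < 1 := by nlinarith [ht.1, ht.2]
  calc omegaDensity 1 t = 2 * (1 - ENNReal.ofReal t ^ 2)⁻¹ := by
        simp only [omegaDensity, omegaForm, if_true]
        rw [ENNReal.ofReal_div_of_pos (by linarith), ENNReal.ofReal_sub _ (by positivity),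
          ENNReal.ofReal_pow ht.1.le, div_eq_mul_inv]
        simp
    _ = ∑' i : ℕ, 2 * ENNReal.ofReal t ^ (2 * i) := by
        rw [ENNReal.tsum_mul_left]
        simp only [pow_mul, ENNReal.tsum_geometric]
    _ = ∑' i : ℕ, if Even i then 2 * ENNReal.ofReal t ^ i else 0 := by
        rw [← (mul_right_injective₀ (two_ne_zero (α := ℕ))).tsum_eq
          (f := fun i ↦ if Even i then 2 * ENNReal.ofReal t ^ i else 0)]
        · simp
        · intro i hi
          obtain ⟨j, rfl⟩ := (even_iff_exists_two_mul).1 (ite_ne_right_iff.1 hi).1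
          exact ⟨j, rfl⟩

lemma omegaDensity_one_mul_tsum (c : ℕ → ℝ≥0∞) {t : ℝ} (ht : t ∈ Ioo (0 : ℝ) 1) :
    omegaDensity 1 t * ∑' m, c m * ENNReal.ofReal t ^ m =
      ∑' m, (2 * ∑ j ∈ Finset.range (m + 1) with Even (m - j), c j) * ENNReal.ofReal t ^ m := by
  rw [omegaDensity_one_eq_tsum ht, mul_comm, ennreal_tsum_mul_tsum_eq_tsum_sum_antidiagonal]
  refine tsum_congr fun m ↦ ?_
  rw [Finset.Nat.sum_antidiagonal_eq_sum_range_succ_mk, Finset.sum_filter, Finset.mul_sum,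
    Finset.sum_mul]
  refine Finset.sum_congr rfl fun j hj ↦ ?_
  split_ifs
  · rw [← Nat.add_sub_cancel' (Finset.mem_range_succ_iff.1 hj), pow_add, Nat.add_sub_cancel_left]
    ring
  · simp

/-- The iterated integral of `Ω_{ε₁} ⋯ Ω_{ε_n}` over `0 < t₁ < ⋯ < t_n < x`, with values in
`ℝ≥0∞` so that it makes sense before convergence is known. -/
noncomputable def itLIntegral (eps : List ℕ) (x : ℝ) : ℝ≥0∞ :=
  orderedLIntegral volume (eps.map omegaDensity) (Ioo 0 x)

@[simp]
lemma itLIntegral_nil (x : ℝ) : itLIntegral [] x = 1 := orderedLIntegral_nil _ _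

lemma itLIntegral_concat (eps : List ℕ) (e : ℕ) (x : ℝ) :
    itLIntegral (eps ++ [e]) x = ∫⁻ t in Ioo 0 x, omegaDensity e t * itLIntegral eps t := by
  rw [itLIntegral, List.map_append, List.map_singleton, orderedLIntegral_concat volume
    (by simp [measurable_omegaDensity]) (measurable_omegaDensity e) measurableSet_Ioo]
  refine setLIntegral_congr_fun measurableSet_Ioo fun t ht ↦ ?_
  simp only [itLIntegral, Ioo_inter_Iio, min_eq_right ht.2.le]

lemma itInt_eq_toReal_itLIntegral (eps : List ℕ) : itInt eps = (itLIntegral eps 1).toReal := by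
  have hmeas : MeasurableSet (strictMonoTuples eps.length (Ioo (0 : ℝ) 1)) :=
    measurableSet_strictMonoTuples _ measurableSet_Ioo
  have hnonneg : ∀ t ∈ strictMonoTuples eps.length (Ioo (0 : ℝ) 1),
      ∀ i : Fin eps.length, 0 ≤ omegaForm (eps.get i) (t i) :=
    fun t ht i ↦ omegaForm_nonneg _ (ht.2 i)
  change ∫ t in strictMonoTuples eps.length (Ioo 0 1), _ = _
  rw [integral_eq_lintegral_of_nonneg_ae, itLIntegral,
    orderedLIntegral_eq_of_length_eq volume (List.length_map _)]
  · congr 1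
    refine setLIntegral_congr_fun hmeas fun t ht ↦ ?_
    rw [ENNReal.ofReal_prod_of_nonneg fun i _ ↦ hnonneg t ht i]
    simp [omegaDensity]
  · exact ae_restrict_of_forall_mem hmeas fun t ht ↦ Finset.prod_nonneg fun i _ ↦ hnonneg t ht i
  · exact Measurable.aestronglyMeasurable (by fun_prop)

end IteratedIntegral

section Coefficients

/-- The effect on power series coefficients of integrating against `Ω₁` once and then against
`Ω₀` another `a - 1` times. -/
noncomputable def tStep (c : ℕ → ℝ≥0∞) (a m : ℕ) : ℝ≥0∞ :=
  2 * (m : ℝ≥0∞)⁻¹ ^ a * ∑ j ∈ Finset.range m with Odd (m - j), c j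

@[simp]
lemma tStep_apply_zero (c : ℕ → ℝ≥0∞) (a : ℕ) : tStep c a 0 = 0 := by
  simp [tStep]

lemma tStep_succ (c : ℕ → ℝ≥0∞) (a m : ℕ) :
    tStep c (a + 1) m = tStep c a m * (m : ℝ≥0∞)⁻¹ := by
  simp only [tStep, pow_succ]
  ring

lemma lintegral_omegaDensity_one_mul_tsum (c : ℕ → ℝ≥0∞) {x : ℝ} (hx : x ∈ Icc (0 : ℝ) 1) :
    ∫⁻ t in Ioo 0 x, omegaDensity 1 t * ∑' m, c m * ENNReal.ofReal t ^ m =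
      ∑' m, tStep c 1 m * ENNReal.ofReal x ^ m := by
  rw [setLIntegral_congr_fun measurableSet_Ioo fun t ht ↦
      omegaDensity_one_mul_tsum c ⟨ht.1, ht.2.trans_le hx.2⟩,
    lintegral_Ioo_tsum_mul_ofReal_pow _ hx.1,
    tsum_eq_tsum_succ_of_zero (c := fun m ↦ tStep c 1 m * _) (by simp)]
  refine tsum_congr fun m ↦ ?_
  have hparity : ∀ j ∈ Finset.range (m + 1), Even (m - j) ↔ Odd (m + 1 - j) := fun j hj ↦ by
    rw [Nat.sub_add_comm (Finset.mem_range_succ_iff.1 hj), Nat.odd_add_one, Nat.not_odd_iff_even]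
  rw [tStep, ← Finset.filter_congr hparity, pow_one]
  ring

lemma lintegral_omegaDensity_zero_mul_tsum {c : ℕ → ℝ≥0∞} (h0 : c 0 = 0) {x : ℝ} (hx : 0 ≤ x) :
    ∫⁻ t in Ioo 0 x, omegaDensity 0 t * ∑' m, c m * ENNReal.ofReal t ^ m =
      ∑' m, c m * (m : ℝ≥0∞)⁻¹ * ENNReal.ofReal x ^ m := by
  rw [setLIntegral_congr_fun measurableSet_Ioo fun t ht ↦ omegaDensity_zero_mul_tsum h0 ht.1,
    lintegral_Ioo_tsum_mul_ofReal_pow _ hx,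
    tsum_eq_tsum_succ_of_zero (c := fun m ↦ c m * (m : ℝ≥0∞)⁻¹ * _) (by simp [h0])]

lemma itLIntegral_append_one_zeros {eps : List ℕ} {c : ℕ → ℝ≥0∞}
    (h : ∀ x ∈ Icc (0 : ℝ) 1, itLIntegral eps x = ∑' m, c m * ENNReal.ofReal x ^ m) (n : ℕ) :
    ∀ x ∈ Icc (0 : ℝ) 1, itLIntegral (eps ++ 1 :: List.replicate n 0) x =
      ∑' m, tStep c (n + 1) m * ENNReal.ofReal x ^ m := by
  have hsub {x t : ℝ} (hx : x ∈ Icc (0 : ℝ) 1) (ht : t ∈ Ioo 0 x) : t ∈ Icc (0 : ℝ) 1 :=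
    ⟨ht.1.le, ht.2.le.trans hx.2⟩
  induction n with
  | zero =>
    intro x hx
    rw [List.replicate_zero, itLIntegral_concat, zero_add,
      ← lintegral_omegaDensity_one_mul_tsum c hx]
    exact setLIntegral_congr_fun measurableSet_Ioo fun t ht ↦ by rw [h t (hsub hx ht)]
  | succ n ih =>
    intro x hx
    rw [List.replicate_succ', ← List.cons_append, ← List.append_assoc, itLIntegral_concat]
    simp only [tStep_succ c (n + 1)]
    rw [← lintegral_omegaDensity_zero_mul_tsum (tStep_apply_zero c _) hx.1]
    exact setLIntegral_congr_fun measurableSet_Ioo fun t ht ↦ by rw [ih t (hsub hx ht)]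

/-- The coefficients of the power series `∑ 2^r x^{m_r} / (m₁^{k₁} ⋯ m_r^{k_r})`, the sum running
over the index set of `T(k₁, …, k_r)`; its value at `x = 1` is the multiple T-value. -/
noncomputable def tCoeff (k : List ℕ) : ℕ → ℝ≥0∞ := k.foldl tStep (Pi.single 0 1)

@[simp]
lemma tCoeff_nil : tCoeff [] = Pi.single 0 1 := rfl

lemma tCoeff_concat (k : List ℕ) (a : ℕ) : tCoeff (k ++ [a]) = tStep (tCoeff k) a :=
  List.foldl_concat ..

lemma itLIntegral_word_eq_tsum_tCoeff {k : List ℕ} (hpos : ∀ a ∈ k, 1 ≤ a) :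
    ∀ x ∈ Icc (0 : ℝ) 1,
      itLIntegral (k.map fun a ↦ 1 :: List.replicate (a - 1) 0).flatten x =
        ∑' m, tCoeff k m * ENNReal.ofReal x ^ m := by
  induction k using List.reverseRecOn with
  | nil =>
    intro x _
    rw [tsum_eq_single 0 fun m hm ↦ by simp [hm]]
    simp
  | append_singleton k a ih =>
    have hstep := itLIntegral_append_one_zeros (ih fun b hb ↦ hpos b (by simp [hb])) (a - 1)
    rw [Nat.sub_add_cancel (hpos a (by simp))] at hstep
    simpa [tCoeff_concat] using hstep

end Coefficients

section NestedSum

/-- The factor `2 / mᵃ` restricted to positive integers `m ≡ p (mod 2)`. The condition `0 < m`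
excludes the junk value `0⁻¹ = ∞`. -/
noncomputable def tWeight (p a m : ℕ) : ℝ≥0∞ :=
  if 0 < m ∧ m ≡ p [MOD 2] then 2 * (m : ℝ≥0∞)⁻¹ ^ a else 0

/-- The weights whose nested sum over `m₁ < ⋯ < m_r` is `T(k₁, …, k_r)`. -/
noncomputable def tWeights (k : List ℕ) : List (ℕ → ℝ≥0∞) :=
  k.mapIdx fun i a ↦ tWeight (i + 1) a

lemma tWeights_concat (k : List ℕ) (a : ℕ) :
    tWeights (k ++ [a]) = tWeights k ++ [tWeight (k.length + 1) a] :=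
  List.mapIdx_concat

lemma tWeight_ne_top (p a m : ℕ) : tWeight p a m ≠ ∞ := by
  unfold tWeight
  split_ifs with h
  · exact ENNReal.mul_ne_top (by simp)
      (ENNReal.pow_ne_top (ENNReal.inv_ne_top.2 (by exact_mod_cast h.1.ne')))
  · simp

lemma modEq_length_of_tCoeff_ne_zero {k : List ℕ} {m : ℕ} (h : tCoeff k m ≠ 0) :
    m ≡ k.length [MOD 2] := by
  induction k using List.reverseRecOn generalizing m with
  | nil =>
    obtain rfl : m = 0 := by
      by_contra hm
      simp [hm] at h
    rfl
  | append_singleton k a ih =>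
    rw [tCoeff_concat, tStep] at h
    obtain ⟨j, hj, hcoeff⟩ := Finset.exists_ne_zero_of_sum_ne_zero (right_ne_zero_of_mul h)
    obtain ⟨hjm, hodd⟩ := Finset.mem_filter.1 hj
    have := ih hcoeff
    simp only [Nat.ModEq, Nat.odd_iff, Finset.mem_range, List.length_append,
      List.length_singleton] at *
    omega

lemma tCoeff_concat_eq_tWeight_mul_sum (k : List ℕ) (a m : ℕ) :
    tCoeff (k ++ [a]) m = tWeight (k.length + 1) a m * ∑ j ∈ Finset.range m, tCoeff k j := by
  by_cases hm : 0 < m ∧ m ≡ k.length + 1 [MOD 2]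
  · rw [tCoeff_concat, tStep, tWeight, if_pos hm, Finset.sum_filter_of_ne]
    intro j hj hcoeff
    have := modEq_length_of_tCoeff_ne_zero hcoeff
    simp only [Nat.ModEq, Nat.odd_iff, Finset.mem_range] at *
    omega
  · have hzero : tCoeff (k ++ [a]) m = 0 := by
      contrapose! hm
      refine ⟨Nat.pos_of_ne_zero ?_, by simpa using modEq_length_of_tCoeff_ne_zero hm⟩
      rintro rfl
      simp [tCoeff_concat] at hm
    rw [hzero, tWeight, if_neg hm, zero_mul]

lemma orderedLIntegral_tWeights_eq_lintegral_tCoeff (k : List ℕ) {S : Set ℕ} (hS : IsLowerSet S)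
    (h0 : 0 ∈ S) :
    orderedLIntegral Measure.count (tWeights k) S = ∫⁻ m in S, tCoeff k m ∂Measure.count := by
  induction k using List.reverseRecOn generalizing S with
  | nil =>
    rw [tWeights, List.mapIdx_nil, orderedLIntegral_nil,
      ← lintegral_indicator (MeasurableSet.of_discrete (s := S)), lintegral_count,
      tsum_eq_single 0 fun m hm ↦ by simp [hm]]
    simp [h0]
  | append_singleton k a ih =>
    rw [tWeights_concat, orderedLIntegral_concat _ (fun _ _ ↦ .of_discrete)
      .of_discrete .of_discrete]
    refine setLIntegral_congr_fun .of_discrete fun m hm ↦ ?_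
    rw [tCoeff_concat_eq_tWeight_mul_sum]
    rcases m.eq_zero_or_pos with rfl | hmpos
    · simp [tWeight]
    · have hinter : S ∩ Iio m = Iio m := inter_eq_right.2 fun j hj ↦ hS (le_of_lt hj) hm
      rw [hinter, ih (isLowerSet_Iio m) hmpos, ← Finset.coe_range m, lintegral_finset]
      simp

/-- The index set of the sum defining `MTV`. -/
def parityTuples (n : ℕ) : Set (Fin n → ℕ) :=
  {f | StrictMono f ∧ ∀ i, f i % 2 = ((i : ℕ) + 1) % 2}

lemma pos_of_mem_parityTuples {n : ℕ} {f : Fin n → ℕ} (hf : f ∈ parityTuples n) (i : Fin n) :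
    0 < f i := by
  have hfirst : f ⟨0, i.pos⟩ % 2 = 1 := hf.2 ⟨0, i.pos⟩
  have hle : f ⟨0, i.pos⟩ ≤ f i := hf.1.monotone (Nat.zero_le i)
  omega

lemma prod_tWeight_of_mem_parityTuples {n : ℕ} (k : Fin n → ℕ) {f : Fin n → ℕ}
    (hf : f ∈ parityTuples n) :
    (∏ i : Fin n, tWeight (i + 1) (k i) (f i)).toReal = 2 ^ n * ∏ i, 1 / (f i : ℝ) ^ k i := by
  have hweight : ∀ i : Fin n, tWeight (i + 1) (k i) (f i) = 2 * (f i : ℝ≥0∞)⁻¹ ^ k i :=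
    fun i ↦ if_pos ⟨pos_of_mem_parityTuples hf i, hf.2 i⟩
  simp [hweight, ENNReal.toReal_prod, Finset.prod_mul_distrib]

lemma prod_tWeight_of_notMem_parityTuples {n : ℕ} (k : Fin n → ℕ) {f : Fin n → ℕ}
    (hmono : StrictMono f) (hf : f ∉ parityTuples n) :
    ∏ i : Fin n, tWeight (i + 1) (k i) (f i) = 0 := by
  obtain ⟨i, hi⟩ : ∃ i : Fin n, ¬ f i ≡ i + 1 [MOD 2] := by
    by_contra! h
    exact hf ⟨hmono, h⟩
  exact Finset.prod_eq_zero (Finset.mem_univ i) (if_neg fun h ↦ hi h.2)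

lemma orderedLIntegral_tWeights_univ (k : List ℕ) :
    orderedLIntegral Measure.count (tWeights k) univ =
      ∑' f : parityTuples k.length, ∏ i : Fin k.length, tWeight (i + 1) (k.get i) (f.1 i) := by
  have hlength : (tWeights k).length = k.length := List.length_mapIdx
  rw [orderedLIntegral_eq_of_length_eq _ hlength, lintegral_countable _ (to_countable _)]
  simp only [Measure.pi_singleton, Measure.count_singleton, Finset.prod_const_one, mul_one]
  have hweights : ∀ (f : Fin k.length → ℕ) (i : Fin k.length),
      (tWeights k)[i] (f i) = tWeight (i + 1) (k.get i) (f i) :=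
    fun f i ↦ congrFun (List.getElem_mapIdx (h := by simp)) (f i)
  simp only [hweights]
  rw [tsum_subtype (strictMonoTuples _ univ)
      fun f ↦ ∏ i : Fin k.length, tWeight (i + 1) (k.get i) (f i),
    tsum_subtype (parityTuples _) fun f ↦ ∏ i : Fin k.length, tWeight (i + 1) (k.get i) (f i)]
  refine tsum_congr fun f ↦ ?_
  by_cases hf : f ∈ parityTuples k.length
  · rw [indicator_of_mem (show f ∈ strictMonoTuples _ univ from ⟨hf.1, fun i ↦ mem_univ _⟩),
      indicator_of_mem hf]
  · rw [indicator_of_notMem hf]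
    exact indicator_apply_eq_zero.2 fun h ↦ prod_tWeight_of_notMem_parityTuples k.get h.1 hf

lemma MTV_eq_toReal_orderedLIntegral (k : List ℕ) :
    MTV k = (orderedLIntegral Measure.count (tWeights k) univ).toReal := by
  rw [orderedLIntegral_tWeights_univ, ENNReal.tsum_toReal_eq fun f ↦
    ENNReal.prod_ne_top fun i _ ↦ tWeight_ne_top _ _ _, MTV, ← tsum_mul_left]
  exact tsum_congr fun f ↦ (prod_tWeight_of_mem_parityTuples k.get f.2).symm

lemma MTV_eq_toReal_tsum_tCoeff (k : List ℕ) : MTV k = (∑' m, tCoeff k m).toReal := by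
  rw [MTV_eq_toReal_orderedLIntegral,
    orderedLIntegral_tWeights_eq_lintegral_tCoeff k isLowerSet_univ (mem_univ 0),
    Measure.restrict_univ, lintegral_count]

end NestedSum

/-- **Theorem (integral expression).** For an admissible index `(k₁, …, k_r)`
(all entries positive, last entry at least 2),
`T(k₁,…,k_r) = I(1, 0^{k₁−1}, 1, 0^{k₂−1}, …, 1, 0^{k_r−1})`. -/
theorem MTV_eq_itInt (k : List ℕ) (hne : k ≠ [])
    (hpos : ∀ x ∈ k, 1 ≤ x) (hadm : 2 ≤ k.getLast hne) :
    MTV k = itInt ((k.map fun ki => 1 :: List.replicate (ki - 1) 0)).flatten:= by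
  have hword := itLIntegral_word_eq_tsum_tCoeff hpos 1 ⟨zero_le_one, le_rfl⟩
  simp only [ENNReal.ofReal_one, one_pow, mul_one] at hword
  rw [MTV_eq_toReal_tsum_tCoeff, itInt_eq_toReal_itLIntegral, hword]
end

section
/- For any tuple (ε_1, ..., ε_k) ∈ {0,1}^k with ε_1 = 1 and ε_k = 0, the iterated integrals satisfy I(ε_1,...,ε_k) = I(1−ε_k, 1−ε_{k−1}, ..., 1−ε_1); this follows from the change of variables s_i = (1 − t_{k−i+1})/(1 + t_{k−i+1}), which interchanges the differential forms Ω_0 and Ω_1 and maps the interval (0,1) to itself. -/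
open MeasureTheory

/-!
The involution `c t = (1 - t) / (1 + t)` maps `(0, 1)` onto itself and satisfies
`c^* Ω₀ = -Ω₁` and `c^* Ω₁ = -Ω₀`. Since `c` is decreasing, the substitution
`sᵢ = c (t_{k-i+1})` maps the simplex `0 < t₁ < ⋯ < t_k < 1` onto itself, and the signs disappear in
the absolute value of its Jacobian determinant.
-/

open Set

section ChangeOfVariables

variable {ι ι' E : Type*} [Fintype ι] [Fintype ι'] [NormedAddCommGroup E] [NormedSpace ℝ E]

theorem setIntegral_comp_equiv {X : Type*} [MeasureSpace X]
    [SigmaFinite (volume : Measure X)] (e : ι ≃ ι') (F : (ι → X) → E) (A : Set (ι → X)) :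
    ∫ t in (· ∘ e) ⁻¹' A, F (t ∘ e) = ∫ t in A, F t :=
  (volume_preserving_arrowCongr' e.symm (.refl X) (.id volume)).setIntegral_preimage_emb
    (MeasurableEquiv.measurableEmbedding _) F A

theorem setIntegral_image_piMap {A : Set (ι → ℝ)} (hA : MeasurableSet A) {s : ι → Set ℝ}
    (hAs : A ⊆ univ.pi s) {φ φ' : ι → ℝ → ℝ}
    (hφ : ∀ i, ∀ x ∈ s i, HasDerivWithinAt (φ i) (φ' i x) (s i) x)
    (hinj : ∀ i, InjOn (φ i) (s i)) (F : (ι → ℝ) → E) :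
    ∫ u in Pi.map φ '' A, F u = ∫ t in A, |∏ i, φ' i (t i)| • F (Pi.map φ t) := by
  let D (t : ι → ℝ) : (ι → ℝ) →L[ℝ] (ι → ℝ) :=
    .pi fun i ↦ (ContinuousLinearMap.toSpanSingleton ℝ (φ' i (t i))).comp (.proj i)
  have hasFDeriv : ∀ t ∈ A, HasFDerivWithinAt (Pi.map φ) (D t) A t := fun t ht ↦
    hasFDerivWithinAt_pi'.2 fun i ↦
      (hφ i (t i) (hAs ht i trivial)).hasFDerivWithinAt.comp (f := fun u : ι → ℝ ↦ u i) t
        (hasFDerivWithinAt_apply i t A) fun _ hu ↦ hAs hu i trivial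
  have injOn : InjOn (Pi.map φ) A := fun t ht u hu h ↦
    funext fun i ↦ hinj i (hAs ht i trivial) (hAs hu i trivial) (congrFun h i)
  have det_D (t : ι → ℝ) : (D t).det = ∏ i, φ' i (t i) := by
    simp only [D, ContinuousLinearMap.det_pi, ContinuousLinearMap.det_toSpanSingleton]
  simp only [integral_image_eq_integral_abs_det_fderiv_smul volume hA hasFDeriv injOn, det_D]

end ChangeOfVariables

/-- The strictly increasing `n`-tuples with entries in `s`; for `s = (0, 1)` this is the domain
`0 < t₁ < ⋯ < tₙ < 1` of an iterated integral. -/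
def increasingTuples {α : Type*} [Preorder α] (n : ℕ) (s : Set α) : Set (Fin n → α) :=
  {t | StrictMono t ∧ ∀ i, t i ∈ s}

section IncreasingTuples

variable {n : ℕ}

theorem measurableSet_increasingTuples {α : Type*} [LinearOrder α] [TopologicalSpace α]
    [OrderClosedTopology α] [SecondCountableTopology α] [MeasurableSpace α]
    [OpensMeasurableSpace α] {s : Set α} (hs : MeasurableSet s) :
    MeasurableSet (increasingTuples n s) := by
  simp only [increasingTuples, StrictMono, ofPred_and, ofPred_forall]
  refine .inter (.iInter fun i ↦ .iInter fun j ↦ .iInter fun _ ↦ ?_) (.iInter fun i ↦ ?_)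
  · exact measurableSet_lt (measurable_pi_apply i) (measurable_pi_apply j)
  · exact measurable_pi_apply i hs

theorem image_piMap_increasingTuples {α β : Type*} [LinearOrder α] [Preorder β] {s : Set α}
    {φ : α → β} (hφ : StrictAntiOn φ s) :
    Pi.map (fun _ ↦ φ) '' increasingTuples n s =
      (· ∘ Fin.revPerm) ⁻¹' increasingTuples n (φ '' s) := by
  ext u
  constructor
  · rintro ⟨t, ⟨ht, hts⟩, rfl⟩
    exact ⟨fun i j hij ↦ hφ (hts _) (hts _) (ht (Fin.rev_lt_rev.2 hij)),
      fun i ↦ mem_image_of_mem φ (hts _)⟩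
  · rintro ⟨hu, hus⟩
    have hus' (i : Fin n) : ∃ x ∈ s, φ x = u i := by simpa using hus i.rev
    choose t hts htu using hus'
    refine ⟨t, ⟨fun i j hij ↦ (hφ.lt_iff_gt (hts j) (hts i)).1 ?_, hts⟩, funext htu⟩
    simpa [htu] using hu (Fin.rev_lt_rev.2 hij)

theorem setIntegral_increasingTuples_image {E : Type*} [NormedAddCommGroup E] [NormedSpace ℝ E]
    {s : Set ℝ} (hs : MeasurableSet s) {φ φ' : ℝ → ℝ}
    (hφ' : ∀ x ∈ s, HasDerivWithinAt φ (φ' x) s x) (hφ : StrictAntiOn φ s)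
    (F : (Fin n → ℝ) → E) :
    ∫ u in increasingTuples n (φ '' s), F u =
      ∫ t in increasingTuples n s, |∏ i, φ' (t i)| • F fun i ↦ φ (t i.rev) := by
  rw [← setIntegral_comp_equiv Fin.revPerm, ← image_piMap_increasingTuples hφ]
  exact setIntegral_image_piMap (measurableSet_increasingTuples hs) (fun t ht i _ ↦ ht.2 i)
    (fun _ ↦ hφ') (fun _ ↦ hφ.injOn) fun u ↦ F (u ∘ Fin.revPerm)

end IncreasingTuples

/-- The involution `t ↦ (1 - t) / (1 + t)` of the unit interval that exchanges the forms `Ω₀` and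
`Ω₁`. -/
noncomputable def cayley (t : ℝ) : ℝ := (1 - t) / (1 + t)

theorem cayley_cayley {t : ℝ} (ht : 1 + t ≠ 0) : cayley (cayley t) = t := by
  unfold cayley
  field_simp
  ring

theorem mapsTo_cayley_Ioo : MapsTo cayley (Ioo 0 1) (Ioo 0 1) := fun t ⟨h0, h1⟩ ↦
  ⟨div_pos (by linarith) (by linarith), (div_lt_one (by linarith)).2 (by linarith)⟩

theorem image_cayley_Ioo : cayley '' Ioo 0 1 = Ioo 0 1 :=
  mapsTo_cayley_Ioo.image_subset.antisymm fun t ht ↦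
    ⟨cayley t, mapsTo_cayley_Ioo ht, cayley_cayley (by linarith [ht.1])⟩

theorem strictAntiOn_cayley : StrictAntiOn cayley (Ioi (-1)) := by
  intro s (hs : -1 < s) t _ hst
  unfold cayley
  rw [div_lt_div_iff₀ (by linarith) (by linarith)]
  linarith

theorem hasDerivAt_cayley {t : ℝ} (ht : 1 + t ≠ 0) : HasDerivAt cayley (-2 / (1 + t) ^ 2) t := by
  refine (((hasDerivAt_id t).const_sub 1).div ((hasDerivAt_id t).const_add 1) ht).congr_deriv ?_
  simp only [id]
  ring

theorem abs_deriv_cayley_mul_omegaForm {t : ℝ} (ht : 1 + t ≠ 0) {e : ℕ} (he : e = 0 ∨ e = 1) :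
    |-2 / (1 + t) ^ 2| * omegaForm (1 - e) (cayley t) = omegaForm e t := by
  have abs_deriv : |-2 / (1 + t) ^ 2| = 2 / (1 + t) ^ 2 := by
    rw [abs_div, abs_neg, abs_two, abs_sq]
  rw [abs_deriv]
  rcases he with rfl | rfl
  · have one_sub_sq : 1 - cayley t ^ 2 = 4 * t / (1 + t) ^ 2 := by
      unfold cayley
      field_simp
      ring
    simp only [omegaForm, one_sub_sq, tsub_zero, reduceIte, zero_ne_one]
    field_simp
    norm_num
  · simp only [omegaForm, cayley, tsub_self, reduceIte, zero_ne_one]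
    rw [show 1 - t ^ 2 = (1 - t) * (1 + t) by ring]
    field_simp

theorem setIntegral_prod_omegaForm_one_sub_rev {n : ℕ} {e : Fin n → ℕ}
    (he : ∀ i, e i = 0 ∨ e i = 1) :
    ∫ u in increasingTuples n (Ioo 0 1), ∏ i, omegaForm (1 - e i.rev) (u i) =
      ∫ t in increasingTuples n (Ioo 0 1), ∏ i, omegaForm (e i) (t i) := by
  have hderiv : ∀ x ∈ Ioo (0 : ℝ) 1,
      HasDerivWithinAt cayley (-2 / (1 + x) ^ 2) (Ioo 0 1) x := fun x hx ↦
    (hasDerivAt_cayley (by linarith [hx.1])).hasDerivWithinAt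
  have hanti : StrictAntiOn cayley (Ioo 0 1) :=
    strictAntiOn_cayley.mono fun x hx ↦ neg_one_lt_zero.trans hx.1
  conv_lhs => rw [← image_cayley_Ioo]
  rw [setIntegral_increasingTuples_image measurableSet_Ioo hderiv hanti]
  refine setIntegral_congr_fun (measurableSet_increasingTuples measurableSet_Ioo) fun t ht ↦ ?_
  calc |∏ i, -2 / (1 + t i) ^ 2| • ∏ i : Fin n, omegaForm (1 - e i.rev) (cayley (t i.rev))
      = (∏ i, |-2 / (1 + t i) ^ 2|) * ∏ i, omegaForm (1 - e i) (cayley (t i)) := by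
        rw [smul_eq_mul, Finset.abs_prod]
        congr 1
        exact Equiv.prod_comp Fin.revPerm fun i ↦ omegaForm (1 - e i) (cayley (t i))
    _ = ∏ i, |-2 / (1 + t i) ^ 2| * omegaForm (1 - e i) (cayley (t i)) :=
        Finset.prod_mul_distrib.symm
    _ = ∏ i, omegaForm (e i) (t i) := Finset.prod_congr rfl fun i _ ↦
        abs_deriv_cayley_mul_omegaForm (by linarith [(ht.2 i).1]) (he i)

theorem itInt_eq_setIntegral {l : List ℕ} {n : ℕ} (h : l.length = n) :
    itInt l = ∫ t in increasingTuples n (Ioo 0 1),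
      ∏ i, omegaForm (l.get (i.cast h.symm)) (t i) := by
  subst h
  rfl

/-- **Theorem (duality of iterated integrals).** For `(ε₁,…,ε_k) ∈ {0,1}^k` with
`ε₁ = 1` and `ε_k = 0`, one has `I(ε₁,…,ε_k) = I(1−ε_k, 1−ε_{k−1}, …, 1−ε₁)`. -/
theorem itInt_duality (eps : List ℕ) (hne : eps ≠ [])
    (h01 : ∀ e ∈ eps, e = 0 ∨ e = 1)
    (hhead : eps.head hne = 1) (hlast : eps.getLast hne = 0) :
    itInt eps = itInt ((eps.map fun e => 1 - e).reverse) := by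
  have hlength : (eps.map fun e ↦ 1 - e).reverse.length = eps.length := by simp
  have hget (i : Fin eps.length) :
      (eps.map fun e ↦ 1 - e).reverse.get (i.cast hlength.symm) = 1 - eps.get i.rev := by
    simp [List.getElem_reverse, Fin.val_rev, Nat.sub_sub, Nat.add_comm]
  rw [itInt_eq_setIntegral hlength]
  simp only [hget]
  exact (setIntegral_prod_omegaForm_one_sub_rev fun i ↦ h01 _ (eps.get_mem i)).symm
end

section
/- Duality for multiple T-values: for any admissible index k = (k_1, ..., k_r) with k_r ≥ 2, one has T(k†) = T(k), where k† is the dual index of k. -/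
/-- The admissible index `(1^{a₁−1}, b₁+1, 1^{a₂−1}, b₂+1, …, 1^{a_s−1}, b_s+1)`
determined by positive integers `a₁,…,a_s` and `b₁,…,b_s`. -/
def idxOf (s : ℕ) (a b : Fin s → ℕ) : List ℕ :=
  (List.ofFn fun i => List.replicate (a i - 1) 1 ++ [b i + 1]).flatten

/-!
By geometric series, `T(k)` is an iterated integral of the forms `dt / t` and `2 dt / (1 - t ^ 2)`
over `0 < t₁ < ⋯ < t_n < 1`, and the word of forms belonging to the dual index is obtained by
reversing the word of `k` and exchanging the two forms. The substitution `t ↦ (1 - t) / (1 + t)`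
has exactly this effect: it exchanges the forms and, being decreasing, reverses the order of the
variables. All integrands are nonnegative, so working in `ℝ≥0∞` spares every convergence argument:
Tonelli's theorem moves one variable at a time from one end of the simplex to the other.
-/

namespace MultipleTValue

open MeasureTheory Set
open scoped ENNReal

section IteratedIntegral

variable {α ι : Type*} [MeasurableSpace α]

/-- The primitive `t ↦ ∫_{s < t} f(s) dμ(s)`. -/
noncomputable def lprimitive [Preorder α] (μ : Measure α) (f : α → ℝ≥0∞) (t : α) : ℝ≥0∞ :=
  ∫⁻ s in Iio t, f s ∂μ

/-- The iterated integral of `f` along a word: the letters name measures, and the head of the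
word is the innermost integration. -/
noncomputable def iteratedLIntegral [Preorder α] (μ : ι → Measure α) (w : List ι)
    (f : α → ℝ≥0∞) : α → ℝ≥0∞ :=
  w.foldl (fun g i => lprimitive (μ i) g) f

section Preorder

variable [Preorder α] {μ : ι → Measure α}

@[simp]
lemma iteratedLIntegral_nil (f : α → ℝ≥0∞) : iteratedLIntegral μ [] f = f := rfl

@[simp]
lemma iteratedLIntegral_cons (i : ι) (w : List ι) (f : α → ℝ≥0∞) :
    iteratedLIntegral μ (i :: w) f = iteratedLIntegral μ w (lprimitive (μ i) f) := rfl

lemma iteratedLIntegral_concat (w : List ι) (i : ι) (f : α → ℝ≥0∞) :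
    iteratedLIntegral μ (w ++ [i]) f = lprimitive (μ i) (iteratedLIntegral μ w f) :=
  List.foldl_concat ..

lemma lprimitive_mono (μ : Measure α) (f : α → ℝ≥0∞) : Monotone (lprimitive μ f) :=
  fun _ _ hst => lintegral_mono_set (Iio_subset_Iio hst)

lemma lprimitive_eq_lintegral {μ : Measure α} {c : α} (hμ : ∀ᵐ t ∂μ, t < c) (f : α → ℝ≥0∞) :
    lprimitive μ f c = ∫⁻ t, f t ∂μ := by
  rw [lprimitive, Measure.restrict_eq_self_of_ae_mem (s := Iio c) hμ]

end Preorder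

section LinearOrder

variable [LinearOrder α] [TopologicalSpace α] [OrderClosedTopology α] [BorelSpace α]
  {μ : ι → Measure α}

lemma measurable_lprimitive (μ : Measure α) (f : α → ℝ≥0∞) : Measurable (lprimitive μ f) :=
  (lprimitive_mono μ f).measurable

lemma measurable_iteratedLIntegral (w : List ι) {f : α → ℝ≥0∞} (hf : Measurable f) :
    Measurable (iteratedLIntegral μ w f) := by
  induction w generalizing f with
  | nil => exact hf
  | cons i _ ih => exact ih (measurable_lprimitive _ _)

lemma iteratedLIntegral_congr (w : List ι) {f g : α → ℝ≥0∞} {c : α} (h : EqOn f g (Iic c)) :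
    EqOn (iteratedLIntegral μ w f) (iteratedLIntegral μ w g) (Iic c) := by
  induction w generalizing f g with
  | nil => exact h
  | cons i _ ih =>
    exact ih fun t ht => setLIntegral_congr_fun measurableSet_Iio
      fun s (hs : s < t) => h (hs.le.trans ht)

lemma iteratedLIntegral_tsum {κ : Type*} [Countable κ] (w : List ι) {f : κ → α → ℝ≥0∞}
    (hf : ∀ k, Measurable (f k)) (t : α) :
    iteratedLIntegral μ w (fun s => ∑' k, f k s) t = ∑' k, iteratedLIntegral μ w (f k) t := by
  induction w generalizing f with
  | nil => rfl
  | cons i w ih =>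
    have hprim : lprimitive (μ i) (fun s => ∑' k, f k s) =
        fun s => ∑' k, lprimitive (μ i) (f k) s :=
      funext fun s => lintegral_tsum fun k => (hf k).aemeasurable
    rw [iteratedLIntegral_cons, hprim, ih fun k => measurable_lprimitive _ _]
    rfl

lemma iteratedLIntegral_const_mul (w : List ι) (c : ℝ≥0∞) {f : α → ℝ≥0∞} (hf : Measurable f)
    (t : α) :
    iteratedLIntegral μ w (fun s => c * f s) t = c * iteratedLIntegral μ w f t := by
  induction w generalizing f with
  | nil => rfl
  | cons i w ih =>
    have hprim : lprimitive (μ i) (fun s => c * f s) = fun s => c * lprimitive (μ i) f s :=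
      funext fun s => lintegral_const_mul c hf
    rw [iteratedLIntegral_cons, hprim, ih (measurable_lprimitive _ _)]
    rfl

lemma lintegral_mul_setLIntegral_Ioi [SecondCountableTopology α] {μ ν : Measure α} [SFinite μ]
    [SFinite ν] {f g : α → ℝ≥0∞} (hf : Measurable f) (hg : Measurable g) :
    ∫⁻ t, f t * ∫⁻ s in Ioi t, g s ∂ν ∂μ = ∫⁻ s, lprimitive μ f s * g s ∂ν := by
  have hmeas : Measurable (Function.uncurry fun t s : α =>
      {p : α × α | p.1 < p.2}.indicator (fun p => f p.1 * g p.2) (t, s)) :=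
    ((hf.comp measurable_fst).mul (hg.comp measurable_snd)).indicator
      (measurableSet_lt measurable_fst measurable_snd)
  have hinner (t : α) : f t * ∫⁻ s in Ioi t, g s ∂ν =
      ∫⁻ s, {p : α × α | p.1 < p.2}.indicator (fun p => f p.1 * g p.2) (t, s) ∂ν := by
    rw [← lintegral_const_mul _ hg, ← lintegral_indicator measurableSet_Ioi]
    rfl
  have houter (s : α) : lprimitive μ f s * g s =
      ∫⁻ t, {p : α × α | p.1 < p.2}.indicator (fun p => f p.1 * g p.2) (t, s) ∂μ := by
    rw [lprimitive, ← lintegral_mul_const _ hf, ← lintegral_indicator measurableSet_Iio]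
    rfl
  simp_rw [hinner, houter]
  exact lintegral_lintegral_swap hmeas.aemeasurable

lemma lprimitive_comp_strictAntiOn {μ ν : Measure α} {σ : α → α} {S : Set α}
    (hσ : MeasurePreserving σ μ ν) (hanti : StrictAntiOn σ S) (hμ : ∀ᵐ s ∂μ, s ∈ S)
    {g : α → ℝ≥0∞} (hg : Measurable g) {t : α} (ht : t ∈ S) :
    lprimitive ν g (σ t) = ∫⁻ s in Ioi t, g (σ s) ∂μ := by
  rw [lprimitive, ← hσ.setLIntegral_comp_preimage measurableSet_Iio hg]
  refine setLIntegral_congr ?_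
  filter_upwards [hμ] with s hs
  exact propext (hanti.lt_iff_gt hs ht)

section Duality

variable [SecondCountableTopology α] [∀ i, SFinite (μ i)] {σ : α → α} {τ : ι → ι} {S : Set α}
  {c : α} (hσ : ∀ i, MeasurePreserving σ (μ (τ i)) (μ i)) (hanti : StrictAntiOn σ S)
  (hμ : ∀ i, ∀ᵐ t ∂μ i, t ∈ S) (hS : S ⊆ Iio c)

include hσ hanti hμ hS

lemma lintegral_mul_iteratedLIntegral_reverse_comp (v : List ι) (i : ι) {f : α → ℝ≥0∞}
    (hf : Measurable f) :
    ∫⁻ t, f t * iteratedLIntegral μ v.reverse 1 (σ t) ∂μ i =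
      iteratedLIntegral μ (i :: v.map τ) f c := by
  induction v generalizing i f with
  | nil => simp [lprimitive_eq_lintegral ((hμ i).mono fun _ ht => hS ht)]
  | cons j v ih =>
    have hv : Measurable (iteratedLIntegral μ v.reverse 1) :=
      measurable_iteratedLIntegral v.reverse measurable_one
    calc
      ∫⁻ t, f t * iteratedLIntegral μ (j :: v).reverse 1 (σ t) ∂μ i =
          ∫⁻ t, f t * ∫⁻ s in Ioi t, iteratedLIntegral μ v.reverse 1 (σ s) ∂μ (τ j) ∂μ i := by
        refine lintegral_congr_ae ((hμ i).mono fun t ht => ?_)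
        simp only [List.reverse_cons, iteratedLIntegral_concat,
          lprimitive_comp_strictAntiOn (hσ j) hanti (hμ (τ j)) hv ht]
      _ = ∫⁻ s, lprimitive (μ i) f s * iteratedLIntegral μ v.reverse 1 (σ s) ∂μ (τ j) :=
        lintegral_mul_setLIntegral_Ioi hf (hv.comp (hσ j).measurable)
      _ = iteratedLIntegral μ (τ j :: v.map τ) (lprimitive (μ i) f) c :=
        ih (τ j) (measurable_lprimitive _ _)

theorem iteratedLIntegral_map_eq_reverse (w : List ι) :
    iteratedLIntegral μ (w.map τ) 1 c = iteratedLIntegral μ w.reverse 1 c := by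
  cases w with
  | nil => rfl
  | cons i v =>
    have hv : Measurable (iteratedLIntegral μ v.reverse 1) :=
      measurable_iteratedLIntegral v.reverse measurable_one
    calc
      iteratedLIntegral μ (τ i :: v.map τ) 1 c =
          ∫⁻ t, iteratedLIntegral μ v.reverse 1 (σ t) ∂μ (τ i) := by
        rw [← lintegral_mul_iteratedLIntegral_reverse_comp hσ hanti hμ hS v (τ i) measurable_one]
        simp only [Pi.one_apply, one_mul]
      _ = ∫⁻ t, iteratedLIntegral μ v.reverse 1 t ∂μ i := (hσ i).lintegral_comp hv
      _ = iteratedLIntegral μ (i :: v).reverse 1 c := by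
        rw [List.reverse_cons, iteratedLIntegral_concat,
          lprimitive_eq_lintegral ((hμ i).mono fun _ ht => hS ht)]

end Duality
end LinearOrder
end IteratedIntegral

section Forms

/-- The densities of the differential forms `dt / t` (letter `false`) and `2 dt / (1 - t ^ 2)`
(letter `true`). -/
noncomputable def formDensity : Bool → ℝ → ℝ
  | false, t => 1 / t
  | true, t => 2 / (1 - t ^ 2)

/-- The measure on the unit interval defined by the form attached to a letter. -/
noncomputable def formMeasure (b : Bool) : Measure ℝ :=
  (volume.restrict (Ioo 0 1)).withDensity fun t => ENNReal.ofReal (formDensity b t)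

/-- The involution `t ↦ (1 - t) / (1 + t)` of the unit interval, which exchanges the two forms. -/
noncomputable def unitInvolution (t : ℝ) : ℝ := (1 - t) / (1 + t)

lemma measurable_formDensity (b : Bool) : Measurable (formDensity b) := by
  cases b <;> unfold formDensity <;> fun_prop

lemma measurable_ofReal_formDensity (b : Bool) :
    Measurable fun t => ENNReal.ofReal (formDensity b t) :=
  (measurable_formDensity b).ennreal_ofReal

instance (b : Bool) : SFinite (formMeasure b) := by
  unfold formMeasure; infer_instance

lemma ae_mem_Ioo_formMeasure (b : Bool) : ∀ᵐ t ∂formMeasure b, t ∈ Ioo (0 : ℝ) 1 :=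
  (withDensity_absolutelyContinuous _ _).ae_le (ae_restrict_mem measurableSet_Ioo)

lemma lintegral_formMeasure (b : Bool) {f : ℝ → ℝ≥0∞} (hf : Measurable f) :
    ∫⁻ t, f t ∂formMeasure b =
      ∫⁻ t in Ioo 0 1, ENNReal.ofReal (formDensity b t) * f t :=
  lintegral_withDensity_eq_lintegral_mul _ (measurable_ofReal_formDensity b) hf

lemma lprimitive_formMeasure (b : Bool) {f : ℝ → ℝ≥0∞} (hf : Measurable f) (t : ℝ) :
    lprimitive (formMeasure b) f t =
      ∫⁻ s in Iio t ∩ Ioo 0 1, ENNReal.ofReal (formDensity b s) * f s := by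
  rw [lprimitive, formMeasure, setLIntegral_withDensity_eq_setLIntegral_mul _
    (measurable_ofReal_formDensity b) hf measurableSet_Iio, Measure.restrict_restrict
    measurableSet_Iio]
  rfl

lemma measurable_unitInvolution : Measurable unitInvolution := by
  unfold unitInvolution; fun_prop

lemma unitInvolution_mem_Ioo {t : ℝ} (ht : t ∈ Ioo (0 : ℝ) 1) : unitInvolution t ∈ Ioo (0 : ℝ) 1 :=
  ⟨div_pos (by linarith [ht.2]) (by linarith [ht.1]),
    (div_lt_one (by linarith [ht.1])).2 (by linarith [ht.1])⟩

lemma unitInvolution_unitInvolution {t : ℝ} (ht : 1 + t ≠ 0) :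
    unitInvolution (unitInvolution t) = t := by
  unfold unitInvolution
  field_simp
  ring

lemma image_unitInvolution : unitInvolution '' Ioo 0 1 = Ioo 0 1 :=
  (image_subset_iff.2 fun _ => unitInvolution_mem_Ioo).antisymm fun t ht =>
    ⟨unitInvolution t, unitInvolution_mem_Ioo ht,
      unitInvolution_unitInvolution (by linarith [ht.1])⟩

lemma strictAntiOn_unitInvolution : StrictAntiOn unitInvolution (Ioi (-1)) := by
  intro s hs t ht hst
  rw [mem_Ioi] at hs ht
  unfold unitInvolution
  rw [div_lt_div_iff₀ (by linarith) (by linarith)]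
  linarith

lemma hasDerivAt_unitInvolution {t : ℝ} (ht : 1 + t ≠ 0) :
    HasDerivAt unitInvolution (-2 / (1 + t) ^ 2) t := by
  have h := ((hasDerivAt_id t).const_sub 1).div ((hasDerivAt_id t).const_add 1) ht
  refine h.congr_deriv ?_
  simp only [id]
  ring

lemma abs_deriv_mul_formDensity_unitInvolution (b : Bool) {t : ℝ} (ht : t ∈ Ioo (0 : ℝ) 1) :
    |-2 / (1 + t) ^ 2| * formDensity b (unitInvolution t) = formDensity (!b) t := by
  obtain ⟨h0, h1⟩ := ht
  have hminus : 1 - t ≠ 0 := by linarith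
  have hplus : 1 + t ≠ 0 := by linarith
  have hsq : 1 - t ^ 2 ≠ 0 := by nlinarith
  rw [abs_div, abs_neg, abs_two, abs_of_pos (by positivity : 0 < (1 + t) ^ 2)]
  cases b
  · simp only [formDensity, unitInvolution, Bool.not_false]
    field_simp
    ring
  · have hden : 1 - unitInvolution t ^ 2 = 4 * t / (1 + t) ^ 2 := by
      unfold unitInvolution
      field_simp
      ring
    simp only [formDensity, Bool.not_true, hden]
    field_simp
    norm_num

lemma measurePreserving_unitInvolution (b : Bool) :
    MeasurePreserving unitInvolution (formMeasure (!b)) (formMeasure b) := by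
  refine ⟨measurable_unitInvolution, Measure.ext_of_lintegral _ fun f hf => ?_⟩
  rw [lintegral_map hf measurable_unitInvolution, lintegral_formMeasure b hf,
    lintegral_formMeasure (f := fun t => f (unitInvolution t)) (!b)
      (hf.comp measurable_unitInvolution)]
  conv_rhs => rw [← image_unitInvolution]
  rw [lintegral_image_eq_lintegral_abs_deriv_mul measurableSet_Ioo
    (fun t ht => (hasDerivAt_unitInvolution (by linarith [ht.1])).hasDerivWithinAt)
    (strictAntiOn_unitInvolution.injOn.mono fun t ht => by
      rw [mem_Ioi]; linarith [ht.1])]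
  refine setLIntegral_congr_fun measurableSet_Ioo fun t ht => ?_
  simp only [← mul_assoc, ← ENNReal.ofReal_mul (abs_nonneg _),
    abs_deriv_mul_formDensity_unitInvolution b ht]

lemma lintegral_Ioo_ofReal_pow (n : ℕ) {t : ℝ} (ht : 0 ≤ t) :
    ∫⁻ s in Ioo 0 t, ENNReal.ofReal s ^ n =
      ((n + 1 : ℕ) : ℝ≥0∞)⁻¹ * ENNReal.ofReal t ^ (n + 1) := by
  have hreal : ∫ s in Ioo 0 t, s ^ n = ((n + 1 : ℕ) : ℝ)⁻¹ * t ^ (n + 1) := by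
    rw [← integral_Ioc_eq_integral_Ioo, ← intervalIntegral.integral_of_le ht, integral_pow]
    push_cast
    ring
  have hintegrable : IntegrableOn (fun s : ℝ => s ^ n) (Ioo 0 t) :=
    ((continuous_pow n).integrableOn_Icc).mono_set Ioo_subset_Icc_self
  calc
    ∫⁻ s in Ioo 0 t, ENNReal.ofReal s ^ n = ∫⁻ s in Ioo 0 t, ENNReal.ofReal (s ^ n) :=
      setLIntegral_congr_fun measurableSet_Ioo fun s hs => (ENNReal.ofReal_pow hs.1.le n).symm
    _ = ENNReal.ofReal (∫ s in Ioo 0 t, s ^ n) :=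
      (ofReal_integral_eq_lintegral_ofReal hintegrable <|
        (ae_restrict_mem measurableSet_Ioo).mono fun s hs => pow_nonneg hs.1.le n).symm
    _ = ((n + 1 : ℕ) : ℝ≥0∞)⁻¹ * ENNReal.ofReal t ^ (n + 1) := by
      rw [hreal, ENNReal.ofReal_mul (by positivity), ENNReal.ofReal_inv_of_pos (by positivity),
        ENNReal.ofReal_natCast, ENNReal.ofReal_pow ht]

lemma ofReal_formDensity_false_mul_pow_succ (n : ℕ) {s : ℝ} (hs : 0 < s) :
    ENNReal.ofReal (formDensity false s) * ENNReal.ofReal s ^ (n + 1) = ENNReal.ofReal s ^ n := by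
  rw [pow_succ', ← mul_assoc, ← ENNReal.ofReal_mul (by simp only [formDensity]; positivity),
    formDensity, one_div_mul_cancel hs.ne', ENNReal.ofReal_one, one_mul]

lemma ofReal_formDensity_true_eq_tsum {s : ℝ} (hs : s ∈ Ioo (0 : ℝ) 1) :
    ENNReal.ofReal (formDensity true s) = ∑' i : ℕ, 2 * ENNReal.ofReal s ^ (2 * i) := by
  have hlt : s ^ 2 < 1 := pow_lt_one₀ hs.1.le hs.2 two_ne_zero
  simp_rw [pow_mul]
  rw [ENNReal.tsum_mul_left, ENNReal.tsum_geometric, ← ENNReal.ofReal_pow hs.1.le,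
    ← ENNReal.ofReal_one, ← ENNReal.ofReal_sub _ (by positivity),
    ← ENNReal.ofReal_inv_of_pos (by linarith), ← ENNReal.ofReal_ofNat 2,
    ← ENNReal.ofReal_mul zero_le_two]
  rfl

lemma lprimitive_false_pow_succ (n : ℕ) {t : ℝ} (ht : t ≤ 1) :
    lprimitive (formMeasure false) (fun s => ENNReal.ofReal s ^ (n + 1)) t =
      ((n + 1 : ℕ) : ℝ≥0∞)⁻¹ * ENNReal.ofReal t ^ (n + 1) := by
  have hdom : Iio t ∩ Ioo 0 1 = Ioo 0 t := by
    rw [inter_comm, Ioo_inter_Iio, min_eq_right ht]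
  rw [lprimitive_formMeasure false (by fun_prop), hdom, setLIntegral_congr_fun measurableSet_Ioo
    fun s hs => ofReal_formDensity_false_mul_pow_succ n hs.1]
  rcases le_total 0 t with h0 | h0
  · exact lintegral_Ioo_ofReal_pow n h0
  · simp [Ioo_eq_empty_of_le h0, ENNReal.ofReal_of_nonpos h0]

lemma lprimitive_true_pow (m : ℕ) :
    lprimitive (formMeasure true) (fun s => ENNReal.ofReal s ^ m) = fun t =>
      ∑' i : ℕ, 2 * lprimitive (formMeasure false)
        (fun s => ENNReal.ofReal s ^ (m + 2 * i + 1)) t := by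
  ext t
  have hexpand (s : ℝ) (hs : s ∈ Iio t ∩ Ioo 0 1) :
      ENNReal.ofReal (formDensity true s) * ENNReal.ofReal s ^ m = ∑' i : ℕ,
        2 * (ENNReal.ofReal (formDensity false s) * ENNReal.ofReal s ^ (m + 2 * i + 1)) := by
    rw [ofReal_formDensity_true_eq_tsum hs.2, ← ENNReal.tsum_mul_right]
    refine tsum_congr fun i => ?_
    rw [ofReal_formDensity_false_mul_pow_succ _ hs.2.1]
    ring
  have hmeas (i : ℕ) : Measurable fun s =>
      ENNReal.ofReal (formDensity false s) * ENNReal.ofReal s ^ (m + 2 * i + 1) :=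
    (measurable_ofReal_formDensity false).mul (by fun_prop)
  rw [lprimitive_formMeasure true (by fun_prop),
    setLIntegral_congr_fun (measurableSet_Iio.inter measurableSet_Ioo) hexpand,
    lintegral_tsum fun i => ((hmeas i).const_mul 2).aemeasurable]
  refine tsum_congr fun i => ?_
  rw [lintegral_const_mul 2 (hmeas i), lprimitive_formMeasure false (by fun_prop)]

lemma iteratedLIntegral_false_cons_pow_succ (w : List Bool) (n : ℕ) :
    iteratedLIntegral formMeasure (false :: w) (fun s => ENNReal.ofReal s ^ (n + 1)) 1 =
      ((n + 1 : ℕ) : ℝ≥0∞)⁻¹ *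
        iteratedLIntegral formMeasure w (fun s => ENNReal.ofReal s ^ (n + 1)) 1 := by
  rw [iteratedLIntegral_cons, ← iteratedLIntegral_const_mul w _ (by fun_prop)]
  exact iteratedLIntegral_congr w (fun t ht => lprimitive_false_pow_succ n ht) self_mem_Iic

lemma iteratedLIntegral_replicate_false_append_pow_succ (j : ℕ) (w : List Bool) (n : ℕ) :
    iteratedLIntegral formMeasure (List.replicate j false ++ w)
        (fun s => ENNReal.ofReal s ^ (n + 1)) 1 =
      ((n + 1 : ℕ) : ℝ≥0∞)⁻¹ ^ j *
        iteratedLIntegral formMeasure w (fun s => ENNReal.ofReal s ^ (n + 1)) 1 := by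
  induction j with
  | zero => simp
  | succ j ih =>
    rw [List.replicate_succ, List.cons_append, iteratedLIntegral_false_cons_pow_succ, ih, pow_succ',
      mul_assoc]

lemma iteratedLIntegral_true_cons_pow (w : List Bool) (m : ℕ) :
    iteratedLIntegral formMeasure (true :: w) (fun s => ENNReal.ofReal s ^ m) 1 =
      ∑' i : ℕ, 2 * iteratedLIntegral formMeasure (false :: w)
        (fun s => ENNReal.ofReal s ^ (m + 2 * i + 1)) 1 := by
  rw [iteratedLIntegral_cons, lprimitive_true_pow, iteratedLIntegral_tsum w fun i =>
    (measurable_lprimitive _ _).const_mul 2]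
  exact tsum_congr fun i => iteratedLIntegral_const_mul w 2 (measurable_lprimitive _ _) 1

end Forms

section Series

open Matrix (vecCons)

/-- The condition `m < f 0 < f 1 < ⋯` with alternating parities, `f 0` having the parity opposite
to that of `m`. For `m = 0` this is the summation condition of `MTV`; arbitrary `m` allows the sum
to be evaluated one variable at a time. -/
def IsAlternating {n : ℕ} (m : ℕ) (f : Fin n → ℕ) : Prop :=
  StrictMono (vecCons m f) ∧ ∀ i, f i % 2 = (m + i + 1) % 2

/-- The part of the multiple `T`-series of `k` whose summation variables continue an alternating
sequence past `m`. -/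
noncomputable def alternatingSum (k : List ℕ) (m : ℕ) : ℝ≥0∞ :=
  ∑' f : {f : Fin k.length → ℕ // IsAlternating m f},
    ∏ i : Fin k.length, 2 * (f.1 i : ℝ≥0∞)⁻¹ ^ k.get i

lemma isAlternating_vecCons {n m l : ℕ} {f : Fin n → ℕ} :
    IsAlternating m (vecCons l f) ↔ (∃ i, l = m + 2 * i + 1) ∧ IsAlternating l f := by
  have hhead : (∃ i, l = m + 2 * i + 1) ↔ m < l ∧ l % 2 = (m + 1) % 2 :=
    ⟨by rintro ⟨i, rfl⟩; omega, fun h => ⟨(l - m) / 2, by omega⟩⟩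
  rw [hhead]
  simp only [IsAlternating, strictMono_vecCons, Matrix.cons_val_zero, Fin.forall_fin_succ,
    Matrix.cons_val_succ, Fin.val_zero, Fin.val_succ, add_zero]
  grind

lemma bijective_vecCons_isAlternating (m n : ℕ) :
    Function.Bijective fun p : (i : ℕ) × {f : Fin n → ℕ // IsAlternating (m + 2 * i + 1) f} =>
      (⟨vecCons (m + 2 * p.1 + 1) p.2.1, isAlternating_vecCons.2 ⟨⟨p.1, rfl⟩, p.2.2⟩⟩ :
        {f : Fin (n + 1) → ℕ // IsAlternating m f}) := by
  constructor
  · rintro ⟨i, f⟩ ⟨j, g⟩ h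
    obtain ⟨hhead, htail⟩ : m + 2 * i + 1 = m + 2 * j + 1 ∧ f.1 = g.1 :=
      Matrix.vecCons_inj.1 (Subtype.ext_iff.1 h)
    exact Sigma.subtype_ext (by grind) htail
  · rintro ⟨f, hf⟩
    obtain ⟨l, f, rfl⟩ : ∃ l g, f = vecCons l g := ⟨_, _, (Matrix.cons_head_tail f).symm⟩
    obtain ⟨⟨i, rfl⟩, hf'⟩ := isAlternating_vecCons.1 hf
    exact ⟨⟨i, f, hf'⟩, rfl⟩

lemma alternatingSum_nil (m : ℕ) : alternatingSum [] m = 1 := by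
  have : Unique {f : Fin 0 → ℕ // IsAlternating m f} :=
    ⟨⟨⟨![], by simp [IsAlternating, Subsingleton.strictMono]⟩⟩,
      fun f => Subtype.ext (Subsingleton.elim _ _)⟩
  exact (tsum_fintype _).trans (by simp)

lemma alternatingSum_cons (j : ℕ) (k : List ℕ) (m : ℕ) :
    alternatingSum (j :: k) m = ∑' i : ℕ,
      2 * ((m + 2 * i + 1 : ℕ) : ℝ≥0∞)⁻¹ ^ j * alternatingSum k (m + 2 * i + 1) := by
  have hsplit := (Equiv.ofBijective _ (bijective_vecCons_isAlternating m k.length)).tsum_eq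
    fun f => ∏ i : Fin (k.length + 1), 2 * (f.1 i : ℝ≥0∞)⁻¹ ^ (j :: k).get i
  refine hsplit.symm.trans ((ENNReal.tsum_sigma' _).trans (tsum_congr fun i => ?_))
  rw [alternatingSum, ← ENNReal.tsum_mul_left]
  exact tsum_congr fun f => Fin.prod_univ_succ _

lemma isAlternating_zero_iff {n : ℕ} {f : Fin n → ℕ} :
    IsAlternating 0 f ↔ StrictMono f ∧ ∀ i, f i % 2 = ((i : ℕ) + 1) % 2 := by
  cases n with
  | zero => simp [IsAlternating, Subsingleton.strictMono]
  | succ n =>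
    simp only [IsAlternating, strictMono_vecCons, zero_add, and_assoc, and_iff_right_iff_imp]
    rintro ⟨-, hparity⟩
    have := hparity 0
    rw [Fin.val_zero] at this
    omega

lemma IsAlternating.lt {n m : ℕ} {f : Fin n → ℕ} (hf : IsAlternating m f) (i : Fin n) : m < f i :=
  hf.1 i.succ_pos

lemma MTV_eq_toReal_alternatingSum (k : List ℕ) : MTV k = (alternatingSum k 0).toReal := by
  rw [MTV, ← tsum_mul_left, alternatingSum, ENNReal.tsum_toReal_eq]
  · rw [← (Equiv.subtypeEquivRight fun f : Fin k.length → ℕ =>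
      isAlternating_zero_iff (f := f)).tsum_eq]
    refine tsum_congr fun f => ?_
    simp [ENNReal.toReal_prod, Finset.prod_mul_distrib]
  · intro f
    have hpos (i) : (f.1 i : ℝ≥0∞) ≠ 0 := Nat.cast_ne_zero.2 (f.2.lt i).ne'
    exact ENNReal.prod_ne_top fun i _ =>
      ENNReal.mul_ne_top ENNReal.ofNat_ne_top (ENNReal.pow_ne_top (ENNReal.inv_ne_top.2 (hpos i)))

end Series

section Words

/-- The word `true, false ^ (k₁ - 1), true, false ^ (k₂ - 1), …` of an index `(k₁, k₂, …)`. -/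
def indexWord (k : List ℕ) : List Bool :=
  k.flatMap fun j => true :: List.replicate (j - 1) false

lemma iteratedLIntegral_indexWord {k : List ℕ} (hk : ∀ j ∈ k, 1 ≤ j) (m : ℕ) :
    iteratedLIntegral formMeasure (indexWord k) (fun s => ENNReal.ofReal s ^ m) 1 =
      alternatingSum k m := by
  induction k generalizing m with
  | nil => simp [indexWord, alternatingSum_nil]
  | cons j k ih =>
    obtain ⟨hj, hk⟩ := List.forall_mem_cons.1 hk
    have hword : indexWord (j :: k) = true :: (List.replicate (j - 1) false ++ indexWord k) := rfl
    have hpow : false :: (List.replicate (j - 1) false ++ indexWord k) =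
        List.replicate j false ++ indexWord k := by
      rw [← List.cons_append, ← List.replicate_succ, Nat.sub_add_cancel hj]
    rw [hword, iteratedLIntegral_true_cons_pow, hpow, alternatingSum_cons]
    refine tsum_congr fun i => ?_
    rw [iteratedLIntegral_replicate_false_append_pow_succ, ih hk, mul_assoc]

lemma MTV_eq_toReal_iteratedLIntegral {k : List ℕ} (hk : ∀ j ∈ k, 1 ≤ j) :
    MTV k = (iteratedLIntegral formMeasure (indexWord k) 1 1).toReal := by
  rw [MTV_eq_toReal_alternatingSum, ← iteratedLIntegral_indexWord hk]
  simp only [pow_zero]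
  rfl

theorem iteratedLIntegral_formMeasure_reverse_map_not (w : List Bool) :
    iteratedLIntegral formMeasure (w.map not).reverse 1 1 =
      iteratedLIntegral formMeasure w 1 1 := by
  rw [← List.map_reverse, iteratedLIntegral_map_eq_reverse measurePreserving_unitInvolution
    (strictAntiOn_unitInvolution.mono fun t ht => by rw [mem_Ioi]; linarith [ht.1])
    ae_mem_Ioo_formMeasure Ioo_subset_Iio_self, List.reverse_reverse]

lemma one_le_of_mem_idxOf {s : ℕ} {a b : Fin s → ℕ} {j : ℕ} (hj : j ∈ idxOf s a b) : 1 ≤ j := by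
  simp only [idxOf, List.mem_flatten, List.mem_ofFn] at hj
  obtain ⟨_, ⟨i, rfl⟩, h⟩ := hj
  simp only [List.mem_append, List.mem_replicate, List.mem_singleton] at h
  omega

lemma indexWord_block {a : ℕ} (ha : 1 ≤ a) (b : ℕ) :
    indexWord (List.replicate (a - 1) 1 ++ [b + 1]) =
      List.replicate a true ++ List.replicate b false := by
  obtain ⟨a, rfl⟩ := Nat.exists_eq_add_of_le' ha
  simp [indexWord, List.flatMap_replicate, List.replicate_succ']

lemma indexWord_flatten (L : List (List ℕ)) : indexWord L.flatten = (L.map indexWord).flatten := by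
  induction L with
  | nil => rfl
  | cons k L ih =>
    rw [List.flatten_cons, indexWord, List.flatMap_append, ← indexWord, ← indexWord, ih]
    rfl

lemma indexWord_idxOf {s : ℕ} {a : Fin s → ℕ} (ha : ∀ i, 1 ≤ a i) (b : Fin s → ℕ) :
    indexWord (idxOf s a b) =
      (List.ofFn fun i => List.replicate (a i) true ++ List.replicate (b i) false).flatten := by
  rw [idxOf, indexWord_flatten, List.map_ofFn]
  exact congrArg (fun g => (List.ofFn g).flatten) (funext fun i => indexWord_block (ha i) (b i))

lemma ofFn_comp_rev {β : Type*} {s : ℕ} (f : Fin s → β) :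
    List.ofFn (fun i => f i.rev) = (List.ofFn f).reverse :=
  List.ext_getElem (by simp) fun i _ _ => by
    simp only [List.getElem_ofFn, List.getElem_reverse, List.length_ofFn]
    exact congrArg f (Fin.ext (by simp only [Fin.val_rev]; omega))

lemma indexWord_idxOf_rev {s : ℕ} {a b : Fin s → ℕ} (ha : ∀ i, 1 ≤ a i) (hb : ∀ i, 1 ≤ b i) :
    indexWord (idxOf s (fun i => b i.rev) (fun i => a i.rev)) =
      ((indexWord (idxOf s a b)).map not).reverse := by
  rw [indexWord_idxOf fun i => hb _, indexWord_idxOf ha,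
    ofFn_comp_rev fun i => List.replicate (b i) true ++ List.replicate (a i) false,
    List.map_flatten, List.reverse_flatten, List.map_ofFn, List.map_ofFn]
  congr 3
  funext i
  simp

end Words

end MultipleTValue

/-- **Theorem (duality).** For any admissible index
`k = (1^{a₁−1}, b₁+1, …, 1^{a_s−1}, b_s+1)` (with all `a_i, b_i ≥ 1`),
the dual index `k† = (1^{b_s−1}, a_s+1, …, 1^{b₁−1}, a₁+1)` satisfies `T(k†) = T(k)`. -/
theorem MTV_duality (s : ℕ) (hs : 1 ≤ s) (a b : Fin s → ℕ)
    (ha : ∀ i, 1 ≤ a i) (hb : ∀ i, 1 ≤ b i) :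
    MTV (idxOf s (fun i => b i.rev) (fun i => a i.rev)) = MTV (idxOf s a b) := by
  open MultipleTValue in
  rw [MTV_eq_toReal_iteratedLIntegral fun _ => one_le_of_mem_idxOf,
    MTV_eq_toReal_iteratedLIntegral fun _ => one_le_of_mem_idxOf,
    indexWord_idxOf_rev ha hb,
    iteratedLIntegral_formMeasure_reverse_map_not]
end

section
/- Weighted sum formula in depth 2: for every integer k ≥ 3, ∑_{j=2}^{k−1} 2^{j−1} · T(k−j, j) = (k−1) · T(k). -/
/-!
Write the summation indices of `T(k - j, j)` as `m₁ = 2 a + 1` and `m₂ = 2 (a + c + 1)` with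
`a, c ≥ 0`, and put `m = m₁`, `p = m₂ / 2`. After weighting by `2 ^ (j - 1)`, the sum over `j` is
geometric in `m / p`, and off the diagonal `a = c` it equals
`1 / (m ^ (k - 2) p (c - a)) - 1 / (p ^ (k - 1) (c - a))`.
The second part is antisymmetric in `(a, c)`, so it sums to zero. For fixed `a`, the first part
telescopes over `c` to `1 / m ^ k`, and the diagonal term adds `(k - 2) / m ^ k`.
-/

open Finset Filter Topology

lemma tsum_eq_zero_of_equiv_neg {ι G : Type*} [AddCommGroup G] [IsAddTorsionFree G]
    [TopologicalSpace G] [IsTopologicalAddGroup G] [T2Space G] (e : ι ≃ ι) {f : ι → G}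
    (hf : ∀ i, f (e i) = -f i) : ∑' i, f i = 0 := by
  have h : ∑' i, f i = -∑' i, f i := by
    rw [← tsum_neg, ← e.tsum_eq f]
    exact tsum_congr hf
  exact self_eq_neg.mp h

lemma sum_range_sub_add_right {G : Type*} [AddCommGroup G] (f : ℕ → G) (d N : ℕ) :
    ∑ n ∈ range N, (f n - f (n + d)) = ∑ i ∈ range d, f i - ∑ i ∈ range d, f (N + i) := by
  have h := (sum_range_add f N d).symm.trans (add_comm N d ▸ sum_range_add f d N)
  simp_rw [sum_sub_distrib, add_comm _ d]
  rw [sub_eq_sub_iff_add_eq_add, h]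

lemma hasSum_sub_add_right {G : Type*} [AddCommGroup G] [TopologicalSpace G]
    [IsTopologicalAddGroup G] [T2Space G] {f : ℕ → G} {d : ℕ}
    (hs : Summable fun n => f n - f (n + d)) (hf : Tendsto f atTop (𝓝 0)) :
    HasSum (fun n => f n - f (n + d)) (∑ i ∈ range d, f i) := by
  have htail : Tendsto (fun N => ∑ i ∈ range d, f (N + i)) atTop (𝓝 0) := by
    simpa using tendsto_finsetSum (range d) fun i _ => hf.comp (tendsto_add_atTop_nat i)
  have hlim := (tendsto_const_nhds (x := ∑ i ∈ range d, f i)).sub htail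
  simp_rw [← sum_range_sub_add_right, sub_zero] at hlim
  exact (hs.hasSum_iff_tendsto_nat).mpr hlim

lemma sum_Ico_inv_pow_mul_pow {K : Type*} [Field K] {m p : K} (hm : m ≠ 0) (hp : p ≠ 0)
    (hmp : p ≠ m) {l k : ℕ} (hlk : l + 1 ≤ k) :
    ∑ j ∈ Ico (l + 1) k, (m ^ (k - j) * p ^ j)⁻¹
      = ((m ^ (k - (l + 1)) * p ^ l)⁻¹ - (p ^ (k - 1))⁻¹) / (p - m) := by
  have hsub : p - m ≠ 0 := sub_ne_zero.mpr hmp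
  have hgeom := geom_sum₂_Ico (inv_injective.ne hmp) hlk
  have hterm : ∀ j ∈ Ico (l + 1) k,
      (m ^ (k - j) * p ^ j)⁻¹ = m⁻¹ * (p⁻¹ ^ j * m⁻¹ ^ (k - 1 - j)) := by
    intro j hj
    rw [show k - j = k - 1 - j + 1 by grind]
    simp only [mul_inv, inv_pow, pow_succ]
    ring
  rw [sum_congr rfl hterm, ← mul_sum, hgeom, inv_sub_inv hp hm, ← neg_sub p m]
  obtain ⟨n, rfl⟩ := Nat.exists_eq_add_of_le' hlk
  simp only [Nat.add_sub_cancel, ← add_assoc, inv_pow]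
  field_simp
  ring

lemma sum_Ico_inv_pow_mul_pow_self {K : Type*} [Field K] (m : K) {l k : ℕ} (hlk : l ≤ k) :
    ∑ j ∈ Ico l k, (m ^ (k - j) * m ^ j)⁻¹ = ((k : K) - l) * (m ^ k)⁻¹ := by
  have hterm : ∀ j ∈ Ico l k, (m ^ (k - j) * m ^ j)⁻¹ = (m ^ k)⁻¹ := fun j hj => by
    rw [pow_sub_mul_pow m (mem_Ico.mp hj).2.le]
  rw [sum_congr rfl hterm, sum_const, Nat.card_Ico, nsmul_eq_mul, Nat.cast_sub hlk]

-- Half a power of the larger variable `y` is traded for half a power of `x`, so that both exponents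
-- exceed `1`.
lemma inv_pow_mul_pow_le_inv_rpow_mul_rpow {x y : ℝ} (hx : 1 ≤ x) (hxy : x ≤ y) {s j : ℕ}
    (hs : 1 ≤ s) (hj : 2 ≤ j) :
    (x ^ s * y ^ j)⁻¹ ≤ (x ^ (3 / 2 : ℝ))⁻¹ * (y ^ (3 / 2 : ℝ))⁻¹ := by
  have hx0 : 0 < x := by linarith
  have hy0 : 0 < y := by linarith
  have hx_split : x ^ (3 / 2 : ℝ) = x * x ^ (1 / 2 : ℝ) := by
    rw [← Real.rpow_one_add' hx0.le (by norm_num)]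
    norm_num
  have hy_split : y ^ 2 = y ^ (1 / 2 : ℝ) * y ^ (3 / 2 : ℝ) := by
    rw [← Real.rpow_add hy0, ← Real.rpow_natCast]
    norm_num
  rw [← mul_inv]
  refine inv_anti₀ (by positivity) ?_
  calc x ^ (3 / 2 : ℝ) * y ^ (3 / 2 : ℝ)
      = x * (x ^ (1 / 2 : ℝ) * y ^ (3 / 2 : ℝ)) := by rw [hx_split, mul_assoc]
    _ ≤ x * (y ^ (1 / 2 : ℝ) * y ^ (3 / 2 : ℝ)) := by gcongr
    _ = x ^ 1 * y ^ 2 := by rw [hy_split, pow_one]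
    _ ≤ x ^ s * y ^ j := by
      have hy : 1 ≤ y := hx.trans hxy
      gcongr

/-- The summation indices of a multiple T-value of depth `r`, in the form used by `MTV`. -/
abbrev AlternatingIndex (r : ℕ) : Type :=
  {f : Fin r → ℕ // StrictMono f ∧ ∀ i, f i % 2 = ((i : ℕ) + 1) % 2}

/-- The parametrization `m₁ = 2 a + 1` of the indices of depth one. -/
def alternatingIndexOneEquiv : ℕ ≃ AlternatingIndex 1 where
  toFun a := ⟨![2 * a + 1], Subsingleton.strictMono _, by simp⟩
  invFun f := f.1 0 / 2
  left_inv a := by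
    simp only [Matrix.cons_val_zero]
    lia
  right_inv f := by
    have hodd : f.1 0 % 2 = 1 := f.2.2 0
    ext i
    fin_cases i
    simp only [Fin.zero_eta, Matrix.cons_val_zero]
    lia

/-- The parametrization `m₁ = 2 a + 1`, `m₂ = 2 (a + c + 1)` of the indices of depth two; recording
the gap `c` rather than `m₂` lets `(a, c)` range over all pairs. -/
def alternatingIndexTwoEquiv : ℕ × ℕ ≃ AlternatingIndex 2 where
  toFun q := ⟨![2 * q.1 + 1, 2 * (q.1 + q.2 + 1)], by
    have hlt : 2 * q.1 + 1 < 2 * (q.1 + q.2 + 1) := by lia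
    simpa [Fin.strictMono_iff_lt_succ] using hlt, by simp [Fin.forall_fin_two]⟩
  invFun f := (f.1 0 / 2, (f.1 1 - f.1 0) / 2)
  left_inv q := by
    ext <;> simp only [Matrix.cons_val_zero, Matrix.cons_val_one, Matrix.cons_val_fin_one] <;> lia
  right_inv f := by
    have hlt : f.1 0 < f.1 1 := f.2.1 Fin.zero_lt_one
    have hodd : f.1 0 % 2 = 1 := f.2.2 0
    have heven : f.1 1 % 2 = 0 := f.2.2 1
    ext i
    fin_cases i <;>
      simp only [Fin.zero_eta, Fin.mk_one, Matrix.cons_val_zero, Matrix.cons_val_one,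
        Matrix.cons_val_fin_one] <;>
      lia

lemma MTV_singleton (k : ℕ) : MTV [k] = 2 * ∑' a : ℕ, ((2 * (a : ℝ) + 1) ^ k)⁻¹ := by
  have hMTV : MTV [k] = 2 ^ 1 * ∑' f : AlternatingIndex 1,
      ∏ i : Fin 1, (1 : ℝ) / (f.1 i : ℝ) ^ [k].get i := rfl
  rw [hMTV, ← alternatingIndexOneEquiv.tsum_eq]
  simp [alternatingIndexOneEquiv]

/-- The `(a, c)` summand of `2 ^ j / 4 * T(s, j)`. -/
noncomputable def pairTerm (s j : ℕ) (q : ℕ × ℕ) : ℝ :=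
  ((2 * (q.1 : ℝ) + 1) ^ s * ((q.1 : ℝ) + q.2 + 1) ^ j)⁻¹

lemma two_pow_mul_MTV_pair (s j : ℕ) : 2 ^ j * MTV [s, j] = 4 * ∑' q, pairTerm s j q := by
  have hMTV : MTV [s, j] = 2 ^ 2 * ∑' f : AlternatingIndex 2,
      ∏ i : Fin 2, (1 : ℝ) / (f.1 i : ℝ) ^ [s, j].get i := rfl
  have hterm (q : ℕ × ℕ) :
      ∏ i : Fin 2, (1 : ℝ) / ((alternatingIndexTwoEquiv q).1 i : ℝ) ^ [s, j].get i
        = (2 ^ j)⁻¹ * pairTerm s j q :=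
    calc _ = 1 / ((2 * q.1 + 1 : ℕ) : ℝ) ^ s * (1 / ((2 * (q.1 + q.2 + 1) : ℕ) : ℝ) ^ j) :=
          Fin.prod_univ_two _
      _ = (2 ^ j)⁻¹ * pairTerm s j q := by
          push_cast
          simp only [pairTerm, one_div, mul_pow, mul_inv]
          ring
  rw [hMTV, ← alternatingIndexTwoEquiv.tsum_eq, tsum_congr hterm, tsum_mul_left]
  field_simp
  ring

/-- The part of the geometric sum that is antisymmetric in `(a, c)`. It vanishes on the diagonal
because of the convention `0⁻¹ = 0`. -/
noncomputable def antisymmTerm (n : ℕ) (q : ℕ × ℕ) : ℝ :=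
  (((q.1 : ℝ) + q.2 + 1) ^ n * ((q.2 : ℝ) - q.1))⁻¹

lemma tsum_antisymmTerm (n : ℕ) : ∑' q, antisymmTerm n q = 0 :=
  tsum_eq_zero_of_equiv_neg (Equiv.prodComm ℕ ℕ) fun q => by
    simp only [antisymmTerm, Equiv.prodComm_apply, Prod.fst_swap, Prod.snd_swap]
    rw [← neg_sub (q.2 : ℝ), mul_neg, inv_neg, add_comm (q.2 : ℝ)]

lemma summable_inv_nat_add_one_rpow :
    Summable fun n : ℕ => (((n : ℝ) + 1) ^ (3 / 2 : ℝ))⁻¹ := by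
  refine ((Real.summable_one_div_nat_add_rpow 1 (3 / 2)).mpr (by norm_num)).congr fun n => ?_
  rw [abs_of_nonneg (by positivity), one_div]

lemma summable_pairTerm {s j : ℕ} (hs : 1 ≤ s) (hj : 2 ≤ j) : Summable (pairTerm s j) := by
  have hdom := summable_inv_nat_add_one_rpow.mul_of_nonneg summable_inv_nat_add_one_rpow
    (fun n => by positivity) (fun n => by positivity)
  refine hdom.of_nonneg_of_le (fun q => by unfold pairTerm; positivity) fun ⟨a, c⟩ => ?_
  calc pairTerm s j (a, c)
      ≤ (((a : ℝ) + 1) ^ s * ((a : ℝ) + c + 1) ^ j)⁻¹ := by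
        unfold pairTerm
        gcongr
        linarith [a.cast_nonneg (α := ℝ)]
    _ ≤ (((a : ℝ) + 1) ^ (3 / 2 : ℝ))⁻¹ * (((a : ℝ) + c + 1) ^ (3 / 2 : ℝ))⁻¹ :=
        inv_pow_mul_pow_le_inv_rpow_mul_rpow (by simp) (by simp) hs hj
    _ ≤ (((a : ℝ) + 1) ^ (3 / 2 : ℝ))⁻¹ * (((c : ℝ) + 1) ^ (3 / 2 : ℝ))⁻¹ := by
        gcongr
        simp

lemma abs_sub_le_add_add_one (a c : ℕ) : |(c : ℝ) - a| ≤ (a : ℝ) + c + 1 := by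
  rw [abs_le]
  constructor <;> linarith [a.cast_nonneg (α := ℝ), c.cast_nonneg (α := ℝ)]

lemma one_le_abs_natCast_sub {a c : ℕ} (h : c ≠ a) : 1 ≤ |(c : ℝ) - a| := by
  exact_mod_cast Int.one_le_abs (sub_ne_zero.mpr (Nat.cast_injective.ne h : (c : ℤ) ≠ a))

lemma summable_antisymmTerm {n : ℕ} (hn : 2 ≤ n) : Summable (antisymmTerm n) := by
  have hint : Summable fun d : ℤ => (|(d : ℝ)| ^ (3 / 2 : ℝ))⁻¹ := by
    simpa using (Real.summable_one_div_int_add_rpow 0 (3 / 2)).mpr (by norm_num)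
  have hdom := hint.mul_of_nonneg summable_inv_nat_add_one_rpow
    (fun d => by positivity) (fun n => by positivity)
  have hinj : Function.Injective fun q : ℕ × ℕ => ((q.2 : ℤ) - q.1, q.1 + q.2) := by
    rintro ⟨a, c⟩ ⟨a', c'⟩ h
    simp only [Prod.mk.injEq] at h ⊢
    lia
  refine (hdom.comp_injective hinj).of_norm_bounded fun ⟨a, c⟩ => ?_
  rcases eq_or_ne c a with rfl | hca
  · simp [antisymmTerm]
  · have hnorm : ‖antisymmTerm n (a, c)‖ = (|(c : ℝ) - a| ^ 1 * ((a : ℝ) + c + 1) ^ n)⁻¹ := by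
      rw [antisymmTerm, Real.norm_eq_abs, abs_inv, abs_mul, pow_one, mul_comm,
        abs_of_nonneg (by positivity : 0 ≤ ((a : ℝ) + c + 1) ^ n)]
    rw [hnorm]
    simpa using inv_pow_mul_pow_le_inv_rpow_mul_rpow (one_le_abs_natCast_sub hca)
      (abs_sub_le_add_add_one a c) le_rfl hn

lemma summable_inv_add_add_one_mul_sub (a : ℕ) :
    Summable fun c : ℕ => (((a : ℝ) + c + 1) * ((c : ℝ) - a))⁻¹ := by
  have hsq : Summable fun c : ℕ => (((c : ℝ) - a) ^ 2)⁻¹ := by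
    simpa [sub_eq_add_neg] using (Real.summable_one_div_nat_add_rpow (-a) 2).mpr one_lt_two
  refine hsq.of_norm_bounded fun c => ?_
  rcases eq_or_ne c a with rfl | hca
  · simp
  · have hpos : 0 < |(c : ℝ) - a| := one_pos.trans_le (one_le_abs_natCast_sub hca)
    rw [norm_inv, norm_mul, Real.norm_eq_abs, Real.norm_eq_abs, ← sq_abs, sq,
      abs_of_nonneg (by positivity : 0 ≤ (a : ℝ) + c + 1)]
    gcongr
    exact abs_sub_le_add_add_one a c

lemma sum_range_inv_sub_center {K : Type*} [Field K] [CharZero K] (a : ℕ) :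
    ∑ i ∈ range (2 * a + 1), ((i : K) - a)⁻¹ = 0 := by
  have hreflect := sum_range_reflect (fun i : ℕ => ((i : K) - a)⁻¹) (2 * a + 1)
  have hneg : ∀ i ∈ range (2 * a + 1),
      (((2 * a + 1 - 1 - i : ℕ) : K) - a)⁻¹ = -((i : K) - a)⁻¹ := by
    intro i hi
    rw [Nat.add_sub_cancel, Nat.cast_sub (mem_range_succ_iff.mp hi), ← inv_neg]
    push_cast
    ring
  rw [sum_congr rfl hneg, sum_neg_distrib] at hreflect
  exact self_eq_neg.mp hreflect.symm

-- By `0⁻¹ = 0` the left-hand side omits the term `c = a`, which is where the right-hand side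
-- comes from: the full telescoping sum vanishes.
lemma hasSum_inv_add_add_one_mul_sub (a : ℕ) :
    HasSum (fun c : ℕ => (((a : ℝ) + c + 1) * ((c : ℝ) - a))⁻¹) ((2 * (a : ℝ) + 1) ^ 2)⁻¹ := by
  set m : ℝ := 2 * a + 1 with hm
  have hm0 : m ≠ 0 := by positivity
  set g : ℕ → ℝ := fun c => ((c : ℝ) - a)⁻¹ with hg
  have hdiag : HasSum (fun c => if c = a then m⁻¹ else 0) m⁻¹ := hasSum_ite_eq a _
  have hsplit (c : ℕ) : g c - g (c + (2 * a + 1))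
      = m * (((a : ℝ) + c + 1) * ((c : ℝ) - a))⁻¹ - if c = a then m⁻¹ else 0 := by
    have hshift : ((c + (2 * a + 1) : ℕ) : ℝ) - a = a + c + 1 := by push_cast; ring
    simp only [hg, hshift]
    rcases eq_or_ne c a with rfl | hca
    · simp [hm, two_mul]
    · have hsub : (c : ℝ) - a ≠ 0 := sub_ne_zero.mpr (Nat.cast_injective.ne hca)
      rw [if_neg hca, hm]
      field_simp
      ring
  have hsummable : Summable fun c => g c - g (c + (2 * a + 1)) := by
    simp_rw [hsplit]
    exact ((summable_inv_add_add_one_mul_sub a).mul_left m).sub hdiag.summable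
  have hg0 : Tendsto g atTop (𝓝 0) :=
    (tendsto_atTop_add_const_right atTop (-(a : ℝ)) tendsto_natCast_atTop_atTop).inv_tendsto_atTop
  have htele := hasSum_sub_add_right hsummable hg0
  rw [sum_range_inv_sub_center] at htele
  simpa [hsplit, hm0, sq] using (htele.add hdiag).mul_left m⁻¹

lemma sum_pairTerm_add_antisymmTerm {k : ℕ} (hk : 2 ≤ k) (a c : ℕ) :
    ∑ j ∈ Ico 2 k, pairTerm (k - j) j (a, c) + antisymmTerm (k - 1) (a, c)
      = (if c = a then ((k : ℝ) - 2) * ((2 * (a : ℝ) + 1) ^ k)⁻¹ else 0)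
        + ((2 * (a : ℝ) + 1) ^ (k - 2))⁻¹ * (((a : ℝ) + c + 1) * ((c : ℝ) - a))⁻¹ := by
  simp only [pairTerm, antisymmTerm]
  rcases eq_or_ne c a with rfl | hca
  · simp only [← two_mul, sum_Ico_inv_pow_mul_pow_self _ hk, sub_self, mul_zero, inv_zero,
      add_zero, if_true, Nat.cast_ofNat]
  · have hsub : (a : ℝ) + c + 1 - (2 * a + 1) = c - a := by ring
    have hmp : (a : ℝ) + c + 1 ≠ 2 * a + 1 := by
      rw [← sub_ne_zero, hsub, sub_ne_zero]
      exact Nat.cast_injective.ne hca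
    rw [sum_Ico_inv_pow_mul_pow (by positivity) (by positivity) hmp hk, hsub, if_neg hca]
    simp only [mul_inv, pow_one, div_eq_mul_inv]
    ring

lemma hasSum_row {k : ℕ} (hk : 2 ≤ k) (a : ℕ) :
    HasSum
      (fun c => ∑ j ∈ Ico 2 k, pairTerm (k - j) j (a, c) + antisymmTerm (k - 1) (a, c))
      (((k : ℝ) - 1) * ((2 * (a : ℝ) + 1) ^ k)⁻¹) := by
  have hsum := (hasSum_ite_eq a (((k : ℝ) - 2) * ((2 * (a : ℝ) + 1) ^ k)⁻¹)).add
    ((hasSum_inv_add_add_one_mul_sub a).mul_left ((2 * (a : ℝ) + 1) ^ (k - 2))⁻¹)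
  simp_rw [sum_pairTerm_add_antisymmTerm hk a]
  convert hsum using 1
  rw [← mul_inv, pow_sub_mul_pow _ hk]
  ring

lemma sum_tsum_pairTerm {k : ℕ} (hk : 3 ≤ k) :
    ∑ j ∈ Ico 2 k, ∑' q, pairTerm (k - j) j q
      = ((k : ℝ) - 1) * ∑' a : ℕ, ((2 * (a : ℝ) + 1) ^ k)⁻¹ := by
  have hpair : ∀ j ∈ Ico 2 k, Summable (pairTerm (k - j) j) := fun j hj =>
    summable_pairTerm (Nat.sub_pos_of_lt (mem_Ico.mp hj).2) (mem_Ico.mp hj).1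
  have hanti : Summable (antisymmTerm (k - 1)) := summable_antisymmTerm (by lia)
  have hrow := hasSum_row (k := k) (by lia)
  have hsum := (summable_sum hpair).add hanti
  calc ∑ j ∈ Ico 2 k, ∑' q, pairTerm (k - j) j q
      = ∑' q, ∑ j ∈ Ico 2 k, pairTerm (k - j) j q + ∑' q, antisymmTerm (k - 1) q := by
        rw [tsum_antisymmTerm, add_zero, Summable.tsum_finsetSum hpair]
    _ = ∑' q, (∑ j ∈ Ico 2 k, pairTerm (k - j) j q + antisymmTerm (k - 1) q) :=
        ((summable_sum hpair).tsum_add hanti).symm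
    _ = ∑' a : ℕ, ((k : ℝ) - 1) * ((2 * (a : ℝ) + 1) ^ k)⁻¹ := by
        rw [hsum.tsum_prod' fun a => (hrow a).summable]
        exact tsum_congr fun a => (hrow a).tsum_eq
    _ = ((k : ℝ) - 1) * ∑' a : ℕ, ((2 * (a : ℝ) + 1) ^ k)⁻¹ := tsum_mul_left

/-- **Theorem (weighted sum formula in depth 2).** For every integer `k ≥ 3`,
`∑_{j=2}^{k−1} 2^{j−1} T(k−j, j) = (k−1) T(k)`. -/
theorem MTV_weighted_sum_depth2 (k : ℕ) (hk : 3 ≤ k) :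
    ∑ j ∈ Finset.Icc 2 (k - 1), (2 : ℝ) ^ (j - 1) * MTV [k - j, j]
      = ((k : ℝ) - 1) * MTV [k] := by
  have hweight : ∀ j ∈ Ico 2 k,
      (2 : ℝ) ^ (j - 1) * MTV [k - j, j] = 2 * ∑' q, pairTerm (k - j) j q := by
    intro j hj
    have hpair := two_pow_mul_MTV_pair (k - j) j
    rw [← mul_pow_sub_one (by grind : j ≠ 0)] at hpair
    linarith
  calc ∑ j ∈ Icc 2 (k - 1), (2 : ℝ) ^ (j - 1) * MTV [k - j, j]
      = ∑ j ∈ Ico 2 k, 2 * ∑' q, pairTerm (k - j) j q := by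
        rw [Icc_sub_one_right_eq_Ico_of_not_isMin (by simp; lia), sum_congr rfl hweight]
    _ = ((k : ℝ) - 1) * MTV [k] := by
        rw [← mul_sum, sum_tsum_pairTerm hk, MTV_singleton]
        ring
end

section
/- Sum formula in depth 3: for every integer k ≥ 4, ∑_{a+b+c=k, a≥1, b≥1, c≥2} T(a, b, c) + ∑_{j=2}^{k−2} T(1, k−1−j, j) = (2/3) · T(2) · T(k−2). -/
/-! Record an index `x < y < z` by its gaps `p = x`, `q = y - x`, `r = z - y`, which range
independently over the odd positive integers. With `k = n + 4`, both sums on the left-hand side are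
divided differences of powers in disguise. Expanding the complete homogeneous sum in
`1 / x, 1 / y, 1 / z` into partial fractions gives
`∑ T(a, b, c) + middlePart = leftPart + rightPart`, and a geometric sum together with
`1 / (p r) = (1 / p + 1 / r) / (p + r)` gives `∑ T(1, b, c) + 2 rightPart = middlePart`.
Telescoping the sum over `q` and `r` in `leftPart` leaves
`leftPart = C ∑ 1 / p ^ (k - 2) + rightPart` with
`C = ∑ 1 / q (1 / (q + r) - 1 / (q + r + 1))`, so adding everything up leaves only
`C ∑ 1 / p ^ (k - 2)`. Writing `C` as the integral of `artanh x / (1 + x)` over `(0, 1)` and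
substituting `x = (1 - t) / (1 + t)` turns it into `∑ 1 / (2 m) ^ 2 = 1 / 3 ∑ 1 / p ^ 2`. All sums
are taken in `ℝ≥0∞`, so that only the final cancellation needs convergence. -/

open Finset.HasAntidiagonal MeasureTheory
open Set (Icc Ioc Ioo LeftInvOn MapsTo)
open scoped ENNReal

/-! ### Multiple T-values as sums over odd gaps -/

/-- The positions `0, m₁, …, m_r` whose consecutive gaps are the odd numbers `2 * g j + 1`. -/
def partialOddSum {r : ℕ} (g : Fin r → ℕ) : Fin (r + 1) → ℕ :=
  Fin.partialSum fun j => 2 * g j + 1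

theorem partialOddSum_zero {r : ℕ} (g : Fin r → ℕ) : partialOddSum g 0 = 0 :=
  Fin.partialSum_zero _

theorem partialOddSum_succ {r : ℕ} (g : Fin r → ℕ) (i : Fin r) :
    partialOddSum g i.succ = partialOddSum g i.castSucc + (2 * g i + 1) :=
  Fin.partialSum_succ _ i

theorem partialOddSum_strictMono {r : ℕ} (g : Fin r → ℕ) : StrictMono (partialOddSum g) :=
  Fin.strictMono_iff_lt_succ.2 fun i => by rw [partialOddSum_succ]; omega

theorem partialOddSum_mod_two {r : ℕ} (g : Fin r → ℕ) (i : Fin (r + 1)) :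
    partialOddSum g i % 2 = i % 2 := by
  induction i using Fin.induction with
  | zero => simp only [partialOddSum_zero, Fin.val_zero]
  | succ i ih =>
    rw [Fin.val_castSucc] at ih
    rw [partialOddSum_succ, Fin.val_succ]
    omega

theorem partialOddSum_injective {r : ℕ} : Function.Injective (partialOddSum (r := r)) := by
  intro g h hgh
  funext i
  have hsucc := congrFun hgh i.succ
  rw [partialOddSum_succ, partialOddSum_succ, hgh] at hsucc
  omega

theorem exists_partialOddSum_eq {r : ℕ} {e : Fin (r + 1) → ℕ} (h0 : e 0 = 0) (he : StrictMono e)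
    (hmod : ∀ i, e i % 2 = i % 2) : ∃ g, partialOddSum g = e := by
  refine ⟨fun i => (e i.succ - e i.castSucc) / 2, funext fun i => ?_⟩
  induction i using Fin.induction with
  | zero => rw [partialOddSum_zero, h0]
  | succ i ih =>
    have hlt : e i.castSucc < e i.succ := he i.castSucc_lt_succ
    have hl := hmod i.castSucc
    have hr := hmod i.succ
    rw [Fin.val_castSucc] at hl
    rw [Fin.val_succ] at hr
    rw [partialOddSum_succ, ih]
    omega

/-- The index set of a multiple T-value of depth `r`, parametrized by its gaps: `g` encodes the
strictly increasing sequence starting at `2 * g 0 + 1` with later gaps `2 * g j + 1`. -/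
noncomputable def oddGapsEquiv (r : ℕ) :
    (Fin r → ℕ) ≃ {f : Fin r → ℕ // StrictMono f ∧ ∀ i, f i % 2 = ((i : ℕ) + 1) % 2} :=
  Equiv.ofBijective
    (fun g => ⟨fun i => partialOddSum g i.succ,
      (partialOddSum_strictMono g).comp Fin.strictMono_succ,
      fun i => by rw [partialOddSum_mod_two, Fin.val_succ]⟩) <| by
    constructor
    · intro g h hgh
      refine partialOddSum_injective (funext fun i => ?_)
      cases i using Fin.cases with
      | zero => rw [partialOddSum_zero, partialOddSum_zero]
      | succ i => exact congrFun (congrArg Subtype.val hgh) i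
    · rintro ⟨f, hf, hmod⟩
      have cons_strictMono : StrictMono (Fin.cons 0 f : Fin (r + 1) → ℕ) := by
        refine Fin.strictMono_iff_lt_succ.2 fun i => ?_
        obtain _ | r := r
        · exact i.elim0
        cases i using Fin.cases with
        | zero =>
          have hodd : f 0 % 2 = 1 := hmod 0
          change 0 < f 0
          omega
        | succ i => exact hf i.castSucc_lt_succ
      obtain ⟨g, hg⟩ := exists_partialOddSum_eq rfl cons_strictMono (Fin.cases rfl hmod)
      exact ⟨g, Subtype.ext (funext fun i => congrFun hg i.succ)⟩

theorem MTV_eq_tsum_partialOddSum (k : List ℕ) :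
    MTV k = 2 ^ k.length * ∑' g : Fin k.length → ℕ,
      ∏ i : Fin k.length, 1 / (partialOddSum g i.succ : ℝ) ^ k.get i :=
  congrArg (2 ^ k.length * ·) ((oddGapsEquiv k.length).tsum_eq _).symm

/-- The sum of `f p` over the odd positive integers `p`, with values in `ℝ≥0∞` so that it always
exists and can be rearranged freely. -/
noncomputable def oddSum (f : ℝ → ℝ≥0∞) : ℝ≥0∞ := ∑' n : ℕ, f (2 * n + 1)

theorem oddSum_congr {f g : ℝ → ℝ≥0∞} (h : ∀ p, 1 ≤ p → f p = g p) : oddSum f = oddSum g :=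
  tsum_congr fun n => h _ (by simp)

theorem oddSum_le_oddSum {f g : ℝ → ℝ≥0∞} (h : ∀ p, 1 ≤ p → f p ≤ g p) :
    oddSum f ≤ oddSum g :=
  ENNReal.tsum_le_tsum fun n => h _ (by simp)

theorem oddSum_add (f g : ℝ → ℝ≥0∞) : oddSum (fun p => f p + g p) = oddSum f + oddSum g :=
  ENNReal.tsum_add

theorem oddSum_mul_left (c : ℝ≥0∞) (f : ℝ → ℝ≥0∞) :
    oddSum (fun p => c * f p) = c * oddSum f :=
  ENNReal.tsum_mul_left

theorem oddSum_mul_right (c : ℝ≥0∞) (f : ℝ → ℝ≥0∞) :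
    oddSum (fun p => f p * c) = oddSum f * c :=
  ENNReal.tsum_mul_right

theorem oddSum_comm (f : ℝ → ℝ → ℝ≥0∞) :
    oddSum (fun p => oddSum fun q => f p q) = oddSum fun q => oddSum fun p => f p q :=
  ENNReal.tsum_comm

theorem oddSum_finsetSum {ι : Type*} (s : Finset ι) (f : ι → ℝ → ℝ≥0∞) :
    oddSum (fun p => ∑ i ∈ s, f i p) = ∑ i ∈ s, oddSum (f i) :=
  Summable.tsum_finsetSum fun _ _ => ENNReal.summable

/-- The sum of `f p q r` over triples of odd positive integers. A negative value of `f` counts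
as `0`. -/
noncomputable def oddSum₃ (f : ℝ → ℝ → ℝ → ℝ) : ℝ≥0∞ :=
  oddSum fun p => oddSum fun q => oddSum fun r => ENNReal.ofReal (f p q r)

section oddSum₃

variable {f g : ℝ → ℝ → ℝ → ℝ}

theorem oddSum₃_congr
    (h : ∀ p q r, 1 ≤ p → 1 ≤ q → 1 ≤ r → f p q r = g p q r) : oddSum₃ f = oddSum₃ g :=
  oddSum_congr fun p hp => oddSum_congr fun q hq => oddSum_congr fun r hr =>
    congrArg ENNReal.ofReal (h p q r hp hq hr)

theorem oddSum₃_le_oddSum₃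
    (h : ∀ p q r, 1 ≤ p → 1 ≤ q → 1 ≤ r → f p q r ≤ g p q r) : oddSum₃ f ≤ oddSum₃ g :=
  oddSum_le_oddSum fun p hp => oddSum_le_oddSum fun q hq => oddSum_le_oddSum fun r hr =>
    ENNReal.ofReal_le_ofReal (h p q r hp hq hr)

theorem oddSum₃_add (hf : ∀ p q r, 1 ≤ p → 1 ≤ q → 1 ≤ r → 0 ≤ f p q r)
    (hg : ∀ p q r, 1 ≤ p → 1 ≤ q → 1 ≤ r → 0 ≤ g p q r) :
    oddSum₃ (fun p q r => f p q r + g p q r) = oddSum₃ f + oddSum₃ g := by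
  simp only [oddSum₃, ← oddSum_add]
  exact oddSum_congr fun p hp => oddSum_congr fun q hq => oddSum_congr fun r hr =>
    ENNReal.ofReal_add (hf p q r hp hq hr) (hg p q r hp hq hr)

theorem oddSum₃_finsetSum {ι : Type*} (s : Finset ι) {f : ι → ℝ → ℝ → ℝ → ℝ}
    (hf : ∀ i ∈ s, ∀ p q r, 1 ≤ p → 1 ≤ q → 1 ≤ r → 0 ≤ f i p q r) :
    oddSum₃ (fun p q r => ∑ i ∈ s, f i p q r) = ∑ i ∈ s, oddSum₃ (f i) := by
  simp only [oddSum₃, ← oddSum_finsetSum]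
  exact oddSum_congr fun p hp => oddSum_congr fun q hq => oddSum_congr fun r hr =>
    ENNReal.ofReal_sum_of_nonneg fun i hi => hf i hi p q r hp hq hr

theorem oddSum₃_swap_left (f : ℝ → ℝ → ℝ → ℝ) :
    oddSum₃ (fun p q r => f q p r) = oddSum₃ f :=
  oddSum_comm _

theorem oddSum₃_swap_right (f : ℝ → ℝ → ℝ → ℝ) :
    oddSum₃ (fun p q r => f p r q) = oddSum₃ f :=
  oddSum_congr fun _ _ => oddSum_comm _

end oddSum₃

/-- The series of `T(a, b, c)` without its factor `2 ^ 3`, in terms of the gaps `p, q, r` of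
`p < p + q < p + q + r`. -/
noncomputable def tripleT (a b c : ℕ) : ℝ≥0∞ :=
  oddSum₃ fun p q r => 1 / (p ^ a * (p + q) ^ b * (p + q + r) ^ c)

theorem tsum_eq_toReal_tsum_ofReal {α : Type*} {f : α → ℝ} (hf : ∀ x, 0 ≤ f x) :
    ∑' x, f x = (∑' x, ENNReal.ofReal (f x)).toReal := by
  rw [ENNReal.tsum_toReal_eq fun _ => ENNReal.ofReal_ne_top]
  exact tsum_congr fun x => (ENNReal.toReal_ofReal (hf x)).symm

theorem MTV_singleton_s4 (a : ℕ) :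
    MTV [a] = 2 * (oddSum fun p => ENNReal.ofReal (1 / p ^ a)).toReal := by
  let e : ℕ ≃ (Fin [a].length → ℕ) := (Equiv.funUnique (Fin 1) ℕ).symm
  have term_eq (n : ℕ) :
      ∏ i : Fin 1, (1 : ℝ) / (partialOddSum (e n) i.succ : ℝ) ^ [a].get i =
        1 / (2 * n + 1) ^ a := by
    simp [e, partialOddSum, Fin.partialSum]
  rw [MTV_eq_tsum_partialOddSum, ← e.tsum_eq, oddSum,
    ← tsum_eq_toReal_tsum_ofReal fun n => by positivity]
  simp only [List.length_singleton, term_eq, pow_one]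

theorem MTV_triple (a b c : ℕ) :
    MTV [a, b, c] = 8 * (tripleT a b c).toReal := by
  let e : (ℕ × ℕ × ℕ) ≃ (Fin [a, b, c].length → ℕ) :=
    ((Equiv.refl ℕ).prodCongr (finTwoArrowEquiv ℕ).symm).trans (Fin.consEquiv fun _ => ℕ)
  have he (t : ℕ × ℕ × ℕ) : e t = ![t.1, t.2.1, t.2.2] := rfl
  have term_eq (t : ℕ × ℕ × ℕ) :
      ∏ i : Fin 3, (1 : ℝ) / (partialOddSum (e t) i.succ : ℝ) ^ [a, b, c].get i =
        1 / ((2 * t.1 + 1) ^ a * (2 * t.1 + 1 + (2 * t.2.1 + 1)) ^ b *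
          (2 * t.1 + 1 + (2 * t.2.1 + 1) + (2 * t.2.2 + 1)) ^ c) := by
    rw [Fin.prod_univ_three, one_div_mul_one_div, one_div_mul_one_div]
    simp [he, partialOddSum, Fin.partialSum, List.ofFn_succ, add_assoc]
  have two_pow_three : (2 : ℝ) ^ [a, b, c].length = 8 := by norm_num
  rw [MTV_eq_tsum_partialOddSum, two_pow_three, ← e.tsum_eq,
    tsum_eq_toReal_tsum_ofReal fun t => by positivity]
  simp only [List.length_cons, List.length_nil, term_eq, ENNReal.tsum_prod', tripleT,
    oddSum₃, oddSum]

/-! ### Partial fractions -/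

theorem sum_antidiagonal_pow_mul_pow {K : Type*} [Field K] {X Y : K} (h : X ≠ Y) (n : ℕ) :
    ∑ i ∈ antidiagonal n, X ^ i.1 * Y ^ i.2 = (X ^ (n + 1) - Y ^ (n + 1)) / (X - Y) := by
  rw [Finset.Nat.sum_antidiagonal_eq_sum_range_succ (fun i j => X ^ i * Y ^ j),
    ← (Commute.all X Y).geom_sum₂ h]
  simp only [Nat.add_sub_cancel]

theorem sum_antidiagonal_pow_mul_pow_mul_pow {K : Type*} [Field K] {X Y Z : K} (hXY : X ≠ Y)
    (hXZ : X ≠ Z) (hYZ : Y ≠ Z) (n : ℕ) :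
    ∑ i ∈ antidiagonal n, ∑ j ∈ antidiagonal i.2, X ^ j.1 * Y ^ j.2 * Z ^ i.1 =
      X ^ (n + 2) / ((X - Y) * (X - Z)) + Y ^ (n + 2) / ((Y - X) * (Y - Z)) +
        Z ^ (n + 2) / ((Z - X) * (Z - Y)) := by
  have inner (i : ℕ × ℕ) : ∑ j ∈ antidiagonal i.2, X ^ j.1 * Y ^ j.2 * Z ^ i.1 =
      X / (X - Y) * (Z ^ i.1 * X ^ i.2) - Y / (X - Y) * (Z ^ i.1 * Y ^ i.2) := by
    rw [← Finset.sum_mul, sum_antidiagonal_pow_mul_pow hXY]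
    ring
  simp only [inner, Finset.sum_sub_distrib, ← Finset.mul_sum]
  rw [sum_antidiagonal_pow_mul_pow hXZ.symm, sum_antidiagonal_pow_mul_pow hYZ.symm]
  have := sub_ne_zero.2 hXY
  have := sub_ne_zero.2 hXZ
  have := sub_ne_zero.2 hYZ
  have := sub_ne_zero.2 hXY.symm
  have := sub_ne_zero.2 hXZ.symm
  have := sub_ne_zero.2 hYZ.symm
  field_simp
  ring

theorem sum_antidiagonal_one_div_mul {y z : ℝ} (hy : 0 < y) (hyz : y < z) (n : ℕ) :
    ∑ i ∈ antidiagonal n, 1 / (y ^ (i.2 + 1) * z ^ (i.1 + 2)) + 1 / (z ^ (n + 2) * (z - y)) =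
      1 / (y ^ (n + 1) * z * (z - y)) := by
  have hz : 0 < z := hy.trans hyz
  have hne : (1 / z) ≠ 1 / y := by simpa using hyz.ne'
  have hsub : z - y ≠ 0 := sub_ne_zero.2 hyz.ne'
  have hsub' : 1 / z - 1 / y = - ((z - y) / (y * z)) := by field_simp; ring
  have sum_eq : ∑ i ∈ antidiagonal n, 1 / (y ^ (i.2 + 1) * z ^ (i.1 + 2)) =
      1 / (y * z ^ 2) * ∑ i ∈ antidiagonal n, (1 / z) ^ i.1 * (1 / y) ^ i.2 := by
    rw [Finset.mul_sum]
    refine Finset.sum_congr rfl fun i _ => ?_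
    simp only [one_div_pow]
    field_simp
    ring
  rw [sum_eq, sum_antidiagonal_pow_mul_pow hne, hsub']
  simp only [one_div_pow]
  field_simp
  ring

theorem sum_antidiagonal_one_div_mul_mul {x y z : ℝ} (hx : 0 < x) (hxy : x < y) (hyz : y < z)
    (n : ℕ) :
    ∑ i ∈ antidiagonal n, ∑ j ∈ antidiagonal i.2,
        1 / (x ^ (j.1 + 1) * y ^ (j.2 + 1) * z ^ (i.1 + 2)) +
          1 / (y ^ (n + 1) * (y - x) * (z - y) * z) =
      1 / (x ^ (n + 1) * (y - x) * (z - x) * z) + 1 / (z ^ (n + 2) * (z - y) * (z - x)) := by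
  have hy : 0 < y := hx.trans hxy
  have hz : 0 < z := hy.trans hyz
  have inv_sub {s t : ℝ} (hs : 0 < s) (ht : 0 < t) : 1 / s - 1 / t = (t - s) / (s * t) := by
    field_simp
  have ne_of {s t : ℝ} (hst : s < t) : 1 / s ≠ 1 / t := by simpa using hst.ne
  have h1 : y - x ≠ 0 := sub_ne_zero.2 hxy.ne'
  have h2 : z - x ≠ 0 := sub_ne_zero.2 (hxy.trans hyz).ne'
  have h3 : z - y ≠ 0 := sub_ne_zero.2 hyz.ne'
  have sum_eq : ∑ i ∈ antidiagonal n, ∑ j ∈ antidiagonal i.2,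
        1 / (x ^ (j.1 + 1) * y ^ (j.2 + 1) * z ^ (i.1 + 2)) =
      1 / (x * y * z ^ 2) * ∑ i ∈ antidiagonal n, ∑ j ∈ antidiagonal i.2,
        (1 / x) ^ j.1 * (1 / y) ^ j.2 * (1 / z) ^ i.1 := by
    simp only [Finset.mul_sum]
    refine Finset.sum_congr rfl fun i _ => Finset.sum_congr rfl fun j _ => ?_
    simp only [one_div_pow]
    field_simp
    ring
  rw [sum_eq,
    sum_antidiagonal_pow_mul_pow_mul_pow (ne_of hxy) (ne_of (hxy.trans hyz)) (ne_of hyz),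
    ← neg_sub (1 / x), ← neg_sub (1 / x) (1 / z), ← neg_sub (1 / y) (1 / z),
    inv_sub hx hy, inv_sub hx hz, inv_sub hy hz]
  simp only [one_div_pow]
  generalize hX : x ^ n = X
  have : X ≠ 0 := by rw [← hX]; positivity
  generalize hY : y ^ n = Y
  have : Y ≠ 0 := by rw [← hY]; positivity
  generalize hZ : z ^ n = Z
  have : Z ≠ 0 := by rw [← hZ]; positivity
  simp only [pow_succ, hX, hY, hZ]
  field_simp
  ring

/-- The contribution of the smallest index `x = p` to the partial fraction expansion of the sum of
all `T(a, b, c)` with `a + b + c = n + 4`. -/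
noncomputable def leftPart (n : ℕ) : ℝ≥0∞ :=
  oddSum₃ fun p q r => 1 / (p ^ (n + 1) * q * (q + r) * (p + q + r))

/-- The contribution of the middle index `y = p + q`, with its sign reversed. -/
noncomputable def middlePart (n : ℕ) : ℝ≥0∞ :=
  oddSum₃ fun p q r => 1 / ((p + q) ^ (n + 1) * q * r * (p + q + r))

/-- The contribution of the largest index `z = p + q + r`. -/
noncomputable def rightPart (n : ℕ) : ℝ≥0∞ :=
  oddSum₃ fun p q r => 1 / ((p + q + r) ^ (n + 2) * r * (q + r))

theorem sum_tripleT_add_middlePart (n : ℕ) :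
    ∑ i ∈ antidiagonal n, ∑ j ∈ antidiagonal i.2, tripleT (j.1 + 1) (j.2 + 1) (i.1 + 2) +
      middlePart n = leftPart n + rightPart n := by
  simp only [tripleT, middlePart, leftPart, rightPart]
  rw [← oddSum₃_add (fun p q r hp hq hr => by positivity) fun p q r hp hq hr => by positivity]
  have merge (i : ℕ × ℕ) :
      ∑ j ∈ antidiagonal i.2, oddSum₃ (fun p q r =>
        1 / (p ^ (j.1 + 1) * (p + q) ^ (j.2 + 1) * (p + q + r) ^ (i.1 + 2))) =
      oddSum₃ fun p q r => ∑ j ∈ antidiagonal i.2,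
        1 / (p ^ (j.1 + 1) * (p + q) ^ (j.2 + 1) * (p + q + r) ^ (i.1 + 2)) :=
    (oddSum₃_finsetSum _ fun j _ p q r hp hq hr => by positivity).symm
  simp only [merge]
  rw [← oddSum₃_finsetSum _ fun i _ p q r hp hq hr => Finset.sum_nonneg fun j _ => by positivity,
    ← oddSum₃_add (fun p q r hp hq hr => Finset.sum_nonneg fun i _ => Finset.sum_nonneg fun j _ =>
      by positivity) fun p q r hp hq hr => by positivity]
  refine oddSum₃_congr fun p q r hp hq hr => ?_
  convert sum_antidiagonal_one_div_mul_mul (x := p) (y := p + q) (z := p + q + r)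
    (by positivity) (by linarith) (by linarith) n using 3 <;> ring

theorem two_mul_rightPart (n : ℕ) :
    2 * rightPart n = oddSum₃ fun p q r => 1 / (p * (p + q + r) ^ (n + 2) * r) := by
  have split (p q r : ℝ) (hp : 1 ≤ p) (hq : 1 ≤ q) (hr : 1 ≤ r) :
      1 / (p * (p + q + r) ^ (n + 2) * r) =
        1 / ((q + r + p) ^ (n + 2) * p * (r + p)) + 1 / ((q + p + r) ^ (n + 2) * r * (p + r)) := by
    have rotate : q + r + p = p + q + r := by ring
    rw [rotate, add_comm q p]
    field_simp
    ring
  rw [oddSum₃_congr split, oddSum₃_add (fun p q r hp hq hr => by positivity)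
    fun p q r hp hq hr => by positivity, two_mul]
  congr 1
  · exact ((oddSum₃_swap_left _).trans (oddSum₃_swap_right _)).symm
  · exact (oddSum₃_swap_left _).symm

theorem sum_tripleT_one_add_two_mul_rightPart (n : ℕ) :
    ∑ i ∈ antidiagonal n, tripleT 1 (i.2 + 1) (i.1 + 2) + 2 * rightPart n = middlePart n := by
  have middlePart_swap : middlePart n =
      oddSum₃ fun p q r => 1 / ((q + p) ^ (n + 1) * p * r * (q + p + r)) :=
    (oddSum₃_swap_left _).symm
  rw [two_mul_rightPart, middlePart_swap]
  simp only [tripleT]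
  rw [← oddSum₃_finsetSum _ fun i _ p q r hp hq hr => by positivity,
    ← oddSum₃_add (fun p q r hp hq hr => Finset.sum_nonneg fun i _ => by positivity)
      fun p q r hp hq hr => by positivity]
  refine oddSum₃_congr fun p q r hp hq hr => ?_
  have geom := sum_antidiagonal_one_div_mul (y := p + q) (z := p + q + r)
    (by positivity) (by linarith) n
  rw [add_sub_cancel_left] at geom
  calc _ = 1 / p * (∑ i ∈ antidiagonal n, 1 / ((p + q) ^ (i.2 + 1) * (p + q + r) ^ (i.1 + 2)) +
        1 / ((p + q + r) ^ (n + 2) * r)) := by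
        simp only [mul_add, Finset.mul_sum, one_div_mul_one_div, pow_one, mul_assoc]
    _ = 1 / ((q + p) ^ (n + 1) * p * r * (q + p + r)) := by
        rw [geom, add_comm q]
        field_simp

/-! ### The constant `crossSum 1` -/

theorem tsum_ofReal_eq_ofReal {α : Type*} {f : α → ℝ} {a : ℝ} (h : HasSum f a)
    (hf : ∀ x, 0 ≤ f x) : ∑' x, ENNReal.ofReal (f x) = ENNReal.ofReal a := by
  rw [← h.tsum_eq, ENNReal.ofReal_tsum_of_nonneg hf h.summable]

theorem lintegral_Ioo_eq_ofReal_sub {a b : ℝ} {F f : ℝ → ℝ} (hab : a ≤ b)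
    (hcont : ContinuousOn F (Icc a b)) (hderiv : ∀ x ∈ Ioo a b, HasDerivAt F (f x) x)
    (hf : ∀ x ∈ Ioo a b, 0 ≤ f x) :
    ∫⁻ x in Ioo a b, ENNReal.ofReal (f x) = ENNReal.ofReal (F b - F a) := by
  have integrable : IntegrableOn f (Ioc a b) :=
    intervalIntegral.integrableOn_deriv_of_nonneg hcont hderiv hf
  rw [← intervalIntegral.integral_eq_sub_of_hasDerivAt_of_le hab hcont hderiv
      ((intervalIntegrable_iff_integrableOn_Ioc_of_le hab).2 integrable),
    intervalIntegral.integral_of_le hab, integral_Ioc_eq_integral_Ioo,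
    ofReal_integral_eq_lintegral_ofReal (integrable.mono_set Set.Ioo_subset_Ioc_self)
      (ae_restrict_of_forall_mem measurableSet_Ioo hf)]

theorem lintegral_pow_mul_one_sub (m : ℕ) :
    ∫⁻ x in Ioo (0 : ℝ) 1, ENNReal.ofReal (x ^ m * (1 - x)) =
      ENNReal.ofReal (1 / (m + 1) - 1 / (m + 2)) := by
  have hderiv (x : ℝ) : HasDerivAt (fun x : ℝ => x ^ (m + 1) / (m + 1) - x ^ (m + 2) / (m + 2))
      (x ^ m * (1 - x)) x := by
    refine (((hasDerivAt_pow (m + 1) x).div_const (m + 1 : ℝ)).sub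
      ((hasDerivAt_pow (m + 2) x).div_const (m + 2 : ℝ))).congr_deriv ?_
    have : (m : ℝ) + 1 ≠ 0 := by positivity
    have : (m : ℝ) + 2 ≠ 0 := by positivity
    simp only [Nat.add_sub_cancel, Nat.add_succ_sub_one]
    push_cast
    field_simp
    ring
  rw [lintegral_Ioo_eq_ofReal_sub zero_le_one (by fun_prop) (fun x _ => hderiv x)
    fun x hx => mul_nonneg (pow_nonneg hx.1.le m) (sub_nonneg.2 hx.2.le)]
  simp

theorem lintegral_pow_mul_neg_log (m : ℕ) :
    ∫⁻ x in Ioo (0 : ℝ) 1, ENNReal.ofReal (x ^ m * -Real.log x) =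
      ENNReal.ofReal (1 / (m + 1) ^ 2) := by
  let F : ℝ → ℝ := fun x => x ^ (m + 1) / (m + 1) ^ 2 - x ^ m * (x * Real.log x) / (m + 1)
  have hcont : Continuous F := by
    have := Real.continuous_mul_log
    fun_prop
  have hderiv (x : ℝ) (hx : x ∈ Ioo (0 : ℝ) 1) : HasDerivAt F (x ^ m * -Real.log x) x := by
    have hF : F = fun x => x ^ (m + 1) / (m + 1) ^ 2 - x ^ (m + 1) * Real.log x / (m + 1) := by
      funext x
      simp only [F]
      ring
    rw [hF]
    refine (((hasDerivAt_pow (m + 1) x).div_const ((m + 1 : ℝ) ^ 2)).sub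
      (((hasDerivAt_pow (m + 1) x).mul (Real.hasDerivAt_log hx.1.ne')).div_const
        (m + 1 : ℝ))).congr_deriv ?_
    have : x ≠ 0 := hx.1.ne'
    simp only [Nat.add_sub_cancel]
    push_cast
    field_simp
    ring
  rw [lintegral_Ioo_eq_ofReal_sub zero_le_one hcont.continuousOn hderiv
    fun x hx => mul_nonneg (pow_nonneg hx.1.le m) (neg_nonneg.2 (Real.log_nonpos hx.1.le hx.2.le))]
  simp [F]

theorem tsum_ofReal_mul_pow_two_mul {c x : ℝ} (hc : 0 ≤ c) (hx : x ∈ Ioo (0 : ℝ) 1) :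
    ∑' n : ℕ, ENNReal.ofReal (c * x ^ (2 * n)) = ENNReal.ofReal (c / (1 - x ^ 2)) := by
  refine tsum_ofReal_eq_ofReal ?_ fun n => mul_nonneg hc (pow_nonneg hx.1.le _)
  simp only [pow_mul, div_eq_mul_inv]
  exact (hasSum_geometric_of_lt_one (sq_nonneg x) (pow_lt_one₀ hx.1.le hx.2 two_ne_zero)).mul_left c

theorem lintegral_Ioo_comp_cayley (g : ℝ → ℝ≥0∞) :
    ∫⁻ t in Ioo (0 : ℝ) 1, ENNReal.ofReal (2 / (1 + t) ^ 2) * g ((1 - t) / (1 + t)) =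
      ∫⁻ x in Ioo (0 : ℝ) 1, g x := by
  let φ : ℝ → ℝ := fun t => (1 - t) / (1 + t)
  have hφ : MapsTo φ (Ioo 0 1) (Ioo 0 1) := fun t ht =>
    ⟨div_pos (by linarith [ht.2]) (by linarith [ht.1]),
      (div_lt_one (by linarith [ht.1])).2 (by linarith [ht.1])⟩
  have hinv : LeftInvOn φ φ (Ioo 0 1) := fun t ht => by
    have : 1 + t ≠ 0 := by linarith [ht.1]
    simp only [φ]
    field_simp
    ring
  have himage : φ '' Ioo 0 1 = Ioo 0 1 := (hinv.surjOn hφ).image_eq_of_mapsTo hφ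
  have hderiv : ∀ t ∈ Ioo (0 : ℝ) 1, HasDerivWithinAt φ (-(2 / (1 + t) ^ 2)) (Ioo 0 1) t :=
    fun t ht => by
      have hne : 1 + t ≠ 0 := by linarith [ht.1]
      have := (((hasDerivAt_id t).const_sub 1).div ((hasDerivAt_id t).const_add 1) hne)
      refine (this.congr_deriv ?_).hasDerivWithinAt
      simp only [id]
      ring
  conv_rhs => rw [← himage, lintegral_image_eq_lintegral_abs_deriv_mul measurableSet_Ioo hderiv
    hinv.injOn]
  simp only [abs_neg, abs_div, abs_pow, φ, abs_two, sq_abs]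

/-- The sum over `q` and `r` that remains in `leftPart` when `p = x` is fixed and
`1 / x ^ (n + 2)` is factored out. -/
noncomputable def crossSum (x : ℝ) : ℝ≥0∞ :=
  oddSum fun q => oddSum fun r => ENNReal.ofReal (1 / q * (1 / (q + r) - 1 / (q + r + x)))

theorem tsum_ofReal_pow_div_eq_artanh {x : ℝ} (hx : x ∈ Ioo (0 : ℝ) 1) :
    ∑' b : ℕ, ENNReal.ofReal (x ^ (2 * b + 1) / (2 * b + 1)) =
      ENNReal.ofReal (1 / 2 * (Real.log (1 + x) - Real.log (1 - x))) := by
  refine tsum_ofReal_eq_ofReal ?_ fun b => div_nonneg (pow_nonneg hx.1.le _) (by positivity)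
  refine ((Real.hasSum_log_sub_log_of_abs_lt_one
    (abs_lt.2 ⟨by linarith [hx.1], hx.2⟩)).mul_left (1 / 2)).congr_fun fun b => ?_
  ring

theorem crossSum_one_eq_lintegral_artanh :
    crossSum 1 = ∫⁻ x in Ioo (0 : ℝ) 1,
      ENNReal.ofReal (1 / 2 * (Real.log (1 + x) - Real.log (1 - x)) / (1 + x)) := by
  have term_eq (b c : ℕ) : ENNReal.ofReal (1 / (2 * b + 1) *
      (1 / (2 * b + 1 + (2 * c + 1)) - 1 / (2 * b + 1 + (2 * c + 1) + 1))) =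
      ∫⁻ x in Ioo (0 : ℝ) 1, ENNReal.ofReal (x ^ (2 * b + 1) / (2 * b + 1)) *
        ENNReal.ofReal ((1 - x) * x ^ (2 * c)) := by
    have integrand (x : ℝ) (hx : x ∈ Ioo (0 : ℝ) 1) :
        ENNReal.ofReal (x ^ (2 * b + 1) / (2 * b + 1)) * ENNReal.ofReal ((1 - x) * x ^ (2 * c)) =
          ENNReal.ofReal (1 / (2 * b + 1)) *
            ENNReal.ofReal (x ^ (2 * b + 1 + 2 * c) * (1 - x)) := by
      rw [← ENNReal.ofReal_mul (div_nonneg (pow_nonneg hx.1.le _) (by positivity)),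
        ← ENNReal.ofReal_mul (by positivity)]
      ring_nf
    rw [setLIntegral_congr_fun measurableSet_Ioo integrand,
      lintegral_const_mul' _ _ ENNReal.ofReal_ne_top, lintegral_pow_mul_one_sub,
      ← ENNReal.ofReal_mul (by positivity)]
    push_cast
    ring_nf
  have integrand_eq (x : ℝ) (hx : x ∈ Ioo (0 : ℝ) 1) :
      ∑' b : ℕ, ∑' c : ℕ, ENNReal.ofReal (x ^ (2 * b + 1) / (2 * b + 1)) *
        ENNReal.ofReal ((1 - x) * x ^ (2 * c)) =
      ENNReal.ofReal (1 / 2 * (Real.log (1 + x) - Real.log (1 - x)) / (1 + x)) := by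
    have geom : (1 - x) / (1 - x ^ 2) = (1 + x)⁻¹ := by
      have : 1 - x ≠ 0 := sub_ne_zero.2 hx.2.ne'
      rw [← one_pow 2, sq_sub_sq, one_pow, div_mul_cancel_right₀ this]
    simp only [ENNReal.tsum_mul_left, ENNReal.tsum_mul_right,
      tsum_ofReal_mul_pow_two_mul (sub_nonneg.2 hx.2.le) hx, tsum_ofReal_pow_div_eq_artanh hx,
      geom]
    rw [← ENNReal.ofReal_mul' (inv_nonneg.2 (by linarith [hx.1])), ← div_eq_mul_inv]
  simp only [crossSum, oddSum, term_eq]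
  rw [← setLIntegral_congr_fun measurableSet_Ioo integrand_eq,
    lintegral_tsum fun b => (Measurable.tsum fun c => by fun_prop).aemeasurable]
  exact tsum_congr fun b => (lintegral_tsum fun c => by fun_prop).symm

theorem two_mul_crossSum_one_eq_lintegral_log :
    2 * crossSum 1 = ∫⁻ t in Ioo (0 : ℝ) 1, ENNReal.ofReal (-Real.log t / (1 + t)) := by
  rw [crossSum_one_eq_lintegral_artanh, ← lintegral_Ioo_comp_cayley,
    ← lintegral_const_mul' _ _ ENNReal.ofNat_ne_top]
  refine setLIntegral_congr_fun measurableSet_Ioo fun t ht => ?_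
  have ht0 : 0 < t := ht.1
  have one_add : 1 + (1 - t) / (1 + t) = 2 / (1 + t) := by field_simp; ring
  have one_sub : 1 - (1 - t) / (1 + t) = 2 * t / (1 + t) := by field_simp; ring
  have log_eq : Real.log (2 / (1 + t)) - Real.log (2 * t / (1 + t)) = -Real.log t := by
    rw [Real.log_div (by positivity) (by positivity), Real.log_div (by positivity) (by positivity),
      Real.log_mul two_ne_zero ht0.ne']
    ring
  rw [one_add, one_sub, log_eq, ← ENNReal.ofReal_ofNat 2, ← ENNReal.ofReal_mul (by positivity),
    ← ENNReal.ofReal_mul zero_le_two]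
  congr 1
  field_simp

theorem lintegral_neg_log_mul_pow_div (m : ℕ) :
    ∫⁻ t in Ioo (0 : ℝ) 1, ENNReal.ofReal (t ^ m * -Real.log t / (1 - t ^ 2)) =
      ∑' n : ℕ, ENNReal.ofReal (1 / (m + 2 * n + 1) ^ 2) := by
  have term_eq (n : ℕ) : ENNReal.ofReal (1 / ((m : ℝ) + 2 * n + 1) ^ 2) =
      ∫⁻ t in Ioo (0 : ℝ) 1, ENNReal.ofReal (t ^ m * -Real.log t * t ^ (2 * n)) := by
    have cast_eq : (m : ℝ) + 2 * n = (m + 2 * n : ℕ) := by push_cast; rfl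
    rw [cast_eq, ← lintegral_pow_mul_neg_log]
    simp only [pow_add, mul_right_comm]
  simp only [term_eq]
  rw [← lintegral_tsum fun n => by fun_prop]
  refine setLIntegral_congr_fun measurableSet_Ioo fun t ht => ?_
  exact (tsum_ofReal_mul_pow_two_mul
    (mul_nonneg (pow_nonneg ht.1.le m) (neg_nonneg.2 (Real.log_nonpos ht.1.le ht.2.le))) ht).symm

theorem oddSum_one_div_rpow_ne_top {s : ℝ} (hs : 1 < s) :
    oddSum (fun p => ENNReal.ofReal (1 / p ^ s)) ≠ ⊤ := by
  have summable : Summable fun n : ℕ => 1 / ((2 * n + 1 : ℕ) : ℝ) ^ s :=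
    (Real.summable_one_div_nat_rpow.2 hs).comp_injective fun a b h => by lia
  have := summable.tsum_ofReal_ne_top
  push_cast at this
  exact this

theorem oddSum_one_div_pow_ne_top {m : ℕ} (hm : 1 < m) :
    oddSum (fun p => ENNReal.ofReal (1 / p ^ m)) ≠ ⊤ := by
  simpa only [Real.rpow_natCast] using oddSum_one_div_rpow_ne_top (Nat.one_lt_cast.2 hm)

theorem two_mul_crossSum_one_add_tsum_even :
    2 * crossSum 1 + ∑' n : ℕ, ENNReal.ofReal (1 / (2 * n + 2) ^ 2) =
      oddSum fun p => ENNReal.ofReal (1 / p ^ 2) := by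
  have even_eq := lintegral_neg_log_mul_pow_div 1
  have odd_eq := lintegral_neg_log_mul_pow_div 0
  have even_term (n : ℕ) : ((1 : ℕ) : ℝ) + 2 * n + 1 = 2 * n + 2 := by push_cast; ring
  simp only [even_term] at even_eq
  simp only [Nat.cast_zero, zero_add] at odd_eq
  rw [oddSum, ← odd_eq, ← even_eq, two_mul_crossSum_one_eq_lintegral_log,
    ← lintegral_add_left (by fun_prop)]
  refine setLIntegral_congr_fun measurableSet_Ioo fun t ht => ?_
  have ht0 : 0 < t := ht.1
  have one_sub_pos : 0 < 1 - t := sub_pos.2 ht.2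
  have one_sub_sq_pos : 0 < 1 - t ^ 2 := by nlinarith
  have neg_log_nonneg : 0 ≤ -Real.log t := neg_nonneg.2 (Real.log_nonpos ht.1.le ht.2.le)
  rw [← ENNReal.ofReal_add (by positivity) (by positivity)]
  congr 1
  have factor : 1 - t ^ 2 = (1 + t) * (1 - t) := by ring
  rw [factor]
  field_simp
  ring

theorem tsum_one_div_even_sq_ne_top : ∑' n : ℕ, ENNReal.ofReal (1 / (2 * n + 2) ^ 2) ≠ ⊤ :=
  ne_top_of_le_ne_top (oddSum_one_div_pow_ne_top one_lt_two) <|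
    ENNReal.tsum_le_tsum fun n => ENNReal.ofReal_le_ofReal <| by gcongr; norm_num

theorem three_mul_tsum_one_div_even_sq :
    3 * ∑' n : ℕ, ENNReal.ofReal (1 / (2 * n + 2) ^ 2) =
      oddSum fun p => ENNReal.ofReal (1 / p ^ 2) := by
  let f : ℕ → ℝ≥0∞ := fun n => ENNReal.ofReal (1 / ((n : ℝ) + 1) ^ 2)
  have even_term (n : ℕ) : f (2 * n + 1) = ENNReal.ofReal (1 / (2 * n + 2) ^ 2) := by
    simp only [f]
    push_cast
    rw [add_assoc, one_add_one_eq_two]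
  have odd_term (n : ℕ) : f (2 * n) = ENNReal.ofReal (1 / (2 * n + 1) ^ 2) := by
    simp only [f]
    push_cast
    rfl
  have four_mul_even_term (n : ℕ) : 4 * ENNReal.ofReal (1 / (2 * n + 2) ^ 2) = f n := by
    rw [← ENNReal.ofReal_ofNat, ← ENNReal.ofReal_mul (by positivity)]
    simp only [f]
    congr 1
    field_simp
    ring
  have split := tsum_even_add_odd (f := f) ENNReal.summable ENNReal.summable
  simp only [odd_term, even_term, ← four_mul_even_term, ENNReal.tsum_mul_left] at split
  rw [← three_add_one_eq_four, add_mul, one_mul] at split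
  exact ((ENNReal.add_left_inj tsum_one_div_even_sq_ne_top).1 split).symm

theorem three_mul_crossSum_one :
    3 * crossSum 1 = oddSum fun p => ENNReal.ofReal (1 / p ^ 2) := by
  have two_mul_eq : 2 * crossSum 1 = 2 * ∑' n : ℕ, ENNReal.ofReal (1 / (2 * n + 2) ^ 2) := by
    refine (ENNReal.add_left_inj tsum_one_div_even_sq_ne_top).1 ?_
    rw [two_mul_crossSum_one_add_tsum_even, ← three_mul_tsum_one_div_even_sq,
      ← two_add_one_eq_three, add_mul, one_mul]
  rw [← three_mul_tsum_one_div_even_sq,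
    (ENNReal.mul_right_inj two_ne_zero ENNReal.ofNat_ne_top).1 two_mul_eq]

/-! ### Telescoping -/

theorem hasSum_sub_shift {g : ℕ → ℝ} (hg : Antitone g) (h0 : Filter.Tendsto g Filter.atTop (nhds 0))
    (N : ℕ) : HasSum (fun n => g n - g (n + N)) (∑ i ∈ Finset.range N, g i) := by
  rw [hasSum_iff_tendsto_nat_of_nonneg fun n => sub_nonneg.2 (hg (Nat.le_add_right n N))]
  have partial_sum (n : ℕ) : ∑ i ∈ Finset.range n, (g i - g (i + N)) =
      ∑ i ∈ Finset.range N, g i - ∑ i ∈ Finset.range N, g (n + i) := by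
    rw [Finset.sum_sub_distrib, sub_eq_sub_iff_add_eq_add, ← Finset.sum_range_add, add_comm n N,
      Finset.sum_range_add, add_right_inj]
    simp only [add_comm N]
  have tail : Filter.Tendsto (fun n => ∑ i ∈ Finset.range N, g (n + i)) Filter.atTop (nhds 0) := by
    simpa only [Finset.sum_const_zero, Function.comp_apply] using
      tendsto_finsetSum (Finset.range N) fun i _ => h0.comp (Filter.tendsto_add_atTop_nat i)
  simpa only [partial_sum, sub_zero] using tail.const_sub (∑ i ∈ Finset.range N, g i)

theorem oddSum_sub_shift {x : ℝ} (hx : 0 ≤ x) (N : ℕ) :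
    oddSum (fun r => ENNReal.ofReal (1 / (x + r) - 1 / (x + r + 2 * N))) =
      ENNReal.ofReal (∑ i ∈ Finset.range N, 1 / (x + (2 * i + 1))) := by
  let g : ℕ → ℝ := fun n => 1 / (x + (2 * n + 1))
  have g_antitone : Antitone g := fun m n hmn => by simp only [g]; gcongr
  have g_tendsto : Filter.Tendsto g Filter.atTop (nhds 0) := by
    refine Filter.Tendsto.const_div_atTop (Filter.tendsto_atTop_add_const_left _ _ <|
      Filter.tendsto_atTop_add_const_right _ _ ?_) 1
    exact tendsto_natCast_atTop_atTop.const_mul_atTop two_pos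
  rw [← tsum_ofReal_eq_ofReal (hasSum_sub_shift g_antitone g_tendsto N)
    fun n => sub_nonneg.2 (g_antitone (Nat.le_add_right n N))]
  refine tsum_congr fun n => ?_
  simp only [g]
  push_cast
  ring_nf

theorem oddSum_one_div_mul_add (d : ℕ) :
    oddSum (fun q => ENNReal.ofReal (1 / (q * (q + 2 * (d + 1))))) =
      ∑ i ∈ Finset.range (d + 1), ENNReal.ofReal (1 / ((2 * i + 1) * (2 * (d + 1)))) := by
  have term_eq (q : ℝ) (hq : 1 ≤ q) : ENNReal.ofReal (1 / (q * (q + 2 * (d + 1)))) =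
      ENNReal.ofReal (1 / (2 * (d + 1))) *
        ENNReal.ofReal (1 / (0 + q) - 1 / (0 + q + 2 * (d + 1 : ℕ))) := by
    rw [← ENNReal.ofReal_mul (by positivity)]
    push_cast
    congr 1
    field_simp
    ring
  rw [oddSum_congr term_eq, oddSum_mul_left, oddSum_sub_shift le_rfl,
    ← ENNReal.ofReal_mul (by positivity), Finset.mul_sum,
    ENNReal.ofReal_sum_of_nonneg fun i _ => by positivity]
  refine Finset.sum_congr rfl fun i _ => ?_
  rw [zero_add, one_div_mul_one_div, mul_comm]

theorem crossSum_add_two {x : ℝ} (hx : 0 ≤ x) :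
    crossSum (x + 2) =
      crossSum x + oddSum fun q => ENNReal.ofReal (1 / (q * (q + (x + 1)))) := by
  rw [crossSum, crossSum, ← oddSum_add]
  refine oddSum_congr fun q hq => ?_
  have telescope : ENNReal.ofReal (1 / (q * (q + (x + 1)))) =
      oddSum fun r => ENNReal.ofReal (1 / q * (1 / (q + r + x) - 1 / (q + r + (x + 2)))) := by
    have factor (r : ℝ) :
        ENNReal.ofReal (1 / q * (1 / (q + r + x) - 1 / (q + r + (x + 2)))) =
          ENNReal.ofReal (1 / q) *
            ENNReal.ofReal (1 / (q + x + r) - 1 / (q + x + r + 2 * (1 : ℕ))) := by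
      rw [← ENNReal.ofReal_mul (by positivity), Nat.cast_one, mul_one]
      ring_nf
    simp only [factor]
    rw [oddSum_mul_left, oddSum_sub_shift (by positivity), ← ENNReal.ofReal_mul (by positivity),
      Finset.sum_range_one, one_div_mul_one_div]
    push_cast
    ring_nf
  rw [telescope, ← oddSum_add]
  refine oddSum_congr fun r hr => ?_
  rw [← ENNReal.ofReal_add, ← mul_add, sub_add_sub_cancel]
  all_goals exact mul_nonneg (by positivity) <| sub_nonneg.2 <|
    one_div_le_one_div_of_le (by positivity) (by linarith)

theorem crossSum_two_mul_add_one (a : ℕ) :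
    crossSum (2 * a + 1) = crossSum 1 + ∑ d ∈ Finset.range a, ∑ i ∈ Finset.range (d + 1),
      ENNReal.ofReal (1 / ((2 * i + 1) * (2 * (d + 1)))) := by
  induction a with
  | zero => simp only [Nat.cast_zero, mul_zero, zero_add, Finset.sum_range_zero, add_zero]
  | succ a ih =>
    have shift : (2 * (a + 1 : ℕ) + 1 : ℝ) = 2 * a + 1 + 2 := by push_cast; ring
    have gap : (2 * a + 1 + 1 : ℝ) = 2 * (a + 1) := by ring
    rw [shift, crossSum_add_two (by positivity), ih, Finset.sum_range_succ, gap,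
      oddSum_one_div_mul_add, add_assoc]

theorem tsum_tsum_add (f : ℕ → ℕ → ℝ≥0∞) :
    ∑' b, ∑' c, f (b + c) c = ∑' d, ∑ i ∈ Finset.range (d + 1), f d i := by
  rw [← ENNReal.tsum_prod, ← Finset.HasAntidiagonal.sigmaAntidiagonalEquivProd.tsum_eq,
    ENNReal.tsum_sigma']
  refine tsum_congr fun d => ?_
  rw [tsum_fintype, ← Finset.Nat.sum_antidiagonal_eq_sum_range_succ (fun i _ => f d i),
    ← Finset.Nat.sum_antidiagonal_swap]
  refine (Finset.sum_coe_sort (antidiagonal d) fun p => f (p.1 + p.2) p.2).trans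
    (Finset.sum_congr rfl fun p hp => ?_)
  rw [mem_antidiagonal.1 hp]
  rfl

theorem oddSum_oddSum_add (f : ℝ → ℝ → ℝ≥0∞) :
    oddSum (fun q => oddSum fun r => f (q + r) r) =
      ∑' d : ℕ, ∑ i ∈ Finset.range (d + 1), f (2 * (d + 1)) (2 * i + 1) := by
  rw [← tsum_tsum_add fun d i => f (2 * (d + 1)) (2 * i + 1)]
  refine tsum_congr fun b => tsum_congr fun c => ?_
  push_cast
  ring_nf

theorem oddSum_tsum_add (f : ℝ → ℕ → ℝ≥0∞) :
    oddSum (fun p => ∑' d : ℕ, f (p + 2 * (d + 1)) d) =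
      ∑' a : ℕ, ∑ d ∈ Finset.range a, f (2 * a + 1) d := by
  rw [tsum_eq_zero_add' (f := fun a : ℕ => ∑ d ∈ Finset.range a, f (2 * a + 1) d)
      ENNReal.summable, Finset.sum_range_zero, zero_add,
    ← tsum_tsum_add fun a d => f (2 * (a + 1 : ℕ) + 1) d]
  refine tsum_congr fun b => tsum_congr fun c => ?_
  push_cast
  ring_nf

theorem rightPart_eq_tsum_mul (n : ℕ) :
    rightPart n = ∑' a : ℕ, ENNReal.ofReal (1 / (2 * a + 1) ^ (n + 2)) *
      ∑ d ∈ Finset.range a, ∑ i ∈ Finset.range (d + 1),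
        ENNReal.ofReal (1 / ((2 * i + 1) * (2 * (d + 1)))) := by
  have split (p q r : ℝ) (hp : 1 ≤ p) (hq : 1 ≤ q) (hr : 1 ≤ r) :
      ENNReal.ofReal (1 / ((p + q + r) ^ (n + 2) * r * (q + r))) =
        ENNReal.ofReal (1 / (p + (q + r)) ^ (n + 2)) * ENNReal.ofReal (1 / (r * (q + r))) := by
    rw [← ENNReal.ofReal_mul (by positivity), one_div_mul_one_div, add_assoc, mul_assoc]
  rw [rightPart, oddSum₃]
  simp only [Finset.mul_sum]
  rw [← oddSum_tsum_add fun z d => ∑ i ∈ Finset.range (d + 1),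
    ENNReal.ofReal (1 / z ^ (n + 2)) * ENNReal.ofReal (1 / ((2 * i + 1) * (2 * (d + 1))))]
  refine oddSum_congr fun p hp => ?_
  rw [← oddSum_oddSum_add fun y r =>
    ENNReal.ofReal (1 / (p + y) ^ (n + 2)) * ENNReal.ofReal (1 / (r * y))]
  exact oddSum_congr fun q hq => oddSum_congr fun r hr => split p q r hp hq hr

theorem leftPart_eq_crossSum_one_mul_add (n : ℕ) :
    leftPart n =
      crossSum 1 * oddSum (fun p => ENNReal.ofReal (1 / p ^ (n + 2))) + rightPart n := by
  have split (p q r : ℝ) (hp : 1 ≤ p) (hq : 1 ≤ q) (hr : 1 ≤ r) :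
      ENNReal.ofReal (1 / (p ^ (n + 1) * q * (q + r) * (p + q + r))) =
        ENNReal.ofReal (1 / p ^ (n + 2)) *
          ENNReal.ofReal (1 / q * (1 / (q + r) - 1 / (q + r + p))) := by
    rw [← ENNReal.ofReal_mul (by positivity)]
    congr 1
    field_simp
    ring
  have leftPart_eq_oddSum : leftPart n =
      oddSum fun p => ENNReal.ofReal (1 / p ^ (n + 2)) * crossSum p := by
    rw [leftPart, oddSum₃]
    refine oddSum_congr fun p hp => ?_
    simp only [crossSum, ← oddSum_mul_left]
    exact oddSum_congr fun q hq => oddSum_congr fun r hr => split p q r hp hq hr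
  rw [leftPart_eq_oddSum, rightPart_eq_tsum_mul, ← oddSum_mul_left, oddSum, oddSum,
    ← ENNReal.tsum_add]
  refine tsum_congr fun a => ?_
  rw [crossSum_two_mul_add_one, mul_add, mul_comm (crossSum 1)]

/-! ### Convergence and the sum formula -/

theorem rpow_mul_rpow_le {x y s a b : ℝ} (hx : 0 ≤ x) (hy : 0 ≤ y) (hxs : x ≤ s) (hys : y ≤ s)
    (ha : 0 ≤ a) (hb : 0 ≤ b) (hab : a + b = 1) : x ^ a * y ^ b ≤ s := by
  have hs : 0 ≤ s := hx.trans hxs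
  calc x ^ a * y ^ b ≤ s ^ a * s ^ b := by gcongr
    _ = s := by rw [← Real.rpow_add_of_nonneg hs ha hb, hab, Real.rpow_one]

theorem one_div_middlePart_summand_le {p q r : ℝ} (hp : 1 ≤ p) (hq : 1 ≤ q) (hr : 1 ≤ r) (n : ℕ) :
    1 / ((p + q) ^ (n + 1) * q * r * (p + q + r)) ≤
      1 / r ^ (4 / 3 : ℝ) * (1 / q ^ (4 / 3 : ℝ)) * (1 / p ^ (4 / 3 : ℝ)) := by
  have rpow_four_thirds {x : ℝ} (hx : 0 < x) : x ^ (4 / 3 : ℝ) = x * x ^ (1 / 3 : ℝ) := by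
    rw [mul_comm, ← Real.rpow_add_one hx.ne']
    norm_num
  have rpow_four_thirds' {x : ℝ} (hx : 0 < x) :
      x ^ (4 / 3 : ℝ) = x ^ (2 / 3 : ℝ) * x ^ (2 / 3 : ℝ) := by
    rw [← Real.rpow_add hx]
    norm_num
  rw [one_div_mul_one_div, one_div_mul_one_div]
  refine one_div_le_one_div_of_le (by positivity) ?_
  -- The weights `2 / 3` and `1 / 3` give each of `p`, `q`, `r` the same total exponent `4 / 3 > 1`.
  calc r ^ (4 / 3 : ℝ) * q ^ (4 / 3 : ℝ) * p ^ (4 / 3 : ℝ)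
      = p ^ (2 / 3 : ℝ) * q ^ (1 / 3 : ℝ) * q * r * (p ^ (2 / 3 : ℝ) * r ^ (1 / 3 : ℝ)) := by
        rw [rpow_four_thirds' (x := p) (by positivity), rpow_four_thirds (x := q) (by positivity),
          rpow_four_thirds (x := r) (by positivity)]
        ring
    _ ≤ (p + q) * q * r * (p + q + r) := by
        gcongr <;> exact rpow_mul_rpow_le (by positivity) (by positivity) (by linarith)
          (by linarith) (by norm_num) (by norm_num) (by norm_num)
    _ ≤ (p + q) ^ (n + 1) * q * r * (p + q + r) := by
        gcongr
        exact le_self_pow₀ (by linarith) n.succ_ne_zero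

theorem middlePart_ne_top (n : ℕ) : middlePart n ≠ ⊤ := by
  have bound : oddSum₃ (fun p q r =>
      1 / r ^ (4 / 3 : ℝ) * (1 / q ^ (4 / 3 : ℝ)) * (1 / p ^ (4 / 3 : ℝ))) =
        (oddSum fun p => ENNReal.ofReal (1 / p ^ (4 / 3 : ℝ))) ^ 3 := by
    simp only [oddSum₃, pow_succ _ 2, sq, ← oddSum_mul_left, ← oddSum_mul_right]
    refine oddSum_congr fun p _ => oddSum_congr fun q hq => oddSum_congr fun r hr => ?_
    rw [← ENNReal.ofReal_mul (by positivity), ← ENNReal.ofReal_mul (by positivity)]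
  refine ne_top_of_le_ne_top ?_
    (oddSum₃_le_oddSum₃ fun p q r hp hq hr => one_div_middlePart_summand_le hp hq hr n)
  rw [bound]
  exact ENNReal.pow_ne_top (oddSum_one_div_rpow_ne_top (by norm_num))

theorem sum_tripleT_add_sum_tripleT_one (n : ℕ) :
    ∑ i ∈ antidiagonal n, ∑ j ∈ antidiagonal i.2, tripleT (j.1 + 1) (j.2 + 1) (i.1 + 2) +
        ∑ i ∈ antidiagonal n, tripleT 1 (i.2 + 1) (i.1 + 2) =
      crossSum 1 * oddSum fun p => ENNReal.ofReal (1 / p ^ (n + 2)) := by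
  have right_ne_top : 2 * rightPart n ≠ ⊤ :=
    ne_top_of_le_ne_top (middlePart_ne_top n)
      (le_add_self.trans_eq (sum_tripleT_one_add_two_mul_rightPart n))
  refine (ENNReal.add_left_inj (middlePart_ne_top n)).1 <|
    (ENNReal.add_left_inj right_ne_top).1 ?_
  calc _ = (∑ i ∈ antidiagonal n, ∑ j ∈ antidiagonal i.2,
            tripleT (j.1 + 1) (j.2 + 1) (i.1 + 2) + middlePart n) +
          (∑ i ∈ antidiagonal n, tripleT 1 (i.2 + 1) (i.1 + 2) + 2 * rightPart n) := by
        ac_rfl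
    _ = _ := by
        rw [sum_tripleT_add_middlePart, sum_tripleT_one_add_two_mul_rightPart,
          leftPart_eq_crossSum_one_mul_add]
        ring

theorem toReal_sum_tripleT (n : ℕ) :
    ∑ i ∈ antidiagonal n, ∑ j ∈ antidiagonal i.2,
        (tripleT (j.1 + 1) (j.2 + 1) (i.1 + 2)).toReal +
      ∑ i ∈ antidiagonal n, (tripleT 1 (i.2 + 1) (i.1 + 2)).toReal =
      1 / 3 * (oddSum fun p => ENNReal.ofReal (1 / p ^ 2)).toReal *
        (oddSum fun p => ENNReal.ofReal (1 / p ^ (n + 2))).toReal := by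
  have cross_eq := congrArg ENNReal.toReal three_mul_crossSum_one
  rw [ENNReal.toReal_mul, ENNReal.toReal_ofNat] at cross_eq
  have cross_ne_top : crossSum 1 ≠ ⊤ :=
    ne_top_of_le_ne_top (oddSum_one_div_pow_ne_top one_lt_two) <|
      three_mul_crossSum_one ▸ le_mul_of_one_le_left' (by norm_num)
  have sum_ne_top := ENNReal.mul_ne_top cross_ne_top
    (oddSum_one_div_pow_ne_top (m := n + 2) (by omega))
  rw [← sum_tripleT_add_sum_tripleT_one, ENNReal.add_ne_top] at sum_ne_top
  have inner_ne_top := ENNReal.sum_ne_top.1 sum_ne_top.1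
  rw [← cross_eq, one_div, inv_mul_cancel_left₀ three_ne_zero, ← ENNReal.toReal_mul,
    ← sum_tripleT_add_sum_tripleT_one, ENNReal.toReal_add sum_ne_top.1 sum_ne_top.2,
    ENNReal.toReal_sum inner_ne_top, ENNReal.toReal_sum (ENNReal.sum_ne_top.1 sum_ne_top.2)]
  congr 1
  exact Finset.sum_congr rfl fun i hi =>
    (ENNReal.toReal_sum (ENNReal.sum_ne_top.1 (inner_ne_top i hi))).symm

theorem sum_Icc_two_eq_sum_antidiagonal {M : Type*} [AddCommMonoid M] (f : ℕ → ℕ → M) (n : ℕ) :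
    ∑ j ∈ Finset.Icc 2 (n + 2), f (n + 3 - j) j =
      ∑ i ∈ antidiagonal n, f (i.2 + 1) (i.1 + 2) := by
  refine Finset.sum_nbij' (fun j => (j - 2, n + 2 - j)) (fun i => i.1 + 2) ?_ ?_ ?_ ?_ ?_
  · intro j hj
    rw [Finset.mem_Icc] at hj
    rw [mem_antidiagonal]
    omega
  · intro i hi
    rw [mem_antidiagonal] at hi
    rw [Finset.mem_Icc]
    omega
  · intro j hj
    rw [Finset.mem_Icc] at hj
    exact Nat.sub_add_cancel hj.1
  · intro i hi
    rw [mem_antidiagonal] at hi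
    ext <;> dsimp only <;> omega
  · intro j hj
    rw [Finset.mem_Icc] at hj
    congr 1 <;> omega

theorem sum_compositions_eq_sum_antidiagonal {M : Type*} [AddCommMonoid M]
    (f : ℕ → ℕ → ℕ → M) (n : ℕ) :
    ∑ p ∈ (Finset.Icc 1 (n + 4) ×ˢ Finset.Icc 1 (n + 4) ×ˢ Finset.Icc 2 (n + 4)).filter
        (fun p => p.1 + p.2.1 + p.2.2 = n + 4), f p.1 p.2.1 p.2.2 =
      ∑ i ∈ antidiagonal n, ∑ j ∈ antidiagonal i.2, f (j.1 + 1) (j.2 + 1) (i.1 + 2) := by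
  rw [Finset.sum_sigma']
  refine Finset.sum_nbij'
    (fun p => ⟨(p.2.2 - 2, p.1 - 1 + (p.2.1 - 1)), (p.1 - 1, p.2.1 - 1)⟩)
    (fun t => (t.2.1 + 1, t.2.2 + 1, t.1.1 + 2)) ?_ ?_ ?_ ?_ ?_
  · rintro ⟨a, b, c⟩ hp
    simp only [Finset.mem_filter, Finset.mem_product, Finset.mem_Icc] at hp
    simp only [Finset.mem_sigma, mem_antidiagonal, and_true]
    omega
  · rintro ⟨⟨c, m⟩, ⟨a, b⟩⟩ ht
    simp only [Finset.mem_sigma, mem_antidiagonal] at ht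
    simp only [Finset.mem_filter, Finset.mem_product, Finset.mem_Icc]
    omega
  · rintro ⟨a, b, c⟩ hp
    simp only [Finset.mem_filter, Finset.mem_product, Finset.mem_Icc] at hp
    simp only [Prod.mk.injEq]
    omega
  · rintro ⟨⟨c, m⟩, ⟨a, b⟩⟩ ht
    simp only [Finset.mem_sigma, mem_antidiagonal] at ht
    obtain ⟨-, rfl⟩ := ht
    rfl
  · rintro ⟨a, b, c⟩ hp
    simp only [Finset.mem_filter, Finset.mem_product, Finset.mem_Icc] at hp
    dsimp only
    congr 1 <;> omega

/-- **Theorem (sum formula in depth 3).** For every integer `k ≥ 4`,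
`∑_{a+b+c=k, a,b≥1, c≥2} T(a,b,c) + ∑_{j=2}^{k−2} T(1, k−1−j, j) = (2/3) T(2) T(k−2)`. -/
theorem MTV_sum_depth3 (k : ℕ) (hk : 4 ≤ k) :
    (∑ p ∈ (Finset.Icc 1 k ×ˢ Finset.Icc 1 k ×ˢ Finset.Icc 2 k).filter
        (fun p => p.1 + p.2.1 + p.2.2 = k), MTV [p.1, p.2.1, p.2.2])
      + ∑ j ∈ Finset.Icc 2 (k - 2), MTV [1, k - 1 - j, j]
      = 2 / 3 * MTV [2] * MTV [k - 2] := by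
  obtain ⟨n, rfl⟩ := Nat.exists_eq_add_of_le' hk
  have singles : ∑ j ∈ Finset.Icc 2 (n + 4 - 2), MTV [1, n + 4 - 1 - j, j] =
      ∑ i ∈ antidiagonal n, MTV [1, i.2 + 1, i.1 + 2] :=
    sum_Icc_two_eq_sum_antidiagonal (fun b c => MTV [1, b, c]) n
  rw [singles, sum_compositions_eq_sum_antidiagonal fun a b c => MTV [a, b, c]]
  simp only [MTV_triple, MTV_singleton_s4, ← Finset.mul_sum, ← mul_add]
  have exponent : n + 4 - 2 = n + 2 := rfl
  rw [toReal_sum_tripleT, exponent]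
  ring
end

section
/- Depth-2 parity formula: for integers p ≥ 1 and q ≥ 2 with p + q odd, one has (−1)^q · T(p,q) = C(p+q−1, q) · T(p+q) − ∑_{μ=1, μ≡q (mod 2)}^{q−2} C(p+μ−1, μ) · (1/(2^{q−μ} − 1)) · T(p+μ) · T(q−μ) − ∑_{μ=0, μ≡p (mod 2)}^{p−2} C(q+μ−1, μ) · T(p−μ) · T(q+μ), where C(n,k) denotes the binomial coefficient. -/
/-!
Write `a n = 1 / (2 * n)` and `b z = 1 / (2 * z + 1)`, with `a 0 = 0`, and evaluate the absolutely
convergent sum of `a n ^ q * (b (l - n) ^ p - b l ^ p)` over `n : ℤ` and `l : ℕ` in two ways.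

For fixed `n` the sum over `l` telescopes to a partial sum of powers of `b`, and since `b` is odd
under `z ↦ -1 - z` the rows `n` and `-n` together contribute `(-1) ^ p - (-1) ^ q` times a term of
`T(p, q)`. For fixed `l`, expand in partial fractions by means of
`a n * b (l - n) = b l * (a n + b (l - n))`; summed over symmetric ranges, the odd powers of `a` and
`b` cancel and the even ones give single T-values. The factor `1 / (2 ^ (q - μ) - 1)` converts sums
over even integers into sums over odd ones.
-/

open Filter Topology Finset SummationFilter

namespace MTV

/-! ### Partial fractions -/

section PartialFractions

variable {R : Type*} [CommSemiring R]

/-- The principal part in `X` of the partial fraction expansion of `X ^ q * Y ^ p`, where `X`, `Y`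
and `M` are reciprocals of linear forms related by `X * Y = M * (X + Y)`. -/
def principalPart (M X : R) (p q : ℕ) : R :=
  ∑ μ ∈ range q, (p.multichoose μ : R) * M ^ (p + μ) * X ^ (q - μ)

lemma principalPart_succ_succ (M X : R) (p q : ℕ) :
    principalPart M X (p + 1) (q + 1) =
      M * (principalPart M X p (q + 1) + principalPart M X (p + 1) q) := by
  have pascal (μ : ℕ) : ((p + 1).multichoose (μ + 1) : R) * M ^ (p + 1 + (μ + 1)) * X ^ (q - μ) =
      M * (p.multichoose (μ + 1) * M ^ (p + (μ + 1)) * X ^ (q - μ)) +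
        M * ((p + 1).multichoose μ * M ^ (p + 1 + μ) * X ^ (q - μ)) := by
    rw [Nat.multichoose_succ_succ]
    push_cast
    ring
  simp only [principalPart, sum_range_succ' _ q, Nat.add_sub_add_right, pascal, sum_add_distrib,
    mul_add, mul_sum, Nat.multichoose_zero_right]
  ring

lemma principalPart_zero_left (M X : R) (q : ℕ) : principalPart M X 0 (q + 1) = X ^ (q + 1) := by
  simp [principalPart, sum_range_succ']

lemma principalPart_zero_right (M X : R) (p : ℕ) : principalPart M X p 0 = 0 := by
  simp [principalPart]

lemma pow_mul_pow_eq_principalPart_add {M X Y : R} (h : X * Y = M * (X + Y)) {p q : ℕ}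
    (hpq : 0 < p + q) : X ^ q * Y ^ p = principalPart M X p q + principalPart M Y q p := by
  induction p generalizing q with
  | zero =>
    obtain ⟨q, rfl⟩ : ∃ r, q = r + 1 := Nat.exists_eq_succ_of_ne_zero (by lia)
    simp [principalPart_zero_left, principalPart_zero_right]
  | succ p ihp =>
    induction q with
    | zero => simp [principalPart_zero_left, principalPart_zero_right]
    | succ q ihq =>
      calc X ^ (q + 1) * Y ^ (p + 1) = X ^ q * Y ^ p * (X * Y) := by ring
        _ = M * (X ^ (q + 1) * Y ^ p + X ^ q * Y ^ (p + 1)) := by rw [h]; ring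
        _ = M * (principalPart M X p (q + 1) + principalPart M X (p + 1) q) +
            M * (principalPart M Y q (p + 1) + principalPart M Y (q + 1) p) := by
          rw [ihp (by lia), ihq (by lia)]; ring
        _ = _ := by rw [principalPart_succ_succ, principalPart_succ_succ]

end PartialFractions

lemma pow_mul_pow_sub_pow_eq_sum {R : Type*} [CommRing R] {M X Y : R} (h : X * Y = M * (X + Y))
    (p : ℕ) {q : ℕ} (hq : 0 < q) :
    X ^ q * (Y ^ p - M ^ p) =
      ∑ μ ∈ Ico 1 q, (p.multichoose μ : R) * M ^ (p + μ) * X ^ (q - μ) +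
        ∑ μ ∈ range p, (q.multichoose μ : R) * M ^ (q + μ) * Y ^ (p - μ) := by
  rw [mul_sub, pow_mul_pow_eq_principalPart_add h (by lia), principalPart, principalPart,
    range_eq_Ico, sum_eq_sum_Ico_succ_bot hq]
  simp only [Nat.multichoose_zero_right, Nat.cast_one, one_mul, add_zero, Nat.sub_zero, zero_add]
  ring

lemma sum_Ico_one_add_neg_one_pow_mul {R : Type*} [CommRing R] (m : ℕ) {n : ℕ} (hn : 0 < n)
    (g : ℕ → R) :
    ∑ μ ∈ Ico m n, (1 + (-1) ^ (n - μ)) * g μ =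
      2 * ∑ μ ∈ Icc m (n - 2) with μ % 2 = n % 2, g μ := by
  rw [mul_sum]
  refine (sum_subset_zero_on_sdiff ?_ ?_ ?_).symm
  · intro μ hμ
    simp only [mem_filter, mem_Icc, mem_Ico] at hμ ⊢
    lia
  · intro μ hμ
    simp only [Finset.mem_sdiff, mem_filter, mem_Icc, mem_Ico] at hμ
    have hodd : Odd (n - μ) := Nat.odd_iff.2 (by lia)
    rw [hodd.neg_one_pow, add_neg_cancel, zero_mul]
  · intro μ hμ
    simp only [mem_filter, mem_Icc] at hμ
    have heven : Even (n - μ) := Nat.even_iff.2 (by lia)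
    rw [heven.neg_one_pow, one_add_one_eq_two]

/-! ### Summation over shifted and symmetric ranges -/

lemma sum_Ico_neg_eq_sum_range {M : Type*} [AddCommMonoid M] (f : ℤ → M) (N : ℕ) :
    ∑ n ∈ Ico (-N : ℤ) N, f n = ∑ n ∈ range N, (f n + f (-(n + 1))) := by
  induction N with
  | zero => simp
  | succ N ih =>
    rw [sum_range_succ, ← ih, Nat.cast_add_one, Ico_succ_succ, sum_union (by simp),
      sum_pair (by lia), add_comm (f _)]

lemma tendsto_natCast_cofinite : Tendsto (fun n : ℕ ↦ (n : ℤ)) atTop cofinite :=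
  Nat.cofinite_eq_atTop ▸ Nat.cast_injective.tendsto_cofinite

section Shift

variable {G : Type*} [AddCommGroup G] [TopologicalSpace G] [IsTopologicalAddGroup G]

lemma tendsto_sum_range_shift_sub {f : ℕ → G} (hf : Tendsto f atTop (𝓝 0)) (d : ℕ) :
    Tendsto (fun L ↦ ∑ l ∈ range L, (f (l + d) - f l)) atTop (𝓝 (-∑ j ∈ range d, f j)) := by
  have telescope (L : ℕ) :
      ∑ l ∈ range L, (f (l + d) - f l) = ∑ j ∈ range d, (f (j + L) - f j) := by
    have hL := sum_range_add f d L
    rw [add_comm d L, sum_range_add] at hL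
    simp only [sum_sub_distrib, add_comm _ d, add_comm _ L]
    rw [sub_eq_sub_iff_add_eq_add, add_comm, ← hL, add_comm]
  simp only [telescope, ← sum_neg_distrib]
  refine tendsto_finsetSum _ fun j _ ↦ ?_
  simpa [add_comm] using (((tendsto_add_atTop_iff_nat j).2 hf).sub_const (f j))

lemma hasSum_symmetricIco_comp_add_one_iff {f : ℤ → G} (hf : Tendsto f cofinite (𝓝 0)) {s : G} :
    HasSum (fun n ↦ f (n + 1)) s (symmetricIco ℤ) ↔ HasSum f s (symmetricIco ℤ) := by
  have hdiff : HasSum (fun n ↦ f n - f (n + 1)) 0 (symmetricIco ℤ) := by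
    rw [hasSum_symmetricIco_int_iff]
    simp_rw [sum_Ico_int_sub]
    have hcast := tendsto_natCast_cofinite
    simpa using (hf.comp (neg_injective.tendsto_cofinite.comp hcast)).sub (hf.comp hcast)
  exact ⟨fun h ↦ by simpa using h.add hdiff, fun h ↦ by simpa using h.sub hdiff⟩

/-- Along symmetric ranges the sum need not converge unconditionally, so this is not a reindexing;
the boundary terms vanish because `f` tends to zero. -/
lemma hasSum_symmetricIco_comp_add_iff {f : ℤ → G} (hf : Tendsto f cofinite (𝓝 0)) (m : ℤ) {s : G} :
    HasSum (fun n ↦ f (n + m)) s (symmetricIco ℤ) ↔ HasSum f s (symmetricIco ℤ) := by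
  have step (m : ℤ) : HasSum (fun n ↦ f (n + (m + 1))) s (symmetricIco ℤ) ↔
      HasSum (fun n ↦ f (n + m)) s (symmetricIco ℤ) := by
    simpa only [Function.comp_def, add_assoc, add_comm 1 m] using
      hasSum_symmetricIco_comp_add_one_iff (hf.comp (add_left_injective m).tendsto_cofinite)
        (s := s)
  induction m using Int.induction_on with
  | zero => simp
  | succ m ih => exact (step _).trans ih
  | pred m ih =>
    have step' := (step (-m - 1)).symm
    rw [sub_add_cancel] at step'
    exact step'.trans ih

end Shift

/-- By AM-GM applied to the three products `(a * b) ^ (3 / 2)`, `(b * c) ^ (3 / 2)` and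
`(a * c) ^ (3 / 2)`. -/
lemma mul_mul_le_sum_rpow_mul_rpow {a b c : ℝ} (ha : 0 ≤ a) (hb : 0 ≤ b) (hc : 0 ≤ c) :
    a * b * c ≤ a ^ (3 / 2 : ℝ) * b ^ (3 / 2 : ℝ) + b ^ (3 / 2 : ℝ) * c ^ (3 / 2 : ℝ) +
      a ^ (3 / 2 : ℝ) * c ^ (3 / 2 : ℝ) := by
  have rpow_eq {x : ℝ} (hx : 0 ≤ x) : x ^ (3 / 2 : ℝ) = √x ^ 3 := by
    rw [Real.sqrt_eq_rpow, ← Real.rpow_mul_natCast hx]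
    norm_num
  rw [rpow_eq ha, rpow_eq hb, rpow_eq hc]
  calc a * b * c = (√a * √b) * (√b * √c) * (√a * √c) := by
        nth_rewrite 1 [← Real.sq_sqrt ha, ← Real.sq_sqrt hb, ← Real.sq_sqrt hc]
        ring
    _ ≤ (√a * √b) ^ 3 + (√b * √c) ^ 3 + (√a * √c) ^ 3 := by
        have hx : 0 ≤ √a * √b := by positivity
        have hy : 0 ≤ √b * √c := by positivity
        have hz : 0 ≤ √a * √c := by positivity
        generalize √a * √b = x, √b * √c = y, √a * √c = z at *
        nlinarith [mul_nonneg (add_nonneg (add_nonneg hx hy) hz)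
          (add_nonneg (add_nonneg (sq_nonneg (x - y)) (sq_nonneg (y - z))) (sq_nonneg (z - x))),
          mul_nonneg (mul_nonneg hx hy) hz]
    _ = _ := by simp only [mul_pow]

lemma summable_mul_sub_mul {G : Type*} [AddGroup G] {f g h : G → ℝ} (hf₀ : 0 ≤ f) (hg₀ : 0 ≤ g)
    (hh₀ : 0 ≤ h) (hf : Summable fun x ↦ f x ^ (3 / 2 : ℝ))
    (hg : Summable fun x ↦ g x ^ (3 / 2 : ℝ)) (hh : Summable fun x ↦ h x ^ (3 / 2 : ℝ)) :
    Summable fun x : G × G ↦ f x.1 * g (x.2 - x.1) * h x.2 := by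
  have rpow_nonneg {u : G → ℝ} (hu : 0 ≤ u) : 0 ≤ fun x ↦ u x ^ (3 / 2 : ℝ) :=
    fun x ↦ Real.rpow_nonneg (hu x) _
  have hfg := (hf.mul_of_nonneg hg (rpow_nonneg hf₀) (rpow_nonneg hg₀)).comp_injective
    (i := fun x : G × G ↦ (x.1, x.2 - x.1)) fun x y hxy ↦ by
      simp only [Prod.mk.injEq] at hxy
      exact Prod.ext hxy.1 (sub_left_injective (hxy.1 ▸ hxy.2))
  have hgh := (hg.mul_of_nonneg hh (rpow_nonneg hg₀) (rpow_nonneg hh₀)).comp_injective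
    (i := fun x : G × G ↦ (x.2 - x.1, x.2)) fun x y hxy ↦ by
      simp only [Prod.mk.injEq] at hxy
      exact Prod.ext (sub_right_injective (hxy.2 ▸ hxy.1)) hxy.2
  have hfh := hf.mul_of_nonneg hh (rpow_nonneg hf₀) (rpow_nonneg hh₀)
  exact ((hfg.add hgh).add hfh).of_nonneg_of_le
    (fun x ↦ mul_nonneg (mul_nonneg (hf₀ _) (hg₀ _)) (hh₀ _))
    (fun x ↦ mul_mul_le_sum_rpow_mul_rpow (hf₀ _) (hg₀ _) (hh₀ _))

/-! ### Reciprocals of even and odd integers -/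

/-- The reciprocal of the even integer `2 * n`, with the value `0` at `n = 0`. -/
noncomputable def evenRecip (n : ℤ) : ℝ := ((2 * n : ℤ) : ℝ)⁻¹

/-- The reciprocal of the odd integer `2 * z + 1`. -/
noncomputable def oddRecip (z : ℤ) : ℝ := ((2 * z + 1 : ℤ) : ℝ)⁻¹

lemma evenRecip_zero : evenRecip 0 = 0 := by simp [evenRecip]

lemma evenRecip_neg (n : ℤ) : evenRecip (-n) = -evenRecip n := by
  simp [evenRecip, inv_neg]

lemma oddRecip_neg_add_one (z : ℤ) : oddRecip (-(z + 1)) = -oddRecip z := by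
  rw [oddRecip, oddRecip, ← inv_neg, ← Int.cast_neg]
  congr 2
  ring

lemma oddRecip_sub_oddRecip (z w : ℤ) :
    oddRecip z - oddRecip w = (2 * (w - z) : ℤ) * oddRecip z * oddRecip w := by
  have hz : ((2 * z + 1 : ℤ) : ℝ) ≠ 0 := Int.cast_ne_zero.2 (by lia)
  have hw : ((2 * w + 1 : ℤ) : ℝ) ≠ 0 := Int.cast_ne_zero.2 (by lia)
  rw [oddRecip, oddRecip, inv_sub_inv hz hw, div_eq_mul_inv, mul_inv]
  push_cast
  ring

lemma evenRecip_mul_cancel {n : ℤ} (hn : n ≠ 0) : evenRecip n * (2 * n : ℤ) = 1 :=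
  inv_mul_cancel₀ (Int.cast_ne_zero.2 (by lia))

lemma evenRecip_mul_oddRecip_sub {n : ℤ} (hn : n ≠ 0) (l : ℤ) :
    evenRecip n * oddRecip (l - n) = oddRecip l * (evenRecip n + oddRecip (l - n)) := by
  have hsub := oddRecip_sub_oddRecip (l - n) l
  rw [sub_sub_cancel] at hsub
  linear_combination evenRecip n * hsub +
    oddRecip (l - n) * oddRecip l * evenRecip_mul_cancel hn

lemma abs_intCast_inv_le_one (n : ℤ) : |(n : ℝ)⁻¹| ≤ 1 := by
  rcases eq_or_ne n 0 with rfl | hn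
  · simp
  · rw [abs_inv, ← Int.cast_abs]
    exact inv_le_one_of_one_le₀ (mod_cast Int.one_le_abs hn)

lemma abs_evenRecip_le_one (n : ℤ) : |evenRecip n| ≤ 1 := abs_intCast_inv_le_one _

lemma abs_oddRecip_le_one (z : ℤ) : |oddRecip z| ≤ 1 := abs_intCast_inv_le_one _

lemma tendsto_intCast_inv_cofinite : Tendsto (fun n : ℤ ↦ (n : ℝ)⁻¹) cofinite (𝓝 0) := by
  have h := Int.tendsto_coe_cofinite
  rw [← Metric.cobounded_eq_cocompact] at h
  exact tendsto_inv₀_cobounded.comp h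

lemma two_mul_injective : Function.Injective fun n : ℤ ↦ 2 * n := fun _ _ h ↦ by lia

lemma two_mul_add_one_injective : Function.Injective fun n : ℤ ↦ 2 * n + 1 := fun _ _ h ↦ by lia

lemma tendsto_evenRecip_cofinite : Tendsto evenRecip cofinite (𝓝 0) :=
  tendsto_intCast_inv_cofinite.comp two_mul_injective.tendsto_cofinite

lemma tendsto_oddRecip_cofinite : Tendsto oddRecip cofinite (𝓝 0) :=
  tendsto_intCast_inv_cofinite.comp two_mul_add_one_injective.tendsto_cofinite

lemma tendsto_oddRecip_pow_cofinite {j : ℕ} (hj : j ≠ 0) :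
    Tendsto (fun z ↦ oddRecip z ^ j) cofinite (𝓝 0) := by
  simpa [hj] using tendsto_oddRecip_cofinite.pow j

lemma summable_abs_intCast_inv_rpow {s : ℝ} (hs : 1 < s) :
    Summable fun n : ℤ ↦ |(n : ℝ)⁻¹| ^ s := by
  refine (Real.summable_abs_int_rpow hs).congr fun n ↦ ?_
  rw [abs_inv, Real.inv_rpow (abs_nonneg _), Real.rpow_neg (abs_nonneg _)]

lemma summable_abs_evenRecip_rpow {s : ℝ} (hs : 1 < s) :
    Summable fun n ↦ |evenRecip n| ^ s :=
  (summable_abs_intCast_inv_rpow hs).comp_injective two_mul_injective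

lemma summable_abs_oddRecip_rpow {s : ℝ} (hs : 1 < s) : Summable fun z ↦ |oddRecip z| ^ s :=
  (summable_abs_intCast_inv_rpow hs).comp_injective two_mul_add_one_injective

lemma summable_evenRecip_pow {j : ℕ} (hj : 1 < j) : Summable fun n ↦ evenRecip n ^ j :=
  .of_abs <| by
    simpa [abs_pow] using summable_abs_evenRecip_rpow (s := j) (by exact_mod_cast hj)

lemma summable_oddRecip_pow {j : ℕ} (hj : 1 < j) : Summable fun z ↦ oddRecip z ^ j :=
  .of_abs <| by
    simpa [abs_pow] using summable_abs_oddRecip_rpow (s := j) (by exact_mod_cast hj)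

/-- The sum of the `j`-th powers of the reciprocals of the positive even integers, for `j ≠ 0`: the
term `k = 0` then vanishes. -/
noncomputable def evenSum (j : ℕ) : ℝ := ∑' k : ℕ, evenRecip k ^ j

/-- The sum of the `j`-th powers of the reciprocals of the positive odd integers. -/
noncomputable def oddSum (j : ℕ) : ℝ := ∑' k : ℕ, oddRecip k ^ j

lemma hasSum_evenSum {j : ℕ} (hj : 1 < j) : HasSum (fun k : ℕ ↦ evenRecip k ^ j) (evenSum j) :=
  ((summable_evenRecip_pow hj).comp_injective Nat.cast_injective).hasSum

lemma hasSum_oddSum {j : ℕ} (hj : 1 < j) : HasSum (fun k : ℕ ↦ oddRecip k ^ j) (oddSum j) :=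
  ((summable_oddRecip_pow hj).comp_injective Nat.cast_injective).hasSum

lemma evenSum_eq_mul_oddSum {j : ℕ} (hj : 1 < j) : evenSum j = 1 / (2 ^ j - 1) * oddSum j := by
  have hzeta : ∑' n : ℕ, ((n : ℝ)⁻¹) ^ j = 2 ^ j * evenSum j := by
    rw [evenSum, ← tsum_mul_left]
    refine tsum_congr fun n ↦ ?_
    rw [evenRecip, ← mul_pow]
    push_cast
    rw [mul_inv, mul_inv_cancel_left₀ two_ne_zero]
  have hsplit : evenSum j + oddSum j = ∑' n : ℕ, ((n : ℝ)⁻¹) ^ j := by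
    rw [← tsum_even_add_odd (f := fun n : ℕ ↦ ((n : ℝ)⁻¹) ^ j)]
    · simp [evenSum, oddSum, evenRecip, oddRecip]
    · simpa [evenRecip] using (hasSum_evenSum hj).summable
    · simpa [oddRecip] using (hasSum_oddSum hj).summable
  have hne : (2 : ℝ) ^ j - 1 ≠ 0 := (sub_pos.2 (one_lt_pow₀ one_lt_two (by lia))).ne'
  field_simp
  linear_combination -hzeta - hsplit

/-! ### Symmetric sums of powers of reciprocals -/

lemma hasSum_evenRecip_pow_symmetricIco {j : ℕ} (hj : j ≠ 0) :
    HasSum (fun n ↦ evenRecip n ^ j) ((1 + (-1) ^ j) * evenSum j) (symmetricIco ℤ) := by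
  rcases Nat.even_or_odd j with heven | hodd
  · have h := hasSum_evenSum (j := j) (by grind)
    have h' : HasSum (fun k : ℕ ↦ evenRecip (-k) ^ j) (evenSum j) := by
      simpa only [evenRecip_neg, heven.neg_pow] using h
    have hvalue : (1 + (-1) ^ j) * evenSum j =
        evenSum j + evenSum j - evenRecip 0 ^ j := by
      rw [heven.neg_one_pow, evenRecip_zero, zero_pow hj]
      ring
    rw [hvalue]
    exact Tendsto.mono_left (h.of_nat_of_neg h') le_atTop
  · rw [hasSum_symmetricIco_int_iff]
    simp only [sum_Ico_neg_eq_sum_range, evenRecip_neg, hodd.neg_pow, ← sub_eq_add_neg,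
      ← Nat.cast_add_one]
    simp only [sum_range_sub' (fun n : ℕ ↦ evenRecip n ^ j)]
    have hlim := (tendsto_evenRecip_cofinite.comp tendsto_natCast_cofinite).pow j
    simpa [evenRecip_zero, hj, hodd.neg_one_pow] using hlim.neg

lemma hasSum_oddRecip_pow_symmetricIco {j : ℕ} (hj : j ≠ 0) :
    HasSum (fun z ↦ oddRecip z ^ j) ((1 + (-1) ^ j) * oddSum j) (symmetricIco ℤ) := by
  have hpair (n : ℕ) : oddRecip n ^ j + oddRecip (-(n + 1)) ^ j =
      (1 + (-1) ^ j) * oddRecip n ^ j := by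
    rw [oddRecip_neg_add_one, neg_pow]
    ring
  rw [hasSum_symmetricIco_int_iff]
  simp only [sum_Ico_neg_eq_sum_range, hpair, ← mul_sum]
  rcases Nat.even_or_odd j with heven | hodd
  · exact (hasSum_oddSum (by grind)).tendsto_sum_nat.const_mul _
  · simp [hodd.neg_one_pow]

lemma hasSum_oddRecip_sub_pow_symmetricIco {j : ℕ} (hj : j ≠ 0) (l : ℤ) :
    HasSum (fun n ↦ oddRecip (l - n) ^ j) ((1 + (-1) ^ j) * oddSum j) (symmetricIco ℤ) := by
  have hreflect (n : ℤ) : oddRecip (l - n) ^ j = (-1) ^ j * oddRecip (n + (-l - 1)) ^ j := by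
    rw [← mul_pow, neg_one_mul, ← oddRecip_neg_add_one]
    congr 2
    ring
  have hsq : (-1 : ℝ) ^ j * (-1) ^ j = 1 := by rw [← mul_pow]; simp
  have hsquare : (1 + (-1) ^ j) * oddSum j = (-1) ^ j * ((1 + (-1) ^ j) * oddSum j) := by
    linear_combination -oddSum j * hsq
  simp only [hreflect]
  rw [hsquare]
  exact ((hasSum_symmetricIco_comp_add_iff (tendsto_oddRecip_pow_cofinite hj) _).2
    (hasSum_oddRecip_pow_symmetricIco hj)).mul_left _

/-! ### The parity kernel -/

/-- The kernel whose sum over `n : ℤ` and `l : ℕ`, evaluated in the two possible orders, yields the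
parity formula. Subtracting `oddRecip l ^ p` makes the double sum absolutely convergent. -/
noncomputable def parityKernel (p q : ℕ) (n l : ℤ) : ℝ :=
  evenRecip n ^ q * (oddRecip (l - n) ^ p - oddRecip l ^ p)

lemma abs_pow_sub_pow_le_of_abs_le_one {R : Type*} [CommRing R] [LinearOrder R] [IsOrderedRing R]
    {x y : R} (hx : |x| ≤ 1) (hy : |y| ≤ 1) (p : ℕ) :
    |x ^ p - y ^ p| ≤ p * |x - y| :=
  calc |x ^ p - y ^ p| ≤ |x - y| * p * max |x| |y| ^ (p - 1) := abs_pow_sub_pow_le x y p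
    _ ≤ |x - y| * p * 1 := by gcongr; exact pow_le_one₀ (by positivity) (max_le hx hy)
    _ = p * |x - y| := by ring

lemma abs_evenRecip_pow_mul_le {q : ℕ} (hq : 2 ≤ q) (n : ℤ) :
    |evenRecip n| ^ q * |((2 * n : ℤ) : ℝ)| ≤ |evenRecip n| := by
  rcases eq_or_ne n 0 with rfl | hn
  · simp [evenRecip_zero]
  · calc |evenRecip n| ^ q * |((2 * n : ℤ) : ℝ)|
        ≤ |evenRecip n| ^ 2 * |((2 * n : ℤ) : ℝ)| := by
          gcongr ?_ * _
          exact pow_le_pow_of_le_one (abs_nonneg _) (abs_evenRecip_le_one n) hq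
      _ = |evenRecip n| := by
          rw [sq, mul_assoc, ← abs_mul, evenRecip_mul_cancel hn, abs_one, mul_one]

lemma abs_parityKernel_le (p : ℕ) {q : ℕ} (hq : 2 ≤ q) (n l : ℤ) :
    |parityKernel p q n l| ≤ p * (|evenRecip n| * |oddRecip (l - n)| * |oddRecip l|) := by
  have hpow := abs_pow_sub_pow_le_of_abs_le_one (abs_oddRecip_le_one (l - n))
    (abs_oddRecip_le_one l) p
  rw [oddRecip_sub_oddRecip, sub_sub_cancel, abs_mul, abs_mul] at hpow
  calc |parityKernel p q n l|
      = |evenRecip n| ^ q * |oddRecip (l - n) ^ p - oddRecip l ^ p| := by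
        rw [parityKernel, abs_mul, abs_pow]
    _ ≤ |evenRecip n| ^ q * (p * (|((2 * n : ℤ) : ℝ)| * |oddRecip (l - n)| * |oddRecip l|)) := by
        gcongr
    _ = p * (|evenRecip n| ^ q * |((2 * n : ℤ) : ℝ)| * |oddRecip (l - n)| * |oddRecip l|) := by
        ring
    _ ≤ p * (|evenRecip n| * |oddRecip (l - n)| * |oddRecip l|) := by
        gcongr
        exact abs_evenRecip_pow_mul_le hq n

lemma summable_parityKernel (p : ℕ) {q : ℕ} (hq : 2 ≤ q) :
    Summable fun x : ℤ × ℤ ↦ parityKernel p q x.1 x.2 := by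
  have hs : (1 : ℝ) < 3 / 2 := by norm_num
  have hodd := summable_abs_oddRecip_rpow hs
  exact .of_abs <| .of_nonneg_of_le (fun _ ↦ abs_nonneg _)
    (fun x ↦ abs_parityKernel_le p hq x.1 x.2)
    ((summable_mul_sub_mul (fun n ↦ abs_nonneg (evenRecip n)) (fun z ↦ abs_nonneg (oddRecip z))
      (fun z ↦ abs_nonneg (oddRecip z)) (summable_abs_evenRecip_rpow hs) hodd hodd).mul_left _)

lemma summable_parityKernel_natCast (p : ℕ) {q : ℕ} (hq : 2 ≤ q) :
    Summable fun x : ℤ × ℕ ↦ parityKernel p q x.1 x.2 :=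
  (summable_parityKernel p hq).comp_injective (i := Prod.map id Nat.cast)
    (Function.injective_id.prodMap (Nat.cast_injective (R := ℤ)))

/-! ### Summing the kernel by rows -/

/-- The sum of the `p`-th powers of the reciprocals of the first `k` odd positive integers. -/
noncomputable def oddPartialSum (p k : ℕ) : ℝ := ∑ j ∈ range k, oddRecip j ^ p

/-- The sum over odd `m₁` and even `m₂` with `0 < m₁ < m₂` of `1 / (m₁ ^ p * m₂ ^ q)`; the summand
of index `k` collects the pairs with `m₂ = 2 * k`. -/
noncomputable def doubleSum (p q : ℕ) : ℝ := ∑' k : ℕ, evenRecip k ^ q * oddPartialSum p k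

lemma sum_range_oddRecip_sub_pow (p d : ℕ) :
    ∑ j ∈ range d, oddRecip (j - d) ^ p = (-1) ^ p * oddPartialSum p d := by
  rw [oddPartialSum, ← sum_range_reflect, mul_sum]
  refine sum_congr rfl fun j hj ↦ ?_
  have hneg : ((d - 1 - j : ℕ) : ℤ) - d = -(j + 1) := by
    have := mem_range.1 hj
    lia
  rw [hneg, oddRecip_neg_add_one, neg_pow]

lemma tendsto_oddRecip_natCast_sub_pow {p : ℕ} (hp : p ≠ 0) (d : ℤ) :
    Tendsto (fun l : ℕ ↦ oddRecip (l - d) ^ p) atTop (𝓝 0) :=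
  (tendsto_oddRecip_pow_cofinite hp).comp
    ((sub_left_injective (b := d)).tendsto_cofinite.comp tendsto_natCast_cofinite)

lemma hasSum_parityKernel_natCast {p q : ℕ} (hp : p ≠ 0) (hq : 2 ≤ q) (d : ℕ) :
    HasSum (fun l : ℕ ↦ parityKernel p q d l)
      ((-1) ^ p * (evenRecip d ^ q * oddPartialSum p d)) := by
  rw [((summable_parityKernel_natCast p hq).prod_factor d).hasSum_iff_tendsto_nat]
  have hshift := tendsto_sum_range_shift_sub (tendsto_oddRecip_natCast_sub_pow hp d) d
  rw [sum_range_oddRecip_sub_pow] at hshift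
  convert hshift.const_mul (-evenRecip d ^ q) using 2 with L
  · rw [mul_sum]
    refine sum_congr rfl fun l _ ↦ ?_
    rw [Nat.cast_add, add_sub_cancel_right, parityKernel]
    ring
  · ring

lemma hasSum_parityKernel_neg_natCast {p q : ℕ} (hp : p ≠ 0) (hq : 2 ≤ q) (d : ℕ) :
    HasSum (fun l : ℕ ↦ parityKernel p q (-d) l)
      (-(-1) ^ q * (evenRecip d ^ q * oddPartialSum p d)) := by
  rw [((summable_parityKernel_natCast p hq).prod_factor (-d)).hasSum_iff_tendsto_nat]
  have hlim := tendsto_oddRecip_natCast_sub_pow hp 0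
  simp only [sub_zero] at hlim
  convert (tendsto_sum_range_shift_sub hlim d).const_mul ((-1) ^ q * evenRecip d ^ q) using 2 with L
  · rw [mul_sum]
    refine sum_congr rfl fun l _ ↦ ?_
    rw [parityKernel, sub_neg_eq_add, Nat.cast_add, evenRecip_neg, neg_pow]
  · rw [oddPartialSum]
    ring

lemma hasSum_doubleSum {p q : ℕ} (hp : p ≠ 0) (hq : 2 ≤ q) :
    HasSum (fun k : ℕ ↦ evenRecip k ^ q * oddPartialSum p k) (doubleSum p q) := by
  have hrows := (summable_parityKernel_natCast p hq).prod.comp_injective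
    (Nat.cast_injective (R := ℤ))
  simp only [Function.comp_def, (hasSum_parityKernel_natCast hp hq _).tsum_eq] at hrows
  exact ((summable_mul_left_iff (pow_ne_zero p (neg_ne_zero.2 one_ne_zero))).1 hrows).hasSum

lemma tsum_parityKernel_eq_mul_doubleSum {p q : ℕ} (hp : p ≠ 0) (hq : 2 ≤ q) :
    ∑' x : ℤ × ℕ, parityKernel p q x.1 x.2 = ((-1) ^ p - (-1) ^ q) * doubleSum p q := by
  have hsum := summable_parityKernel_natCast p hq
  have hpos := (hasSum_doubleSum hp hq).mul_left ((-1) ^ p)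
  have hneg := (hasSum_doubleSum hp hq).mul_left (-(-1) ^ q)
  simp only [← (hasSum_parityKernel_natCast hp hq _).tsum_eq] at hpos
  simp only [← (hasSum_parityKernel_neg_natCast hp hq _).tsum_eq] at hneg
  have hzero : ∑' l : ℕ, parityKernel p q 0 l = 0 := by simp [parityKernel]
  rw [hsum.tsum_prod, (HasSum.of_nat_of_neg (f := fun n ↦ ∑' l : ℕ, parityKernel p q n l)
    hpos hneg).tsum_eq, hzero]
  ring

/-! ### Summing the kernel by columns -/

/-- The partial fraction expansion of `parityKernel p q n l` as a function of `n`, which is valid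
for `n ≠ 0` only. -/
noncomputable def kernelExpansion (p q : ℕ) (n l : ℤ) : ℝ :=
  ∑ μ ∈ Ico 1 q, p.multichoose μ * oddRecip l ^ (p + μ) * evenRecip n ^ (q - μ) +
    ∑ μ ∈ range p, q.multichoose μ * oddRecip l ^ (q + μ) * oddRecip (l - n) ^ (p - μ)

lemma parityKernel_eq_kernelExpansion (p : ℕ) {q : ℕ} (hq : 0 < q) {n : ℤ} (hn : n ≠ 0) (l : ℤ) :
    parityKernel p q n l = kernelExpansion p q n l :=
  pow_mul_pow_sub_pow_eq_sum (evenRecip_mul_oddRecip_sub hn l) p hq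

lemma sum_range_multichoose_mul_pow {R : Type*} [CommSemiring R] {p : ℕ} (hp : 0 < p) (q : ℕ)
    (x : R) :
    ∑ μ ∈ range p, (q.multichoose μ : R) * x ^ (q + μ) * x ^ (p - μ) =
      (p + q - 1).choose q * x ^ (p + q) := by
  have hcount : ∑ μ ∈ range p, q.multichoose μ = (p + q - 1).choose q := by
    obtain ⟨p, rfl⟩ := Nat.exists_eq_add_one_of_ne_zero hp.ne'
    rw [Nat.sum_range_multichoose, Nat.add_right_comm, Nat.add_sub_cancel]
  rw [← hcount, Nat.cast_sum, sum_mul]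
  refine sum_congr rfl fun μ hμ ↦ ?_
  rw [mul_assoc, ← pow_add]
  congr 2
  have := mem_range.1 hμ
  lia

lemma kernelExpansion_zero {p : ℕ} (hp : 0 < p) (q : ℕ) (l : ℤ) :
    kernelExpansion p q 0 l = (p + q - 1).choose q * oddRecip l ^ (p + q) := by
  have hvanish : ∑ μ ∈ Ico 1 q, p.multichoose μ * oddRecip l ^ (p + μ) *
      evenRecip 0 ^ (q - μ) = 0 := by
    refine sum_eq_zero fun μ hμ ↦ ?_
    have := mem_Ico.1 hμ
    rw [evenRecip_zero, zero_pow (by lia), mul_zero]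
  rw [kernelExpansion, hvanish, sub_zero, sum_range_multichoose_mul_pow hp, zero_add]

/-- The sum over `n : ℤ` of `parityKernel p q n l`. The last term is `kernelExpansion p q 0 l`. -/
noncomputable def columnSum (p q : ℕ) (l : ℤ) : ℝ :=
  ∑ μ ∈ Ico 1 q, p.multichoose μ * oddRecip l ^ (p + μ) * ((1 + (-1) ^ (q - μ)) * evenSum (q - μ)) +
    ∑ μ ∈ range p, q.multichoose μ * oddRecip l ^ (q + μ) *
      ((1 + (-1) ^ (p - μ)) * oddSum (p - μ)) -
    (p + q - 1).choose q * oddRecip l ^ (p + q)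

lemma hasSum_kernelExpansion_symmetricIco {p : ℕ} (hp : 0 < p) (q : ℕ) (l : ℤ) :
    HasSum (fun n ↦ kernelExpansion p q n l) (columnSum p q l + kernelExpansion p q 0 l)
      (symmetricIco ℤ) := by
  rw [kernelExpansion_zero hp, columnSum, sub_add_cancel]
  refine (hasSum_sum fun μ hμ ↦ ?_).add (hasSum_sum fun μ hμ ↦ ?_)
  · have := mem_Ico.1 hμ
    exact (hasSum_evenRecip_pow_symmetricIco (by lia)).mul_left _
  · have := mem_range.1 hμ
    exact (hasSum_oddRecip_sub_pow_symmetricIco (by lia) l).mul_left _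

lemma hasSum_parityKernel_symmetricIco {p q : ℕ} (hp : 0 < p) (hq : 0 < q) (l : ℤ) :
    HasSum (fun n ↦ parityKernel p q n l) (columnSum p q l) (symmetricIco ℤ) := by
  have hkernel : (fun n ↦ parityKernel p q n l) =
      Function.update (fun n ↦ kernelExpansion p q n l) 0 0 := by
    refine (Function.update_eq_iff.2 ⟨?_, fun n hn ↦ ?_⟩).symm
    · simp [parityKernel]
    · exact (parityKernel_eq_kernelExpansion p hq hn l).symm
  rw [hkernel]
  simpa using (hasSum_kernelExpansion_symmetricIco hp q l).update 0 0

lemma tsum_parityKernel_eq_tsum_columnSum {p q : ℕ} (hp : 0 < p) (hq : 2 ≤ q) :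
    ∑' x : ℤ × ℕ, parityKernel p q x.1 x.2 = ∑' l : ℕ, columnSum p q l := by
  have hsum := summable_parityKernel_natCast p hq
  rw [hsum.tsum_prod, Summable.tsum_comm (f := fun (l : ℕ) n ↦ parityKernel p q n l) hsum.prod_symm]
  refine tsum_congr fun l ↦ ?_
  have hcolumn : HasSum (fun n ↦ parityKernel p q n l) (∑' n, parityKernel p q n l)
      (symmetricIco ℤ) :=
    Tendsto.mono_left (hsum.prod_symm.prod_factor l).hasSum le_atTop
  exact hcolumn.unique (hasSum_parityKernel_symmetricIco hp (by lia) l)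

theorem sub_mul_doubleSum_eq {p q : ℕ} (hp : 0 < p) (hq : 2 ≤ q) :
    ((-1) ^ p - (-1) ^ q) * doubleSum p q =
      ∑ μ ∈ Ico 1 q, p.multichoose μ * oddSum (p + μ) * ((1 + (-1) ^ (q - μ)) * evenSum (q - μ)) +
        ∑ μ ∈ range p, q.multichoose μ * oddSum (q + μ) *
          ((1 + (-1) ^ (p - μ)) * oddSum (p - μ)) -
        (p + q - 1).choose q * oddSum (p + q) := by
  rw [← tsum_parityKernel_eq_mul_doubleSum hp.ne' hq, tsum_parityKernel_eq_tsum_columnSum hp hq]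
  refine HasSum.tsum_eq (.sub (.add (hasSum_sum fun μ hμ ↦ ?_) (hasSum_sum fun μ _ ↦ ?_)) ?_)
  · have := mem_Ico.1 hμ
    exact ((hasSum_oddSum (by lia)).mul_left _).mul_right _
  · exact ((hasSum_oddSum (by lia)).mul_left _).mul_right _
  · exact (hasSum_oddSum (by lia)).mul_left _

/-! ### Multiple T-values of depth one and two -/

/-- The summation indices of a multiple T-value of depth `r`. -/
abbrev AlternatingIndex (r : ℕ) : Type :=
  {f : Fin r → ℕ // StrictMono f ∧ ∀ i, f i % 2 = ((i : ℕ) + 1) % 2}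

/-- The summation index `m₁ = 2 * l + 1` of depth one. -/
def singletonIndex (l : ℕ) : AlternatingIndex 1 :=
  ⟨![2 * l + 1], Subsingleton.strictMono _, by simp⟩

/-- The summation index `m₁ = 2 * j + 1`, `m₂ = 2 * k` of depth two, where `j < k`. -/
def pairIndex (x : Σ k : ℕ, Fin k) : AlternatingIndex 2 :=
  ⟨![2 * x.2 + 1, 2 * x.1], by
    simpa [Fin.strictMono_iff_lt_succ] using (by lia : 2 * (x.2 : ℕ) + 1 < 2 * x.1), by simp⟩

lemma singletonIndex_bijective : Function.Bijective singletonIndex := by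
  refine ⟨fun l l' h ↦ by simpa [singletonIndex] using h, fun f ↦ ⟨f.1 0 / 2, ?_⟩⟩
  have hodd : f.1 0 % 2 = 1 := f.2.2 0
  refine Subtype.ext (funext fun i ↦ ?_)
  rw [Subsingleton.elim i 0]
  change 2 * (f.1 0 / 2) + 1 = f.1 0
  lia

lemma pairIndex_bijective : Function.Bijective pairIndex := by
  constructor
  · rintro ⟨k, j⟩ ⟨k', j'⟩ h
    obtain ⟨hj, rfl⟩ : (j : ℕ) = j' ∧ k = k' := by simpa [pairIndex] using h
    rw [Fin.ext hj]
  · intro f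
    have hodd : f.1 0 % 2 = 1 := f.2.2 0
    have heven : f.1 1 % 2 = 0 := f.2.2 1
    have hlt : f.1 0 < f.1 1 := f.2.1 Fin.zero_lt_one
    refine ⟨⟨f.1 1 / 2, f.1 0 / 2, by lia⟩, Subtype.ext (funext (Fin.forall_fin_two.2 ⟨?_, ?_⟩))⟩
    · change 2 * (f.1 0 / 2) + 1 = f.1 0
      lia
    · change 2 * (f.1 1 / 2) = f.1 1
      lia

lemma two_mul_neg_one_pow_mul_doubleSum_eq {p q : ℕ} (hp : 0 < p) (hq : 2 ≤ q)
    (hodd : Odd (p + q)) :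
    2 * ((-1) ^ q * doubleSum p q) = (p + q - 1).choose q * oddSum (p + q) -
      2 * ∑ μ ∈ Icc 1 (q - 2) with μ % 2 = q % 2,
        p.multichoose μ * oddSum (p + μ) * evenSum (q - μ) -
      2 * ∑ μ ∈ Icc 0 (p - 2) with μ % 2 = p % 2,
        q.multichoose μ * oddSum (q + μ) * oddSum (p - μ) := by
  have hsign : (-1 : ℝ) ^ p = -(-1) ^ q := by
    rcases Nat.even_or_odd q with heven | hodd'
    · rw [heven.neg_one_pow, (Nat.odd_add.1 hodd |>.2 heven).neg_one_pow]
    · rw [hodd'.neg_one_pow, (Nat.odd_add'.1 hodd |>.1 hodd').neg_one_pow, neg_neg]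
  have hmain := sub_mul_doubleSum_eq hp hq
  simp only [mul_left_comm _ (1 + _ : ℝ), range_eq_Ico] at hmain
  rw [sum_Ico_one_add_neg_one_pow_mul 1 (by lia), sum_Ico_one_add_neg_one_pow_mul 0 hp,
    hsign] at hmain
  linear_combination -hmain

lemma singleton_eq_oddSum (k : ℕ) : MTV [k] = 2 * oddSum k := by
  change 2 ^ 1 * ∑' f : AlternatingIndex 1, ∏ i : Fin 1, 1 / (f.1 i : ℝ) ^ [k].get i = _
  rw [← (Equiv.ofBijective _ singletonIndex_bijective).tsum_eq, pow_one, oddSum]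
  simp [singletonIndex, oddRecip]

lemma hasSum_sigma_doubleSum {p q : ℕ} (hp : p ≠ 0) (hq : 2 ≤ q) :
    HasSum (fun x : Σ k : ℕ, Fin k ↦ evenRecip x.1 ^ q * oddRecip (x.2 : ℕ) ^ p)
      (doubleSum p q) := by
  have hfiber (k : ℕ) : HasSum (fun j : Fin k ↦ evenRecip k ^ q * oddRecip (j : ℕ) ^ p)
      (evenRecip k ^ q * oddPartialSum p k) := by
    rw [oddPartialSum, Finset.sum_range, mul_sum]
    exact hasSum_fintype _
  have hnonneg (x : Σ k : ℕ, Fin k) : 0 ≤ evenRecip x.1 ^ q * oddRecip (x.2 : ℕ) ^ p := by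
    simp only [evenRecip, oddRecip]
    positivity
  have hsummable := (summable_sigma_of_nonneg hnonneg).2 ⟨fun k ↦ (hfiber k).summable, by
    simpa only [(hfiber _).tsum_eq] using (hasSum_doubleSum hp hq).summable⟩
  exact (hsummable.hasSum.sigma hfiber).unique (hasSum_doubleSum hp hq) ▸ hsummable.hasSum

lemma pair_eq_doubleSum {p q : ℕ} (hp : p ≠ 0) (hq : 2 ≤ q) : MTV [p, q] = 4 * doubleSum p q := by
  change 2 ^ 2 * ∑' f : AlternatingIndex 2, ∏ i : Fin 2, 1 / (f.1 i : ℝ) ^ [p, q].get i = _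
  have hterm (x : Σ k : ℕ, Fin k) : ∏ i : Fin 2, 1 / ((pairIndex x).1 i : ℝ) ^ [p, q].get i =
      evenRecip x.1 ^ q * oddRecip (x.2 : ℕ) ^ p := by
    rw [Fin.prod_univ_two, mul_comm]
    simp [pairIndex, evenRecip, oddRecip, -mul_inv_rev]
  rw [← (Equiv.ofBijective _ pairIndex_bijective).tsum_eq]
  simp only [Equiv.ofBijective_apply, hterm, (hasSum_sigma_doubleSum hp hq).tsum_eq]
  norm_num

end MTV

/-- **Theorem (depth-2 parity formula).** For `p ≥ 1`, `q ≥ 2` with `p + q` odd,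
`(−1)^q T(p,q) = C(p+q−1,q) T(p+q)
  − ∑_{μ=1, μ≡q (2)}^{q−2} C(p+μ−1,μ) (2^{q−μ}−1)⁻¹ T(p+μ) T(q−μ)
  − ∑_{μ=0, μ≡p (2)}^{p−2} C(q+μ−1,μ) T(p−μ) T(q+μ)`. -/
theorem MTV_parity_depth2 (p q : ℕ) (hp : 1 ≤ p) (hq : 2 ≤ q) (hodd : Odd (p + q)) :
    (-1 : ℝ) ^ q * MTV [p, q]
      = ((p + q - 1).choose q : ℝ) * MTV [p + q]
        - ∑ μ ∈ (Finset.Icc 1 (q - 2)).filter (fun μ => μ % 2 = q % 2),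
            ((p + μ - 1).choose μ : ℝ) * (1 / ((2 : ℝ) ^ (q - μ) - 1))
              * MTV [p + μ] * MTV [q - μ]
        - ∑ μ ∈ (Finset.Icc 0 (p - 2)).filter (fun μ => μ % 2 = p % 2),
            ((q + μ - 1).choose μ : ℝ) * MTV [p - μ] * MTV [q + μ] := by
  have hparity := MTV.two_mul_neg_one_pow_mul_doubleSum_eq hp hq hodd
  have hfirst : ∀ μ ∈ (Finset.Icc 1 (q - 2)).filter (fun μ => μ % 2 = q % 2),
      ((p + μ - 1).choose μ : ℝ) * (1 / ((2 : ℝ) ^ (q - μ) - 1)) * MTV [p + μ] * MTV [q - μ] =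
        4 * (p.multichoose μ * MTV.oddSum (p + μ) * MTV.evenSum (q - μ)) := by
    intro μ hμ
    have hμq := mem_Icc.1 (mem_filter.1 hμ).1
    rw [MTV.evenSum_eq_mul_oddSum (by lia), MTV.singleton_eq_oddSum, MTV.singleton_eq_oddSum,
      Nat.multichoose_eq]
    ring
  have hsecond (μ : ℕ) : ((q + μ - 1).choose μ : ℝ) * MTV [p - μ] * MTV [q + μ] =
      4 * (q.multichoose μ * MTV.oddSum (q + μ) * MTV.oddSum (p - μ)) := by
    rw [MTV.singleton_eq_oddSum, MTV.singleton_eq_oddSum, Nat.multichoose_eq]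
    ring
  rw [sum_congr rfl hfirst, sum_congr rfl fun μ _ ↦ hsecond μ, ← mul_sum, ← mul_sum,
    MTV.singleton_eq_oddSum, MTV.pair_eq_doubleSum (by lia) hq]
  linear_combination 2 * hparity
end
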